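/- arXiv:2211.12802 — 2 statements merged into one kernel-verified Lean document; each statement's English description precedes it below -/
import Mathlib

section
/- Let f: ℝ^n → ℝ^n, n ≥ 2, be a homeomorphism, let 1 ≤ p < n, and suppose K^{fine}_f ∈ L^{p*(n-1)/n}_{loc}(ℝ^n) with p* = np/(n-p), and K^{fine}_f < ∞ outside a set E of σ-finite ℋ^{n-1}-measure. Then f ∈ W^{1,p}_{loc}(ℝ^n; ℝ^n). -/
open MeasureTheory Metric Set Filter ENNReal NNReal Topology

noncomputable section

/-- Euclidean space `ℝⁿ`. -/
abbrev En (n : ℕ) : Type := EuclideanSpace ℝ (Fin n)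

variable {n : ℕ}

/-- `g` is the weak (distributional) gradient of `u : ℝⁿ → ℝ` on all of `ℝⁿ`. -/
def IsWeakGrad (u : En n → ℝ) (g : En n → (En n →L[ℝ] ℝ)) : Prop :=
  ∀ φ : En n → ℝ, ContDiff ℝ 1 φ → HasCompactSupport φ →
    ∀ v : En n, ∫ x, u x * fderiv ℝ φ x v = - ∫ x, φ x * g x v

/-- The Sobolev 1-capacity: infimum of `W^{1,1}` norms of functions `u ≥ 1` on a
neighborhood of `A`. -/
def cap1 (A : Set (En n)) : ℝ≥0∞ :=
  sInf { c : ℝ≥0∞ | ∃ u : En n → ℝ, ∃ g : En n → (En n →L[ℝ] ℝ),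
    Integrable u ∧ Integrable (fun x => ‖g x‖) ∧ IsWeakGrad u g ∧
    (∃ V : Set (En n), IsOpen V ∧ A ⊆ V ∧ ∀ x ∈ V, 1 ≤ u x) ∧
    c = ENNReal.ofReal ((∫ x, |u x|) + ∫ x, ‖g x‖) }

/-- A set `U ⊆ ℝⁿ` is 1-finely open. -/
def FinelyOpen1 (U : Set (En n)) : Prop :=
  ∀ x ∈ U, Tendsto (fun r : ℝ => cap1 (Uᶜ ∩ ball x r) / ENNReal.ofReal (r ^ (n - 1)))
    (𝓝[>] 0) (𝓝 0)

/-- The relaxed quasiconformality quotient `K_{f,U}(x,r)`. -/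
def KfU (f : En n → En n) (U : Set (En n)) (x : En n) (r : ℝ) : ℝ≥0∞ :=
  if volume (f '' ball x r) = 0 then ∞
  else (EMetric.diam (f '' (ball x r ∩ U)) ^ n / volume (f '' ball x r)) ^ (((n : ℝ) - 1)⁻¹)

/-- Fine quasiconformal dilatation `K_f^fine(x)`. -/
def Kfine (f : En n → En n) (x : En n) : ℝ≥0∞ :=
  ⨅ (U : Set (En n)) (_ : FinelyOpen1 U) (_ : x ∈ U),
    Filter.limsup (fun r => KfU f U x r) (𝓝[>] 0)

/-- Metric quasiconformal dilatation `K_f(x)`. -/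
def Kmetric (f : En n → En n) (x : En n) : ℝ≥0∞ :=
  Filter.limsup (fun r => KfU f univ x r) (𝓝[>] 0)

/-- Volume derivative (Jacobian) `J_f(x)`. -/
def Jvol (f : En n → En n) (x : En n) : ℝ≥0∞ :=
  Filter.limsup (fun r => volume (f '' ball x r) / volume (ball x r)) (𝓝[>] 0)

/-- `g` is the weak gradient of the mapping `f : ℝⁿ → ℝⁿ` on the open set `Ω`. -/
def HasWeakGradOn (f : En n → En n) (g : En n → (En n →L[ℝ] En n)) (Ω : Set (En n)) : Prop :=
  ∀ φ : En n → ℝ, ContDiff ℝ 1 φ → HasCompactSupport φ → tsupport φ ⊆ Ω →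
    ∀ v : En n, ∫ x in Ω, (fderiv ℝ φ x v) • f x = - ∫ x in Ω, φ x • g x v

/-- The precise representative `f*` (componentwise limsup of ball averages). -/
def precise (f : En n → En n) (x : En n) : En n :=
  (EuclideanSpace.equiv (Fin n) ℝ).symm
    (fun i => Filter.limsup (fun r => ⨍ y in ball x r, f y i) (𝓝[>] 0))

/-- Centered Hardy–Littlewood maximal function of `u : ℝⁿ → ℝ`. -/
def maxFn (u : En n → ℝ) (x : En n) : ℝ≥0∞ :=
  ⨆ (r : ℝ) (_ : 0 < r), (volume (ball x r))⁻¹ * ∫⁻ y in ball x r, ‖u y‖₊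

/-- Centered Hardy–Littlewood maximal function of `ρ : ℝⁿ → ℝ≥0∞`. -/
def maxFn' (ρ : En n → ℝ≥0∞) (x : En n) : ℝ≥0∞ :=
  ⨆ (r : ℝ) (_ : 0 < r), (volume (ball x r))⁻¹ * ∫⁻ y in ball x r, ρ y

/-!
Fix a coordinate `g` and put `u = g ∘ f`. For a unit vector `e`, the pairs `(x, t)` such that `u`
takes the value `t` at a point of `A` on the segment `[x, x + s • e]` form a set whose measure,
divided by `s`, controls the difference quotients of `u` in the direction `e`.

If `A` has σ-finite `ℋ^{n-1}`-measure, this set is null, because `u` is continuous. Elsewhere the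
complement of a `1`-fine neighbourhood has small capacity, hence small volume density, in small
balls: the good parts of neighbouring balls overlap, so their fine diameters chain together along
a segment, and summing over a separated net of centres bounds the measure by `s` times the sum of
`r^{n-1} diam u(B(x, r) ∩ U)`. Young's inequality with a free parameter `l` bounds each summand by
`l K rⁿ + l^{1-n} |f(B(x, r))|`, up to constants, and choosing `l` pointwise turns this into the
density `(K + 1)^{1-1/n} J^{1/n}`, where `K = K^fine_f` and `J` is the density of `A ↦ |f(A)|`.

Hence `|∫ u ∂ₑφ| ≤ C ∫ |φ| (K + 1)^{1-1/n} J^{1/n}` for all test functions `φ`, and `L¹` duality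
yields a weak derivative bounded by that density, which Hölder's inequality places in `L^p_loc`.
-/

section TranslationDifferences

variable {E : Type*} [NormedAddCommGroup E]

lemma tendsto_integral_mul_translate [MeasurableSpace E] [BorelSpace E] {μ : Measure E}
    {u ψ : E → ℝ} (hu : Integrable u μ) (hψ : Continuous ψ) (hc : HasCompactSupport ψ)
    {ι : Type*} {l : Filter ι} [l.IsCountablyGenerated] {y : ι → E}
    (hy : Tendsto y l (cocompact E)) :
    Tendsto (fun i => ∫ x, u x * ψ (x - y i) ∂μ) l (𝓝 0) := by
  obtain ⟨C, hC⟩ := hc.exists_bound_of_continuous hψ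
  rw [← integral_zero E ℝ (μ := μ)]
  refine tendsto_integral_filter_of_dominated_convergence (fun x => ‖u x‖ * C)
    (Eventually.of_forall fun i => ?_)
    (Eventually.of_forall fun i => Eventually.of_forall fun x => ?_)
    (hu.norm.mul_const C) (Eventually.of_forall fun x => ?_)
  · exact hu.aestronglyMeasurable.mul
      (hψ.comp (continuous_id.sub continuous_const)).aestronglyMeasurable
  · rw [norm_mul]
    gcongr
    exact hC _
  · have h : Tendsto (fun i => ψ (x - y i)) l (𝓝 0) :=
      (coclosedCompact_eq_cocompact (X := E) ▸ hasCompactSupport_iff_eventuallyEq.1 hc).tendsto.comp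
        ((Homeomorph.subLeft x).isClosedEmbedding.tendsto_cocompact.comp hy)
    simpa using h.const_mul (u x)

variable [NormedSpace ℝ E]

lemma exists_contDiff_one_on_compact [FiniteDimensional ℝ E] {K O : Set E} (hK : IsCompact K)
    (hO : IsOpen O) (hKO : K ⊆ O) :
    ∃ ψ : E → ℝ, ContDiff ℝ 1 ψ ∧ HasCompactSupport ψ ∧ tsupport ψ ⊆ O ∧
      (∀ x, ψ x ∈ Icc 0 1) ∧ ∀ x ∈ K, ψ x = 1 := by
  obtain ⟨L, hL, hKL, hLO⟩ := exists_compact_between hK hO hKO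
  obtain ⟨ψ, hψ, hrange, hsupp, hone⟩ := exists_contMDiff_support_eq_eq_one_iff (n := 1)
    (modelWithCornersSelf ℝ E) isOpen_interior hK.isClosed hKL
  have hsub : tsupport ψ ⊆ L := by
    rw [tsupport, hsupp]
    exact closure_minimal interior_subset hL.isClosed
  exact ⟨ψ, hψ.contDiff, hL.of_isClosed_subset (isClosed_tsupport ψ) hsub, hsub.trans hLO,
    fun x => hrange ⟨x, rfl⟩, fun x hx => (hone x).1 hx⟩

lemma volume_preimage_sub_smul_ball_le {e : E} (he : ‖e‖ = 1) (x x₀ : E) (r : ℝ) :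
    volume ((fun σ : ℝ => x - σ • e) ⁻¹' ball x₀ r) ≤ ENNReal.ofReal (2 * r) := by
  have hiso : Isometry fun σ : ℝ => x - σ • e := Isometry.of_dist_eq fun σ τ => by
    rw [dist_sub_left, dist_eq_norm, ← sub_smul, norm_smul, he, mul_one, Real.dist_eq,
      Real.norm_eq_abs]
  calc volume ((fun σ : ℝ => x - σ • e) ⁻¹' ball x₀ r)
      ≤ ediam ((fun σ : ℝ => x - σ • e) ⁻¹' ball x₀ r) := Real.volume_le_diam _
    _ = ediam ((fun σ : ℝ => x - σ • e) '' ((fun σ : ℝ => x - σ • e) ⁻¹' ball x₀ r)) :=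
        (hiso.ediam_image _).symm
    _ ≤ ediam (ball x₀ r) := ediam_mono (image_preimage_subset _ _)
    _ ≤ ENNReal.ofReal (2 * r) := by
        rw [ENNReal.ofReal_mul zero_le_two, ENNReal.ofReal_ofNat, ← Metric.eball_ofReal]
        exact ediam_eball_le

lemma sub_translate_eq_setIntegral_fderiv {ψ : E → ℝ} (hψ : ContDiff ℝ 1 ψ) (x e : E) {L : ℝ}
    (hL : 0 ≤ L) :
    ψ x - ψ (x - L • e) = ∫ σ in Ioc 0 L, fderiv ℝ ψ (x - σ • e) e := by
  have hderiv : ∀ σ ∈ uIcc 0 L,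
      HasDerivAt (fun σ : ℝ => -ψ (x - σ • e)) (fderiv ℝ ψ (x - σ • e) e) σ := fun σ _ => by
    have hline : HasDerivAt (fun σ : ℝ => x - σ • e) (-e) σ := by
      simpa using ((hasDerivAt_id σ).smul_const e).const_sub x
    simpa [Function.comp_def, Pi.neg_def] using
      ((hψ.differentiable one_ne_zero _).hasFDerivAt.comp_hasDerivAt σ hline).neg
  have hcont : Continuous fun σ : ℝ => fderiv ℝ ψ (x - σ • e) e :=
    ((hψ.continuous_fderiv one_ne_zero).comp (by fun_prop)).clm_apply continuous_const
  rw [← intervalIntegral.integral_of_le hL,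
    intervalIntegral.integral_eq_sub_of_hasDerivAt hderiv (hcont.intervalIntegrable _ _)]
  simp only [zero_smul, sub_zero]
  ring

lemma integral_mul_sub_translate_eq [MeasurableSpace E] [BorelSpace E]
    [SecondCountableTopology E] {μ : Measure E} [SFinite μ] {u ψ : E → ℝ} (hu : Integrable u μ)
    (hψ : ContDiff ℝ 1 ψ) (hc : HasCompactSupport ψ) (e : E) {L : ℝ} (hL : 0 ≤ L) :
    ∫ x, u x * (ψ x - ψ (x - L • e)) ∂μ =
      ∫ σ in Ioc 0 L, ∫ x, u x * fderiv ℝ ψ (x - σ • e) e ∂μ := by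
  have hD : Continuous fun y => fderiv ℝ ψ y e :=
    (hψ.continuous_fderiv one_ne_zero).clm_apply continuous_const
  obtain ⟨C, hC⟩ := (hc.fderiv_apply ℝ e).exists_bound_of_continuous hD
  have hint : Integrable (fun z : E × ℝ => u z.1 * fderiv ℝ ψ (z.1 - z.2 • e) e)
      (μ.prod (volume.restrict (Ioc 0 L))) :=
    hu.comp_fst _ |>.mul_bdd (c := C) (hD.comp (by fun_prop)).aestronglyMeasurable
      (Eventually.of_forall fun z => hC _)
  simp_rw [sub_translate_eq_setIntegral_fderiv hψ _ e hL, ← integral_const_mul]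
  exact integral_integral_swap hint

end TranslationDifferences

lemma IsWeakGrad.enorm_integral_mul_fderiv_translate_le {u : En n → ℝ}
    {g : En n → (En n →L[ℝ] ℝ)} (h : IsWeakGrad u g) {ψ : En n → ℝ} (hψ : ContDiff ℝ 1 ψ)
    (hc : HasCompactSupport ψ) {e : En n} (he : ‖e‖ = 1) (y : En n) :
    ‖∫ x, u x * fderiv ℝ ψ (x - y) e‖ₑ ≤ ∫⁻ x, ‖ψ (x - y)‖ₑ * ‖g x‖ₑ := by
  have hparts := h (fun x => ψ (x - y)) (hψ.comp (contDiff_id.sub contDiff_const))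
    (hc.comp_homeomorph (Homeomorph.subRight y)) e
  simp_rw [fderiv_comp_sub] at hparts
  rw [hparts, enorm_neg]
  refine (enorm_integral_le_lintegral_enorm _).trans (lintegral_mono fun x => ?_)
  rw [enorm_mul]
  gcongr
  simpa [← ofReal_norm e, he] using (g x).le_opENorm e

lemma IsWeakGrad.enorm_integral_mul_sub_translate_le {u : En n → ℝ} {g : En n → (En n →L[ℝ] ℝ)}
    (h : IsWeakGrad u g) (hu : Integrable u) (hg : Integrable fun x => ‖g x‖) {ψ : En n → ℝ}
    (hψ : ContDiff ℝ 1 ψ) (hc : HasCompactSupport ψ) (hψ1 : ∀ x, ‖ψ x‖ ≤ 1) {x₀ : En n} {r : ℝ}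
    (hs : Function.support ψ ⊆ ball x₀ r) {e : En n} (he : ‖e‖ = 1) {L : ℝ} (hL : 0 ≤ L) :
    ‖∫ x, u x * (ψ x - ψ (x - L • e))‖ₑ ≤ ENNReal.ofReal (2 * r) * ∫⁻ x, ‖g x‖ₑ := by
  have hgm : AEMeasurable fun x => ‖g x‖ₑ := by simpa using hg.aestronglyMeasurable.enorm
  have hball : ∀ y, ‖ψ y‖ₑ ≤ (ball x₀ r).indicator 1 y := fun y => by
    by_cases hy : y ∈ ball x₀ r
    · rw [indicator_of_mem hy, Pi.one_apply, ← enorm_one (G := ℝ)]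
      exact enorm_le_iff_norm_le.2 (by simpa using hψ1 y)
    · simp [Function.notMem_support.1 fun hmem => hy (hs hmem)]
  have hchord : ∀ x, ∫⁻ σ in Ioc 0 L, ‖ψ (x - σ • e)‖ₑ ≤ ENNReal.ofReal (2 * r) := fun x =>
    calc ∫⁻ σ in Ioc 0 L, ‖ψ (x - σ • e)‖ₑ
        ≤ ∫⁻ σ, ((fun σ : ℝ => x - σ • e) ⁻¹' ball x₀ r).indicator 1 σ :=
          (setLIntegral_le_lintegral _ _).trans (lintegral_mono fun σ => hball _)
      _ = volume ((fun σ : ℝ => x - σ • e) ⁻¹' ball x₀ r) :=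
          lintegral_indicator_one (isOpen_ball.preimage (by fun_prop)).measurableSet
      _ ≤ ENNReal.ofReal (2 * r) := volume_preimage_sub_smul_ball_le he x x₀ r
  calc ‖∫ x, u x * (ψ x - ψ (x - L • e))‖ₑ
      = ‖∫ σ in Ioc 0 L, ∫ x, u x * fderiv ℝ ψ (x - σ • e) e‖ₑ := by
        rw [integral_mul_sub_translate_eq hu hψ hc e hL]
    _ ≤ ∫⁻ σ in Ioc 0 L, ‖∫ x, u x * fderiv ℝ ψ (x - σ • e) e‖ₑ :=
        enorm_integral_le_lintegral_enorm _
    _ ≤ ∫⁻ σ in Ioc 0 L, ∫⁻ x, ‖ψ (x - σ • e)‖ₑ * ‖g x‖ₑ :=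
        lintegral_mono fun σ => h.enorm_integral_mul_fderiv_translate_le hψ hc he _
    _ = ∫⁻ x, (∫⁻ σ in Ioc 0 L, ‖ψ (x - σ • e)‖ₑ) * ‖g x‖ₑ := by
        rw [lintegral_lintegral_swap]
        · refine lintegral_congr fun x => lintegral_mul_const _ ?_
          exact (hψ.continuous.comp (by fun_prop)).enorm.measurable
        · exact (hψ.continuous.comp (by fun_prop)).enorm.aemeasurable.mul hgm.comp_snd
    _ ≤ ∫⁻ x, ENNReal.ofReal (2 * r) * ‖g x‖ₑ := lintegral_mono fun x => by gcongr; exact hchord x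
    _ = ENNReal.ofReal (2 * r) * ∫⁻ x, ‖g x‖ₑ := lintegral_const_mul'' _ hgm

lemma IsWeakGrad.enorm_integral_mul_le {u : En n → ℝ} {g : En n → (En n →L[ℝ] ℝ)}
    (h : IsWeakGrad u g) (hu : Integrable u) (hg : Integrable fun x => ‖g x‖) {ψ : En n → ℝ}
    (hψ : ContDiff ℝ 1 ψ) (hc : HasCompactSupport ψ) (hψ1 : ∀ x, ‖ψ x‖ ≤ 1) {x₀ : En n} {r : ℝ}
    (hs : Function.support ψ ⊆ ball x₀ r) {e : En n} (he : ‖e‖ = 1) :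
    ‖∫ x, u x * ψ x‖ₑ ≤ ENNReal.ofReal (2 * r) * ∫⁻ x, ‖g x‖ₑ := by
  have hint : ∀ y, Integrable fun x => u x * ψ (x - y) := fun y =>
    hu.mul_bdd (c := 1) (hψ.continuous.comp (by fun_prop)).aestronglyMeasurable
      (Eventually.of_forall fun x => hψ1 (x - y))
  have hescape : Tendsto (fun k : ℕ => (k : ℝ) • e) atTop (cocompact (En n)) := by
    rw [← cobounded_eq_cocompact, ← tendsto_norm_atTop_iff_cobounded]
    simpa [norm_smul, he] using tendsto_natCast_atTop_atTop (R := ℝ)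
  have hlim : Tendsto (fun k : ℕ => ∫ x, u x * (ψ x - ψ (x - (k : ℝ) • e))) atTop
      (𝓝 (∫ x, u x * ψ x)) := by
    have heq : ∀ k : ℕ, ∫ x, u x * (ψ x - ψ (x - (k : ℝ) • e)) =
        (∫ x, u x * ψ x) - ∫ x, u x * ψ (x - (k : ℝ) • e) := fun k => by
      simp_rw [mul_sub]
      exact integral_sub (by simpa using hint 0) (hint _)
    simpa [heq] using (tendsto_integral_mul_translate hu hψ.continuous hc hescape).const_sub
      (∫ x, u x * ψ x)
  exact le_of_tendsto hlim.enorm (Eventually.of_forall fun k =>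
    h.enorm_integral_mul_sub_translate_le hu hg hψ hc hψ1 hs he k.cast_nonneg)

lemma IsWeakGrad.volume_inter_ball_le {u : En n → ℝ} {g : En n → (En n →L[ℝ] ℝ)}
    (h : IsWeakGrad u g) (hu : Integrable u) (hg : Integrable fun x => ‖g x‖) {V : Set (En n)}
    (hV : IsOpen V) (h1 : ∀ x ∈ V, 1 ≤ u x) (x₀ : En n) (r : ℝ) {e : En n} (he : ‖e‖ = 1) :
    volume (V ∩ ball x₀ r) ≤ ENNReal.ofReal (2 * r) * ∫⁻ x, ‖g x‖ₑ := by
  have hVB : IsOpen (V ∩ ball x₀ r) := hV.inter isOpen_ball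
  rw [hVB.measure_eq_iSup_isCompact]
  refine iSup₂_le fun K hKV => iSup_le fun hK => ?_
  obtain ⟨ψ, hψ, hc, hs, h01, hψK⟩ := exists_contDiff_one_on_compact hK hVB hKV
  have hsupp : Function.support ψ ⊆ V ∩ ball x₀ r := (subset_tsupport ψ).trans hs
  have hψ1 : ∀ x, ‖ψ x‖ ≤ 1 := fun x => by
    simpa [abs_of_nonneg (h01 x).1] using (h01 x).2
  have hle : ∀ x, ψ x ≤ u x * ψ x := fun x => by
    by_cases hx : x ∈ Function.support ψ
    · exact le_mul_of_one_le_left (h01 x).1 (h1 x (hsupp hx).1)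
    · simp [Function.notMem_support.1 hx]
  have hψi : Integrable ψ := hψ.continuous.integrable_of_hasCompactSupport hc
  have huψ : Integrable fun x => u x * ψ x :=
    hu.mul_bdd (c := 1) hψ.continuous.aestronglyMeasurable
      (Eventually.of_forall hψ1)
  calc volume K = ∫⁻ _ in K, 1 := (setLIntegral_one K).symm
    _ ≤ ∫⁻ x in K, ENNReal.ofReal (ψ x) :=
        setLIntegral_mono' hK.measurableSet fun x hx => by simp [hψK x hx]
    _ ≤ ∫⁻ x, ENNReal.ofReal (ψ x) := setLIntegral_le_lintegral _ _
    _ = ENNReal.ofReal (∫ x, ψ x) :=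
        (ofReal_integral_eq_lintegral_ofReal hψi (Eventually.of_forall fun x => (h01 x).1)).symm
    _ ≤ ENNReal.ofReal (∫ x, u x * ψ x) := ENNReal.ofReal_le_ofReal (integral_mono hψi huψ hle)
    _ ≤ ‖∫ x, u x * ψ x‖ₑ := Real.ofReal_le_enorm _
    _ ≤ ENNReal.ofReal (2 * r) * ∫⁻ x, ‖g x‖ₑ :=
        h.enorm_integral_mul_le hu hg hψ hc hψ1 (hsupp.trans inter_subset_right) he

lemma volume_inter_ball_le_mul_cap1 (hn : n ≠ 0) (A : Set (En n)) (x : En n) {r : ℝ}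
    (hr : 0 < r) : volume (A ∩ ball x r) ≤ ENNReal.ofReal (2 * r) * cap1 A := by
  have : NeZero n := ⟨hn⟩
  have hr0 : ENNReal.ofReal (2 * r) ≠ 0 := (ENNReal.ofReal_pos.2 (by positivity)).ne'
  rw [mul_comm, ← ENNReal.div_le_iff hr0 ENNReal.ofReal_ne_top]
  refine le_sInf ?_
  rintro c ⟨u, g, hu, hg, hug, ⟨V, hV, hAV, h1⟩, rfl⟩
  rw [ENNReal.div_le_iff hr0 ENNReal.ofReal_ne_top, mul_comm]
  have hgrad : ∫⁻ x, ‖g x‖ₑ = ENNReal.ofReal (∫ x, ‖g x‖) := by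
    simpa using (ofReal_integral_norm_eq_lintegral_enorm hg).symm
  calc volume (A ∩ ball x r) ≤ volume (V ∩ ball x r) := by gcongr
    _ ≤ ENNReal.ofReal (2 * r) * ∫⁻ x, ‖g x‖ₑ :=
        hug.volume_inter_ball_le hu hg hV h1 x r (e := EuclideanSpace.single 0 1) (by simp)
    _ ≤ ENNReal.ofReal (2 * r) * ENNReal.ofReal ((∫ x, |u x|) + ∫ x, ‖g x‖) := by
        rw [hgrad]
        gcongr
        exact le_add_of_nonneg_left (integral_nonneg fun _ => abs_nonneg _)

lemma FinelyOpen1.eventually_volume_ball_diff_le {U : Set (En n)} (hU : FinelyOpen1 U) {x : En n}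
    (hx : x ∈ U) (hn : n ≠ 0) {θ : ℝ≥0∞} (hθ : 0 < θ) :
    ∀ᶠ r : ℝ in 𝓝[>] 0, volume (ball x r \ U) ≤ θ * ENNReal.ofReal r ^ n := by
  filter_upwards [(hU x hx).eventually_lt_const (ENNReal.half_pos hθ.ne'), self_mem_nhdsWithin]
    with r hcap hr
  have hr : 0 < r := hr
  have hpow : ENNReal.ofReal (r ^ (n - 1)) ≠ 0 := (ENNReal.ofReal_pos.2 (by positivity)).ne'
  rw [ENNReal.div_lt_iff (.inl hpow) (.inl ENNReal.ofReal_ne_top)] at hcap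
  calc volume (ball x r \ U) = volume ((Uᶜ ∩ ball x r) ∩ ball x r) := by
        rw [inter_assoc, inter_self, inter_comm, sdiff_eq]
    _ ≤ ENNReal.ofReal (2 * r) * cap1 (Uᶜ ∩ ball x r) := volume_inter_ball_le_mul_cap1 hn _ x hr
    _ ≤ ENNReal.ofReal (2 * r) * (θ / 2 * ENNReal.ofReal (r ^ (n - 1))) := by gcongr
    _ = θ / 2 * 2 * (ENNReal.ofReal r ^ (n - 1) * ENNReal.ofReal r) := by
        rw [ENNReal.ofReal_mul zero_le_two, ENNReal.ofReal_ofNat, ENNReal.ofReal_pow hr.le]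
        ring
    _ = θ * ENNReal.ofReal r ^ n := by
        rw [ENNReal.div_mul_cancel two_ne_zero ofNat_ne_top, pow_sub_one_mul hn]

section Packing

lemma exists_isSeparated_isCover {X : Type*} [PseudoEMetricSpace X] (ε : ℝ≥0) (s : Set X) :
    ∃ N ⊆ s, IsSeparated ε N ∧ IsCover ε s N := by
  obtain ⟨N, hN⟩ := zorn_subset {N | N ⊆ s ∧ IsSeparated ε N} fun c hc hchain =>
    ⟨⋃₀ c, ⟨sUnion_subset fun t ht => (hc ht).1,
      (pairwise_sUnion hchain.directedOn).2 fun t ht => (hc ht).2⟩,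
      fun _ => subset_sUnion_of_mem⟩
  exact ⟨N, hN.prop.1, hN.prop.2, .of_maximal_isSeparated hN⟩

lemma countable_of_isSeparated {X : Type*} [PseudoEMetricSpace X]
    [TopologicalSpace.SeparableSpace X] {ε : ℝ≥0∞} (hε : ε ≠ 0) {N : Set X}
    (hN : IsSeparated ε N) : N.Countable := by
  have hdisj : N.PairwiseDisjoint fun x => eball x (ε / 2) := fun x hx y hy hxy =>
    eball_disjoint (by rw [ENNReal.add_halves]; exact (hN hx hy hxy).le)
  exact hdisj.countable_of_isOpen (fun _ _ => isOpen_eball)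
    fun x _ => ⟨x, mem_eball_self (ENNReal.half_pos hε)⟩

lemma tsum_measure_le_of_card_le {X ι : Type*} [MeasurableSpace X] (μ : Measure X)
    {B : ι → Set X} (hB : ∀ i, MeasurableSet (B i)) {k : ℕ}
    (h : ∀ x, ∀ t : Finset ι, (∀ i ∈ t, x ∈ B i) → t.card ≤ k) :
    ∑' i, μ (B i) ≤ k * μ univ := by
  classical
  rw [ENNReal.tsum_eq_iSup_sum]
  refine iSup_le fun t => ?_
  calc ∑ i ∈ t, μ (B i) = ∫⁻ x, ∑ i ∈ t, (B i).indicator 1 x ∂μ := by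
        rw [lintegral_finsetSum _ fun i _ => measurable_one.indicator (hB i)]
        simp only [lintegral_indicator_one (hB _)]
    _ ≤ ∫⁻ _, k ∂μ := by
        refine lintegral_mono fun x => ?_
        simp only [indicator_apply, Pi.one_apply, Finset.sum_boole]
        exact_mod_cast h x _ fun i hi => (Finset.mem_filter.1 hi).2
    _ = k * μ univ := lintegral_const _

variable {E : Type*} [NormedAddCommGroup E] [NormedSpace ℝ E]

lemma card_le_of_isSeparated_of_forall_mem_ball [FiniteDimensional ℝ E] {r : ℝ≥0} (hr : r ≠ 0)
    {N : Set E} (hN : IsSeparated r N) (y : E) {t : Finset E} (htN : ↑t ⊆ N)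
    (hty : ∀ z ∈ t, y ∈ ball z (2 * r)) : t.card ≤ 5 ^ Module.finrank ℝ E := by
  classical
  have hr' : (0 : ℝ) < r := NNReal.coe_pos.2 hr.pos
  have hinj : Function.Injective fun z : E => (r : ℝ)⁻¹ • (z - y) :=
    (smul_right_injective E (inv_ne_zero hr'.ne')).comp sub_left_injective
  rw [← Finset.card_image_of_injective t hinj]
  refine Besicovitch.card_le_of_separated _ ?_ ?_
  · simp only [Finset.forall_mem_image, norm_smul, norm_inv, Real.norm_of_nonneg hr'.le,
      ← dist_eq_norm]
    intro z hz
    rw [inv_mul_le_iff₀ hr', mul_comm, dist_comm]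
    exact (mem_ball.1 (hty z hz)).le
  · simp only [Finset.forall_mem_image, ← smul_sub, sub_sub_sub_cancel_right, norm_smul, norm_inv,
      Real.norm_of_nonneg hr'.le]
    intro z hz w hw hzw
    have h : (r : ℝ≥0∞) < edist z w := hN (htN hz) (htN hw) (by rintro rfl; exact hzw rfl)
    rw [le_inv_mul_iff₀ hr', mul_one, ← dist_eq_norm]
    rw [edist_nndist, ENNReal.coe_lt_coe] at h
    exact NNReal.coe_le_coe.2 h.le

end Packing

section Sweep

variable {E : Type*} [NormedAddCommGroup E] [NormedSpace ℝ E]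

/-- The points from which some point of `A` is reached by travelling at most `s` along `e`. -/
def tube (e : E) (s : ℝ) (A : Set E) : Set E :=
  {x | ∃ σ ∈ Icc (0 : ℝ) s, x + σ • e ∈ A}

/-- The pairs `(x, t)` such that the value `t` is taken by `u` at a point of `A` on the segment
from `x` to `x + s • e`. -/
def sweep (u : E → ℝ) (e : E) (s : ℝ) (A : Set E) : Set (E × ℝ) :=
  {q | ∃ σ ∈ Icc (0 : ℝ) s, q.1 + σ • e ∈ A ∧ u (q.1 + σ • e) = q.2}

lemma tube_mono (e : E) (s : ℝ) {A B : Set E} (h : A ⊆ B) : tube e s A ⊆ tube e s B :=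
  fun _ ⟨σ, hσ, hx⟩ => ⟨σ, hσ, h hx⟩

lemma sweep_mono (u : E → ℝ) (e : E) (s : ℝ) {A B : Set E} (h : A ⊆ B) :
    sweep u e s A ⊆ sweep u e s B :=
  fun _ ⟨σ, hσ, hx, hq⟩ => ⟨σ, hσ, h hx, hq⟩

lemma sweep_empty (u : E → ℝ) (e : E) (s : ℝ) : sweep u e s ∅ = ∅ :=
  eq_empty_of_forall_notMem fun _ ⟨_, _, hx, _⟩ => hx

lemma sweep_iUnion {ι : Sort*} (u : E → ℝ) (e : E) (s : ℝ) (A : ι → Set E) :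
    sweep u e s (⋃ i, A i) = ⋃ i, sweep u e s (A i) := by
  ext q
  simp only [sweep, mem_iUnion, mem_ofPred_eq]
  constructor
  · rintro ⟨σ, hσ, ⟨i, hi⟩, hq⟩
    exact ⟨i, σ, hσ, hi, hq⟩
  · rintro ⟨i, σ, hσ, hi, hq⟩
    exact ⟨σ, hσ, ⟨i, hi⟩, hq⟩

lemma tube_closedBall_subset {e : E} (he : ‖e‖ = 1) (s : ℝ) {r : ℝ} (hr : 0 < r) (x : E) :
    tube e s (closedBall x r) ⊆
      ⋃ i ∈ Finset.range (⌊s / r⌋₊ + 1), closedBall (x - ((i : ℝ) * r) • e) (2 * r) := by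
  rintro y ⟨σ, ⟨hσ0, hσs⟩, hy⟩
  have hσ := Nat.floor_le (div_nonneg hσ0 hr.le)
  have hσ' := Nat.lt_floor_add_one (σ / r)
  rw [le_div_iff₀ hr] at hσ
  rw [div_lt_iff₀ hr] at hσ'
  refine mem_biUnion (x := ⌊σ / r⌋₊) (Finset.mem_coe.2 (Finset.mem_range.2 (Nat.lt_succ_of_le
    (Nat.floor_mono (by gcongr))))) ?_
  rw [mem_closedBall, dist_eq_norm] at hy ⊢
  calc ‖y - (x - (⌊σ / r⌋₊ * r) • e)‖
      = ‖(y + σ • e - x) - (σ - ⌊σ / r⌋₊ * r) • e‖ := by congr 1; module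
    _ ≤ ‖y + σ • e - x‖ + ‖(σ - ⌊σ / r⌋₊ * r) • e‖ := norm_sub_le _ _
    _ ≤ r + r := by
      gcongr
      rw [norm_smul, he, mul_one, Real.norm_eq_abs, abs_le]
      constructor <;> linarith
    _ = 2 * r := (two_mul r).symm

lemma finrank_ne_zero_of_norm_eq_one [FiniteDimensional ℝ E] {e : E} (he : ‖e‖ = 1) :
    Module.finrank ℝ E ≠ 0 :=
  have : Nontrivial E := nontrivial_of_ne e 0 (norm_ne_zero_iff.1 (he ▸ one_ne_zero))
  Module.finrank_pos.ne'

variable [MeasurableSpace E] (μ : Measure E)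

lemma measure_sweep_le (u : E → ℝ) (e : E) (s : ℝ) (A : Set E) :
    μ.prod volume (sweep u e s A) ≤ μ (tube e s A) * volume (u '' A) := by
  rw [← Measure.prod_prod]
  exact measure_mono fun q ⟨σ, hσ, hx, hq⟩ => ⟨⟨σ, hσ, hx⟩, _, hx, hq⟩

/-- The measure of a sweep, as an outer measure in the swept set. -/
def sweepMeasure (u : E → ℝ) (e : E) (s : ℝ) : OuterMeasure E where
  measureOf A := μ.prod volume (sweep u e s A)
  empty := by rw [sweep_empty, measure_empty]
  mono h := measure_mono (sweep_mono u e s h)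
  iUnion_nat A _ := by rw [sweep_iUnion]; exact measure_iUnion_le _

lemma sweepMeasure_apply (u : E → ℝ) (e : E) (s : ℝ) (A : Set E) :
    sweepMeasure μ u e s A = μ.prod volume (sweep u e s A) := rfl

/-- The constant in the bound for the measure of tubes around balls. -/
def tubeConst : ℝ≥0∞ := 2 ^ (Module.finrank ℝ E + 1) * μ (ball 0 1)

/-- The constant in the bound for the measure of a sweep by a measure controlling the fine
oscillation. The factor `5 ^ d` bounds the overlap of the balls in the covering argument. -/
def sweepConst : ℝ≥0∞ := tubeConst μ * 4 * 5 ^ Module.finrank ℝ E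

lemma sweepConst_ne_zero [μ.IsOpenPosMeasure] : sweepConst μ ≠ 0 := by
  simp [sweepConst, tubeConst, (measure_ball_pos μ (0 : E) one_pos).ne']

variable [FiniteDimensional ℝ E] [μ.IsAddHaarMeasure]

lemma tubeConst_ne_top : tubeConst μ ≠ ∞ :=
  ENNReal.mul_ne_top (by simp) measure_ball_lt_top.ne

lemma sweepConst_ne_top : sweepConst μ ≠ ∞ :=
  ENNReal.mul_ne_top (ENNReal.mul_ne_top (tubeConst_ne_top μ) (by simp)) (by simp)

variable [BorelSpace E]

lemma measure_tube_closedBall_le {e : E} (he : ‖e‖ = 1) {s r : ℝ} (hr : 0 < r) (hrs : r ≤ s)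
    (x : E) : μ (tube e s (closedBall x r)) ≤
      tubeConst μ * (ENNReal.ofReal s * ENNReal.ofReal r ^ (Module.finrank ℝ E - 1)) := by
  set d := Module.finrank ℝ E
  set N := ⌊s / r⌋₊
  have hN : ((N + 1 : ℕ) : ℝ≥0∞) * ENNReal.ofReal r ≤ 2 * ENNReal.ofReal s := by
    rw [← ENNReal.ofReal_natCast, ← ENNReal.ofReal_mul (by positivity), ← ENNReal.ofReal_ofNat,
      ← ENNReal.ofReal_mul (by norm_num)]
    apply ENNReal.ofReal_le_ofReal
    have := Nat.floor_le (div_nonneg (hr.le.trans hrs) hr.le)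
    rw [le_div_iff₀ hr] at this
    push_cast
    linarith
  calc μ (tube e s (closedBall x r))
      ≤ ∑ i ∈ Finset.range (N + 1), μ (closedBall (x - ((i : ℝ) * r) • e) (2 * r)) :=
        (measure_mono (tube_closedBall_subset he s hr x)).trans (measure_biUnion_finset_le _ _)
    _ = (N + 1 : ℕ) * (2 ^ d * ENNReal.ofReal r ^ d * μ (ball 0 1)) := by
        simp only [Measure.addHaar_closedBall μ _ (by positivity : 0 ≤ 2 * r), Finset.sum_const,
          Finset.card_range, nsmul_eq_mul, mul_pow, d,
          ENNReal.ofReal_mul (pow_nonneg (zero_le_two (α := ℝ)) _),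
          ENNReal.ofReal_pow zero_le_two, ENNReal.ofReal_pow hr.le, ENNReal.ofReal_ofNat]
    _ = (N + 1 : ℕ) * ENNReal.ofReal r * (2 ^ d * ENNReal.ofReal r ^ (d - 1) * μ (ball 0 1)) := by
        rw [← mul_pow_sub_one (finrank_ne_zero_of_norm_eq_one he) (ENNReal.ofReal r)]
        ring
    _ ≤ 2 * ENNReal.ofReal s * (2 ^ d * ENNReal.ofReal r ^ (d - 1) * μ (ball 0 1)) := by gcongr
    _ = tubeConst μ * (ENNReal.ofReal s * ENNReal.ofReal r ^ (d - 1)) := by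
        rw [tubeConst, pow_succ]; ring

lemma measure_sweep_le_of_subset_closedBall (u : E → ℝ) {e : E} (he : ‖e‖ = 1) {s r : ℝ}
    (hr : 0 < r) (hrs : r ≤ s) {A : Set E} {x : E} (hA : A ⊆ closedBall x r) :
    μ.prod volume (sweep u e s A) ≤ tubeConst μ * ENNReal.ofReal s *
      (ENNReal.ofReal r ^ (Module.finrank ℝ E - 1) * ediam (u '' A)) :=
  calc μ.prod volume (sweep u e s A) ≤ μ (tube e s A) * volume (u '' A) :=
        measure_sweep_le μ u e s A
    _ ≤ tubeConst μ * (ENNReal.ofReal s * ENNReal.ofReal r ^ (Module.finrank ℝ E - 1)) *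
          ediam (u '' A) := by
        gcongr
        · exact (measure_mono (tube_mono e s hA)).trans (measure_tube_closedBall_le μ he hr hrs x)
        · exact Real.volume_le_diam _
    _ = _ := by ring

end Sweep

section FineOscillation

variable {E : Type*} [NormedAddCommGroup E] [MeasurableSpace E] (μ : Measure E)

/-- A density defect which forces two dense subsets of balls to intersect when the centres are at
most one radius apart. -/
def densityDefect : ℝ≥0∞ := μ (ball 0 2⁻¹) / 2 / 2

lemma densityDefect_pos [μ.IsOpenPosMeasure] : 0 < densityDefect μ :=
  ENNReal.half_pos (ENNReal.half_pos (measure_ball_pos μ _ (by norm_num)).ne').ne'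

variable [NormedSpace ℝ E]

/-- Up to a set of small density, the oscillation of `u` in the ball of radius `r` around `x` is at
most `m (ball x r) / r ^ (d - 1)`, where `d` is the dimension. -/
def FineOscillationLE (m : Measure E) (u : E → ℝ) (x : E) (r : ℝ) : Prop :=
  ∃ U, x ∈ U ∧ μ (ball x r \ U) ≤ densityDefect μ * ENNReal.ofReal r ^ Module.finrank ℝ E ∧
    ENNReal.ofReal r ^ (Module.finrank ℝ E - 1) * ediam (u '' (ball x r ∩ U)) ≤ m (ball x r)

variable {μ}

lemma FineOscillationLE.restrict {m : Measure E} {u : E → ℝ} {x : E} {r : ℝ} {O : Set E}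
    (h : FineOscillationLE μ m u x r) (hO : ball x r ⊆ O) :
    FineOscillationLE μ (m.restrict O) u x r := by
  rwa [FineOscillationLE, Measure.restrict_eq_self m hO]

variable [BorelSpace E] [FiniteDimensional ℝ E] [μ.IsAddHaarMeasure]

lemma inter_inter_nonempty_of_measure_ball_diff_le {x y : E} {r : ℝ} (hr : 0 < r)
    (hxy : dist x y ≤ r) {U V : Set E}
    (hU : μ (ball x r \ U) ≤ densityDefect μ * ENNReal.ofReal r ^ Module.finrank ℝ E)
    (hV : μ (ball y r \ V) ≤ densityDefect μ * ENNReal.ofReal r ^ Module.finrank ℝ E) :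
    ((ball x r ∩ U) ∩ (ball y r ∩ V)).Nonempty := by
  by_contra hemp
  rw [not_nonempty_iff_eq_empty] at hemp
  have hx : ball (midpoint ℝ x y) (r * 2⁻¹) ⊆ ball x r := ball_subset_ball' <| by
    rw [dist_midpoint_left, Real.norm_two]; linarith
  have hy : ball (midpoint ℝ x y) (r * 2⁻¹) ⊆ ball y r := ball_subset_ball' <| by
    rw [dist_midpoint_right, Real.norm_two]; linarith
  have hsub : ball (midpoint ℝ x y) (r * 2⁻¹) ⊆ (ball x r \ U) ∪ (ball y r \ V) := by
    intro z hz
    by_contra hz'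
    simp only [mem_union, Set.mem_sdiff, hx hz, hy hz, true_and, not_or, not_not] at hz'
    exact hemp.subset ⟨⟨hx hz, hz'.1⟩, hy hz, hz'.2⟩
  set ω := μ (ball 0 2⁻¹ : Set E)
  set R := ENNReal.ofReal r ^ Module.finrank ℝ E
  have hlt : R * ω / 2 < R * ω := ENNReal.half_lt_self
    (mul_ne_zero (by simpa [R] using fun h => absurd h hr.not_ge)
      (measure_ball_pos _ _ (by norm_num)).ne')
    (ENNReal.mul_ne_top (by simp [R]) measure_ball_lt_top.ne)
  refine hlt.not_ge ?_
  calc R * ω = μ (ball (midpoint ℝ x y) (r * 2⁻¹)) := by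
        rw [Measure.addHaar_ball_mul_of_pos μ _ hr, ENNReal.ofReal_pow hr.le]
    _ ≤ densityDefect μ * R + densityDefect μ * R :=
        (measure_mono hsub).trans ((measure_union_le _ _).trans (add_le_add hU hV))
    _ = R * ω / 2 := by
        rw [densityDefect, ← add_mul, ENNReal.add_halves, mul_comm, mul_div_assoc]

variable {m : Measure E} {u : E → ℝ}

lemma FineOscillationLE.mul_edist_le {x y : E} {r : ℝ} (hr : 0 < r) (hxy : dist x y ≤ r)
    (hx : FineOscillationLE μ m u x r) (hy : FineOscillationLE μ m u y r) :
    ENNReal.ofReal r ^ (Module.finrank ℝ E - 1) * edist (u x) (u y) ≤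
      m (ball x r) + m (ball y r) := by
  obtain ⟨U, hxU, hU, hUm⟩ := hx
  obtain ⟨V, hyV, hV, hVm⟩ := hy
  obtain ⟨w, hwU, hwV⟩ := inter_inter_nonempty_of_measure_ball_diff_le hr hxy hU hV
  have hxw : edist (u x) (u w) ≤ ediam (u '' (ball x r ∩ U)) :=
    edist_le_ediam_of_mem (mem_image_of_mem _ ⟨mem_ball_self hr, hxU⟩) (mem_image_of_mem _ hwU)
  have hwy : edist (u w) (u y) ≤ ediam (u '' (ball y r ∩ V)) :=
    edist_le_ediam_of_mem (mem_image_of_mem _ hwV) (mem_image_of_mem _ ⟨mem_ball_self hr, hyV⟩)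
  calc _ ≤ ENNReal.ofReal r ^ (Module.finrank ℝ E - 1) *
          (ediam (u '' (ball x r ∩ U)) + ediam (u '' (ball y r ∩ V))) := by
        gcongr; exact (edist_triangle _ _ _).trans (add_le_add hxw hwy)
    _ ≤ m (ball x r) + m (ball y r) := by rw [mul_add]; exact add_le_add hUm hVm

lemma mul_ediam_image_le_of_fineOscillationLE {P : Set E} {z : E} {r : ℝ} (hr : 0 < r)
    (hz : FineOscillationLE μ m u z r) (hP : ∀ x ∈ P, FineOscillationLE μ m u x r)
    (hPz : P ⊆ closedBall z r) :
    ENNReal.ofReal r ^ (Module.finrank ℝ E - 1) * ediam (u '' P) ≤ 4 * m (ball z (2 * r)) := by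
  have hball : ∀ x ∈ closedBall z r, m (ball x r) ≤ m (ball z (2 * r)) := fun x hx =>
    measure_mono (ball_subset_ball' (by linarith [mem_closedBall.1 hx]))
  have hstep : ∀ x ∈ P, ENNReal.ofReal r ^ (Module.finrank ℝ E - 1) * edist (u x) (u z) ≤
      m (ball z (2 * r)) + m (ball z (2 * r)) := fun x hx =>
    ((hP x hx).mul_edist_le hr (hPz hx) hz).trans
      (add_le_add (hball x (hPz hx)) (hball z (mem_closedBall_self hr.le)))
  have hR0 : ENNReal.ofReal r ^ (Module.finrank ℝ E - 1) ≠ 0 := by simp [hr]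
  have hR : ENNReal.ofReal r ^ (Module.finrank ℝ E - 1) ≠ ∞ := by simp
  rw [mul_comm, ← ENNReal.le_div_iff_mul_le (.inl hR0) (.inl hR)]
  refine ediam_le ?_
  rintro _ ⟨x, hx, rfl⟩ _ ⟨y, hy, rfl⟩
  rw [ENNReal.le_div_iff_mul_le (.inl hR0) (.inl hR), mul_comm]
  calc _ ≤ ENNReal.ofReal r ^ (Module.finrank ℝ E - 1) *
          (edist (u x) (u z) + edist (u y) (u z)) := by gcongr; exact edist_triangle_right _ _ _
    _ ≤ (m (ball z (2 * r)) + m (ball z (2 * r))) + (m (ball z (2 * r)) + m (ball z (2 * r))) := by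
        rw [mul_add]; exact add_le_add (hstep x hx) (hstep y hy)
    _ = 4 * m (ball z (2 * r)) := by ring

lemma measure_sweep_le_of_fineOscillationLE {e : E} (he : ‖e‖ = 1) {s r : ℝ} (hr : 0 < r)
    (hrs : r ≤ s) {P : Set E} (hP : ∀ x ∈ P, FineOscillationLE μ m u x r) :
    μ.prod volume (sweep u e s P) ≤ sweepConst μ * (ENNReal.ofReal s * m univ) := by
  have hr' : r.toNNReal ≠ 0 := (Real.toNNReal_pos.2 hr).ne'
  obtain ⟨N, hNP, hsep, hcov⟩ := exists_isSeparated_isCover r.toNNReal P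
  have hN : N.Countable := countable_of_isSeparated (by simpa using hr) hsep
  have hPN : P = ⋃ z : N, P ∩ closedBall z r := by
    rw [← inter_iUnion, left_eq_inter, iUnion_subtype]
    simpa [isCover_iff_subset_iUnion_closedBall, hr.le] using hcov
  have hpiece (z : N) : μ.prod volume (sweep u e s (P ∩ closedBall z r)) ≤
      tubeConst μ * ENNReal.ofReal s * (4 * m (ball z (2 * r))) :=
    (measure_sweep_le_of_subset_closedBall μ u he hr hrs inter_subset_right).trans <|
      mul_le_mul_right (mul_ediam_image_le_of_fineOscillationLE hr (hP z (hNP z.2))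
        (fun x hx => hP x hx.1) inter_subset_right) _
  have hoverlap : ∑' z : N, m (ball z (2 * r)) ≤ (5 ^ Module.finrank ℝ E : ℕ) * m univ :=
    tsum_measure_le_of_card_le m (fun z => measurableSet_ball) fun y t ht => by
      rw [← Finset.card_map (Function.Embedding.subtype _)]
      refine card_le_of_isSeparated_of_forall_mem_ball hr' hsep y (by simp) ?_
      simpa [hr.le] using ht
  have := hN.to_subtype
  calc μ.prod volume (sweep u e s P)
      ≤ ∑' z : N, tubeConst μ * ENNReal.ofReal s * (4 * m (ball z (2 * r))) := by
        rw [hPN, sweep_iUnion]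
        exact (measure_iUnion_le _).trans (ENNReal.tsum_le_tsum hpiece)
    _ = tubeConst μ * ENNReal.ofReal s * (4 * ∑' z : N, m (ball z (2 * r))) := by
        rw [ENNReal.tsum_mul_left, ENNReal.tsum_mul_left]
    _ ≤ tubeConst μ * ENNReal.ofReal s * (4 * ((5 ^ Module.finrank ℝ E : ℕ) * m univ)) := by gcongr
    _ = sweepConst μ * (ENNReal.ofReal s * m univ) := by rw [sweepConst]; push_cast; ring

lemma sweepMeasure_le_of_eventually_fineOscillationLE [m.OuterRegular] {e : E} (he : ‖e‖ = 1)
    {s : ℝ} (hs : 0 < s) {A : Set E}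
    (hA : ∀ x ∈ A, ∀ᶠ r in 𝓝[>] 0, FineOscillationLE μ m u x r) :
    sweepMeasure μ u e s A ≤ sweepConst μ * ENNReal.ofReal s * m A := by
  suffices h : ∀ O, A ⊆ O → IsOpen O →
      sweepMeasure μ u e s A ≤ sweepConst μ * ENNReal.ofReal s * m O by
    have h0 : sweepConst μ * ENNReal.ofReal s ≠ 0 :=
      mul_ne_zero (sweepConst_ne_zero μ) (by simpa using hs)
    have htop : sweepConst μ * ENNReal.ofReal s ≠ ∞ :=
      ENNReal.mul_ne_top (sweepConst_ne_top μ) ENNReal.ofReal_ne_top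
    simp only [A.measure_eq_iInf_isOpen m, ENNReal.mul_iInf_of_ne h0 htop]
    exact le_iInf₂ fun O hAO => le_iInf fun hO => h O hAO hO
  intro O hAO hO
  set r : ℕ → ℝ := fun k => s / (k + 1)
  have hr (k : ℕ) : 0 < r k := by positivity
  have hr0 : Tendsto r atTop (𝓝[>] 0) := tendsto_nhdsWithin_iff.2
    ⟨(tendsto_const_div_atTop_nhds_zero_nat s).comp (tendsto_add_atTop_nat 1) |>.congr
      fun k => by simp [r], .of_forall hr⟩
  set P : ℕ → Set E := fun k => {x | ball x (r k) ⊆ O ∧ FineOscillationLE μ m u x (r k)}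
  have hAP : A ⊆ ⋃ j, ⋂ k ≥ j, P k := by
    intro x hx
    have hOx : ∀ᶠ ρ in 𝓝[>] (0 : ℝ), ball x ρ ⊆ O :=
      nhdsWithin_le_nhds (eventually_ball_subset (hO.mem_nhds (hAO hx)))
    obtain ⟨j, hj⟩ := eventually_atTop.1 (hr0.eventually (hOx.and (hA x hx)))
    exact mem_iUnion.2 ⟨j, mem_iInter₂.2 hj⟩
  have hmono : Monotone fun j => sweep u e s (⋂ k ≥ j, P k) := fun i j hij =>
    sweep_mono u e s (biInter_mono (fun k (hk : j ≤ k) => hij.trans hk) fun _ _ => subset_rfl)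
  refine (measure_mono hAP).trans ?_
  rw [sweepMeasure_apply, sweep_iUnion, hmono.measure_iUnion]
  refine iSup_le fun j => ?_
  rw [mul_assoc, ← m.restrict_apply_univ O]
  refine measure_sweep_le_of_fineOscillationLE he (hr j) (div_le_self hs.le (by simp))
    fun x hx => ?_
  obtain ⟨hxO, hxm⟩ := mem_iInter₂.1 hx j le_rfl
  exact hxm.restrict hxO

end FineOscillation

section HausdorffNull

lemma exists_cover_tsum_ediam_rpow_le {X : Type*} [EMetricSpace X] [MeasurableSpace X]
    [BorelSpace X] {d : ℝ} {Z : Set X} (hZ : μH[d] Z < ∞) {r : ℝ≥0∞} (hr : 0 < r) :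
    ∃ t : ℕ → Set X, Z ⊆ ⋃ i, t i ∧ (∀ i, ediam (t i) ≤ r) ∧
      ∑' i, ⨆ (_ : (t i).Nonempty), ediam (t i) ^ d ≤ μH[d] Z + 1 := by
  have h : ⨅ t : ℕ → Set X, ⨅ (_ : Z ⊆ ⋃ i, t i), ⨅ (_ : ∀ i, ediam (t i) ≤ r),
      ∑' i, ⨆ (_ : (t i).Nonempty), ediam (t i) ^ d < μH[d] Z + 1 := by
    refine lt_of_le_of_lt ?_ (ENNReal.lt_add_right hZ.ne one_ne_zero)
    rw [Measure.hausdorffMeasure_apply]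
    exact le_iSup₂_of_le r hr le_rfl
  simp only [iInf_lt_iff] at h
  obtain ⟨t, ht, hd, hlt⟩ := h
  exact ⟨t, ht, hd, hlt.le⟩

variable {E : Type*} [NormedAddCommGroup E] [NormedSpace ℝ E] [MeasurableSpace E] [BorelSpace E]
  [FiniteDimensional ℝ E] (μ : Measure E) [μ.IsAddHaarMeasure] {u : E → ℝ} {e : E} {s : ℝ}

lemma measure_sweep_le_ediam_rpow (he : ‖e‖ = 1) {A : Set E} {η : ℝ≥0∞}
    (hA : ediam A ≤ ENNReal.ofReal s) (hη : ediam (u '' A) ≤ η) :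
    μ.prod volume (sweep u e s A) ≤ tubeConst μ * ENNReal.ofReal s * η *
      ⨆ (_ : A.Nonempty), ediam A ^ ((Module.finrank ℝ E : ℝ) - 1) := by
  rcases A.eq_empty_or_nonempty with rfl | ⟨x, hx⟩
  · simp [sweep_empty]
  rw [ciSup_pos ⟨x, hx⟩]
  rcases eq_or_ne (ediam A) 0 with h0 | h0
  · have : volume (u '' A) = 0 := ((ediam_eq_zero_iff.1 h0).image u).measure_zero _
    refine (measure_sweep_le μ u e s A).trans ?_
    simp [this]
  have htop : ediam A ≠ ∞ := (hA.trans_lt ENNReal.ofReal_lt_top).ne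
  have hpos : 0 < (ediam A).toReal := ENNReal.toReal_pos h0 htop
  have hs : (ediam A).toReal ≤ s := ENNReal.toReal_le_of_le_ofReal
    (le_of_not_gt fun hs => h0 (le_bot_iff.1 (hA.trans_eq (ENNReal.ofReal_of_nonpos hs.le)))) hA
  have hsub : A ⊆ closedBall x (ediam A).toReal := fun y hy => by
    rw [mem_closedBall, dist_edist]
    exact ENNReal.toReal_mono htop (edist_le_ediam_of_mem hy hx)
  refine (measure_sweep_le_of_subset_closedBall μ u he hpos hs hsub).trans ?_
  rw [ENNReal.ofReal_toReal htop, ← ENNReal.rpow_natCast,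
    Nat.cast_sub (Nat.one_le_iff_ne_zero.2 (finrank_ne_zero_of_norm_eq_one he)), Nat.cast_one,
    mul_assoc _ η, mul_comm η]
  gcongr

lemma sweepMeasure_eq_zero_of_isBounded (hu : Continuous u) (he : ‖e‖ = 1) (hs : 0 < s) {Z : Set E}
    (hZ : μH[(Module.finrank ℝ E : ℝ) - 1] Z < ∞) (hb : Bornology.IsBounded Z) :
    sweepMeasure μ u e s Z = 0 := by
  set H := μH[(Module.finrank ℝ E : ℝ) - 1] Z
  set c := tubeConst μ * ENNReal.ofReal s
  have hcH : c * (H + 1) ≠ ∞ := ENNReal.mul_ne_top (ENNReal.mul_ne_top (tubeConst_ne_top μ)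
    ENNReal.ofReal_ne_top) (ENNReal.add_ne_top.2 ⟨hZ.ne, one_ne_top⟩)
  have hd : 0 ≤ (Module.finrank ℝ E : ℝ) - 1 := sub_nonneg.2
    (Nat.one_le_cast.2 (Nat.one_le_iff_ne_zero.2 (finrank_ne_zero_of_norm_eq_one he)))
  by_contra hM
  obtain ⟨η, hη, hlt⟩ := ENNReal.exists_nnreal_pos_mul_lt hcH hM
  refine hlt.not_ge ?_
  obtain ⟨r₀, hr₀, hr₀u⟩ := EMetric.uniformContinuousOn_iff.1
    (hb.isCompact_closure.uniformContinuousOn_of_continuous hu.continuousOn) η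
    (by exact_mod_cast hη)
  obtain ⟨r, hr, hrlt⟩ := exists_between (lt_min hr₀ (ENNReal.ofReal_pos.2 hs))
  obtain ⟨t, hZt, htd, hsum⟩ := exists_cover_tsum_ediam_rpow_le hZ hr
  have hdiam (i : ℕ) : ediam (t i ∩ Z) < min r₀ (ENNReal.ofReal s) :=
    ((ediam_mono inter_subset_left).trans (htd i)).trans_lt hrlt
  have hosc (i : ℕ) : ediam (u '' (t i ∩ Z)) ≤ η := by
    refine ediam_le ?_
    rintro _ ⟨y, hy, rfl⟩ _ ⟨z, hz, rfl⟩
    exact (hr₀u (subset_closure hy.2) (subset_closure hz.2) ((edist_le_ediam_of_mem hy hz).trans_lt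
      ((hdiam i).trans_le (min_le_left _ _)))).le
  have hpiece (i : ℕ) : sweepMeasure μ u e s (t i ∩ Z) ≤
      c * η * ⨆ (_ : (t i).Nonempty), ediam (t i) ^ ((Module.finrank ℝ E : ℝ) - 1) :=
    (measure_sweep_le_ediam_rpow μ he ((hdiam i).le.trans (min_le_right _ _)) (hosc i)).trans <|
      mul_le_mul_right (iSup_mono' fun h : (t i ∩ Z).Nonempty => ⟨h.left,
        ENNReal.rpow_le_rpow (ediam_mono inter_subset_left) hd⟩) _
  calc sweepMeasure μ u e s Z ≤ ∑' i, sweepMeasure μ u e s (t i ∩ Z) := by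
        refine (measure_mono fun x hx => ?_).trans (measure_iUnion_le _)
        rw [← iUnion_inter]
        exact ⟨hZt hx, hx⟩
    _ ≤ c * η * ∑' i, ⨆ (_ : (t i).Nonempty), ediam (t i) ^ ((Module.finrank ℝ E : ℝ) - 1) := by
        rw [← ENNReal.tsum_mul_left]
        exact ENNReal.tsum_le_tsum hpiece
    _ ≤ c * η * (H + 1) := by gcongr
    _ = η * (c * (H + 1)) := by ring

lemma sweepMeasure_eq_zero_of_hausdorffMeasure (hu : Continuous u) (he : ‖e‖ = 1) (hs : 0 < s)
    {Z : Set E} {S : ℕ → Set E} (hZ : Z ⊆ ⋃ j, S j)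
    (hS : ∀ j, μH[(Module.finrank ℝ E : ℝ) - 1] (S j) < ∞) : sweepMeasure μ u e s Z = 0 := by
  have hsub : Z ⊆ ⋃ j, ⋃ k : ℕ, S j ∩ closedBall 0 k := by
    simpa only [← inter_iUnion, iUnion_closedBall_nat, inter_univ] using hZ
  refine measure_mono_null hsub ?_
  simp only [measure_iUnion_null_iff]
  exact fun j k => sweepMeasure_eq_zero_of_isBounded μ hu he hs
    ((measure_mono inter_subset_left).trans_lt (hS j))
    (isBounded_closedBall.subset inter_subset_right)

end HausdorffNull

section ScaledSumBound

lemma outerMeasure_le_of_cover {X : Type*} [MeasurableSpace X] (M : OuterMeasure X)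
    (μ : Measure X) {T : ℕ → Set X} (hT : ∀ j, MeasurableSet (T j)) {N A : Set X} (hN : M N = 0)
    (hA : MeasurableSet A) (hcov : A ⊆ N ∪ ⋃ j, T j)
    (h : ∀ j B, MeasurableSet B → B ⊆ T j → M B ≤ μ B) : M A ≤ μ A := by
  have hcov' : A ⊆ N ∪ ⋃ j, A ∩ disjointed T j := by
    rw [← inter_iUnion, iUnion_disjointed]
    exact fun x hx => (hcov hx).imp_right fun h => ⟨hx, h⟩
  have hm (j : ℕ) : MeasurableSet (A ∩ disjointed T j) := hA.inter (MeasurableSet.disjointed hT j)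
  calc M A ≤ M N + ∑' j, M (A ∩ disjointed T j) :=
        (measure_mono hcov').trans ((measure_union_le _ _).trans
          (add_le_add_right (measure_iUnion_le _) _))
    _ ≤ 0 + ∑' j, μ (A ∩ disjointed T j) := by
        rw [hN]
        gcongr with j
        exact h j _ (hm j) (inter_subset_right.trans (disjointed_subset T j))
    _ = μ (⋃ j, A ∩ disjointed T j) := by
        rw [zero_add, measure_iUnion (fun i j hij => ((disjoint_disjointed T hij).mono
          inter_subset_right inter_subset_right)) hm]
    _ ≤ μ A := measure_mono (iUnion_subset fun j => inter_subset_left)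

lemma eq_zero_of_forall_le_mul {a b : ℝ≥0∞} (hb : b ≠ ∞)
    (h : ∀ l : ℝ≥0∞, l ≠ 0 → l ≤ 1 → a ≤ l * b) : a = 0 := by
  by_contra ha
  obtain ⟨η, hη, hlt⟩ := ENNReal.exists_nnreal_pos_mul_lt hb ha
  have hη' : min (η : ℝ≥0∞) 1 ≠ 0 := (lt_min (by exact_mod_cast hη) one_pos).ne'
  exact hlt.not_ge ((h _ hη' (min_le_right _ _)).trans (mul_le_mul_left (min_le_left _ _) _))

variable {X : Type*} [MeasurableSpace X]

/-- The outer measure `M` is bounded by `C (l κ + l⁻ᵏ ν)` for every scale `l`. Optimising `l`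
pointwise turns this into a bound by the geometric mean `κ ^ (k / (k + 1)) ν ^ (1 / (k + 1))`. -/
def ScaledSumBound (M : OuterMeasure X) (κ ν : Measure X) (k : ℕ) (C : ℝ≥0∞) : Prop :=
  ∀ A, MeasurableSet A → ∀ l : ℝ≥0∞, l ≠ 0 → l ≠ ∞ → M A ≤ C * (l * κ A + l⁻¹ ^ k * ν A)

variable {M : OuterMeasure X} {κ ν : Measure X} {k : ℕ} {C : ℝ≥0∞} {B : Set X}

lemma outerMeasure_eq_zero_of_inter_spanningSets (μ : Measure X) [SigmaFinite μ]
    (h : ∀ i, M (B ∩ spanningSets μ i) = 0) : M B = 0 := by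
  rw [← inter_univ B, ← iUnion_spanningSets μ, inter_iUnion]
  exact measure_iUnion_null h

lemma ScaledSumBound.eq_zero_of_left_null (h : ScaledSumBound M κ ν k C) (hk : k ≠ 0)
    (hC : C ≠ ∞) [SigmaFinite ν] (hB : MeasurableSet B) (hκB : κ B = 0) : M B = 0 := by
  refine outerMeasure_eq_zero_of_inter_spanningSets ν fun i => ?_
  have hν : ν (B ∩ spanningSets ν i) ≠ ∞ :=
    ((measure_mono inter_subset_right).trans_lt (measure_spanningSets_lt_top ν i)).ne
  refine eq_zero_of_forall_le_mul (ENNReal.mul_ne_top hC hν) fun l hl hl1 => ?_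
  refine (h _ (hB.inter (measurableSet_spanningSets ν i)) l⁻¹
    (ENNReal.inv_ne_zero.2 (hl1.trans_lt one_lt_top).ne) (ENNReal.inv_ne_top.2 hl)).trans ?_
  rw [measure_mono_null inter_subset_left hκB, mul_zero, zero_add, inv_inv, mul_left_comm]
  gcongr
  simpa only [pow_one] using pow_le_pow_right_of_le_one' hl1 (Nat.one_le_iff_ne_zero.2 hk)

lemma ScaledSumBound.eq_zero_of_right_null (h : ScaledSumBound M κ ν k C) (hC : C ≠ ∞)
    [SigmaFinite κ] (hB : MeasurableSet B) (hνB : ν B = 0) : M B = 0 := by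
  refine outerMeasure_eq_zero_of_inter_spanningSets κ fun i => ?_
  have hκ : κ (B ∩ spanningSets κ i) ≠ ∞ :=
    ((measure_mono inter_subset_right).trans_lt (measure_spanningSets_lt_top κ i)).ne
  refine eq_zero_of_forall_le_mul (ENNReal.mul_ne_top hC hκ) fun l hl hl1 => ?_
  refine (h _ (hB.inter (measurableSet_spanningSets κ i)) l hl
    (hl1.trans_lt one_lt_top).ne).trans ?_
  rw [measure_mono_null inter_subset_left hνB, mul_zero, add_zero, mul_left_comm]

lemma ScaledSumBound.le_setLIntegral_of_le_two_mul (h : ScaledSumBound M κ ν k C)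
    {t : X → ℝ≥0∞} (ht : Measurable t) (hB : MeasurableSet B)
    (hν : ν B = ∫⁻ x in B, t x ^ (k + 1) ∂κ) {l : ℝ≥0∞} (hl : l ≠ 0) (hl' : l ≠ ∞)
    (hlt : ∀ x ∈ B, l ≤ t x) (htl : ∀ x ∈ B, t x ≤ 2 * l) :
    M B ≤ C * (1 + 2 ^ k) * ∫⁻ x in B, t x ∂κ := by
  have hκ : l * κ B ≤ ∫⁻ x in B, t x ∂κ := by
    rw [← setLIntegral_const]
    exact setLIntegral_mono ht hlt
  have hν' : l⁻¹ ^ k * ν B ≤ 2 ^ k * ∫⁻ x in B, t x ∂κ := by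
    rw [hν, ← lintegral_const_mul _ (ht.pow_const _), ← lintegral_const_mul _ ht]
    refine setLIntegral_mono (ht.const_mul _) fun x hx => ?_
    calc l⁻¹ ^ k * t x ^ (k + 1) ≤ l⁻¹ ^ k * ((2 * l) ^ k * t x) := by
          rw [pow_succ]
          gcongr
          exact htl x hx
      _ = (l⁻¹ * l) ^ k * (2 ^ k * t x) := by simp only [mul_pow]; ring
      _ = 2 ^ k * t x := by rw [ENNReal.inv_mul_cancel hl hl', one_pow, one_mul]
  calc M B ≤ C * (l * κ B + l⁻¹ ^ k * ν B) := h B hB l hl hl'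
    _ ≤ C * ((∫⁻ x in B, t x ∂κ) + 2 ^ k * ∫⁻ x in B, t x ∂κ) := by gcongr
    _ = C * (1 + 2 ^ k) * ∫⁻ x in B, t x ∂κ := by ring

lemma measure_eq_setLIntegral_rnDeriv_of_subset_nullSet [ν.HaveLebesgueDecomposition κ]
    (hB : MeasurableSet B) (hBS : B ⊆ (ν.mutuallySingular_singularPart κ).nullSet) :
    ν B = ∫⁻ x in B, ν.rnDeriv κ x ∂κ := by
  conv_lhs => rw [ν.haveLebesgueDecomposition_add κ]
  rw [Measure.add_apply, withDensity_apply _ hB, measure_mono_null hBS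
    (ν.mutuallySingular_singularPart κ).measure_nullSet, zero_add]

/-- The set on which the optimal scale `(dν/dκ) ^ (1 / (k + 1))` lies between consecutive powers
of two; the singular part of `ν` does not charge it. -/
def dyadicScaleSet (κ ν : Measure X) (k : ℕ) (j : ℤ) : Set X :=
  (ν.mutuallySingular_singularPart κ).nullSet ∩
    {x | ν.rnDeriv κ x ^ ((k : ℝ) + 1)⁻¹ ∈ Ico ((2 : ℝ≥0∞) ^ j) (2 ^ (j + 1))}

lemma measurableSet_dyadicScaleSet (j : ℤ) : MeasurableSet (dyadicScaleSet κ ν k j) :=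
  (ν.mutuallySingular_singularPart κ).measurableSet_nullSet.inter
    (((Measure.measurable_rnDeriv ν κ).pow_const _) measurableSet_Ico)

lemma ScaledSumBound.outerMeasure_compl_iUnion_dyadicScaleSet (h : ScaledSumBound M κ ν k C)
    (hk : k ≠ 0) (hC : C ≠ ∞) [SigmaFinite κ] [SigmaFinite ν] :
    M (⋃ j, dyadicScaleSet κ ν k j)ᶜ = 0 := by
  set S := (ν.mutuallySingular_singularPart κ).nullSet
  have hSm : MeasurableSet S := (ν.mutuallySingular_singularPart κ).measurableSet_nullSet
  have hτ := Measure.measurable_rnDeriv ν κ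
  have hS : M Sᶜ = 0 := h.eq_zero_of_left_null hk hC hSm.compl
    (ν.mutuallySingular_singularPart κ).measure_compl_nullSet
  have htop : M {x | ν.rnDeriv κ x = ∞} = 0 :=
    h.eq_zero_of_left_null hk hC (hτ (measurableSet_singleton ∞)) <| by
      simpa [ae_iff] using Measure.rnDeriv_lt_top ν κ
  have hzero : M (S ∩ {x | ν.rnDeriv κ x = 0}) = 0 := by
    have hm : MeasurableSet (S ∩ {x | ν.rnDeriv κ x = 0}) :=
      hSm.inter (hτ (measurableSet_singleton 0))
    refine h.eq_zero_of_right_null hC hm ?_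
    rw [measure_eq_setLIntegral_rnDeriv_of_subset_nullSet hm inter_subset_left,
      setLIntegral_congr_fun hm fun x hx => hx.2, lintegral_zero]
  refine measure_mono_null ?_ (measure_union_null (measure_union_null hS htop) hzero)
  intro x hx
  contrapose! hx
  simp only [mem_union, not_or, mem_compl_iff, not_not, mem_inter_iff, not_and] at hx
  obtain ⟨⟨hxS, hxtop⟩, hx0⟩ := hx
  obtain ⟨j, hj⟩ := ENNReal.exists_mem_Ico_zpow (y := 2)
    (x := ν.rnDeriv κ x ^ ((k : ℝ) + 1)⁻¹)
    (ENNReal.rpow_pos (pos_iff_ne_zero.2 (hx0 hxS)) hxtop).ne'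
    (ENNReal.rpow_ne_top_of_nonneg (by positivity) hxtop) one_lt_two ofNat_ne_top
  simpa using ⟨j, hxS, hj⟩

theorem ScaledSumBound.le_setLIntegral_rnDeriv_rpow (h : ScaledSumBound M κ ν k C) (hk : k ≠ 0)
    (hC : C ≠ ∞) [SigmaFinite κ] [SigmaFinite ν] {A : Set X} (hA : MeasurableSet A) :
    M A ≤ C * (1 + 2 ^ k) * ∫⁻ x in A, ν.rnDeriv κ x ^ ((k : ℝ) + 1)⁻¹ ∂κ := by
  set t : X → ℝ≥0∞ := fun x => ν.rnDeriv κ x ^ ((k : ℝ) + 1)⁻¹ with ht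
  have htm : Measurable t := (Measure.measurable_rnDeriv ν κ).pow_const _
  have htk (x : X) : t x ^ (k + 1) = ν.rnDeriv κ x := by
    rw [ht, ← ENNReal.rpow_natCast, ← ENNReal.rpow_mul]
    push_cast
    rw [inv_mul_cancel₀ (by positivity), ENNReal.rpow_one]
  have hcov : A ⊆ (⋃ j, dyadicScaleSet κ ν k j)ᶜ ∪
      ⋃ i, dyadicScaleSet κ ν k (Equiv.intEquivNat.symm i) := by
    rw [Equiv.intEquivNat.symm.surjective.iUnion_comp (dyadicScaleSet κ ν k), compl_union_self]
    exact subset_univ A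
  have hpiece (i : ℕ) (B : Set X) (hB : MeasurableSet B)
      (hBT : B ⊆ dyadicScaleSet κ ν k (Equiv.intEquivNat.symm i)) :
      M B ≤ ((C * (1 + 2 ^ k)) • κ.withDensity t) B := by
    rw [Measure.smul_apply, smul_eq_mul, withDensity_apply _ hB]
    refine h.le_setLIntegral_of_le_two_mul htm hB ?_
      (ENNReal.zpow_pos two_ne_zero ofNat_ne_top (Equiv.intEquivNat.symm i)).ne'
      (ENNReal.zpow_ne_top two_ne_zero ofNat_ne_top _) (fun x hx => (hBT hx).2.1) fun x hx => ?_
    · simpa only [htk] using measure_eq_setLIntegral_rnDeriv_of_subset_nullSet hB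
        (hBT.trans inter_subset_left)
    · have hlt := (hBT hx).2.2
      rw [ENNReal.zpow_add two_ne_zero ofNat_ne_top, zpow_one, mul_comm] at hlt
      exact hlt.le
  refine (outerMeasure_le_of_cover M _ (fun i => measurableSet_dyadicScaleSet _)
    (h.outerMeasure_compl_iUnion_dyadicScaleSet hk hC) hA hcov hpiece).trans_eq ?_
  rw [Measure.smul_apply, smul_eq_mul, withDensity_apply _ hA]

end ScaledSumBound

section FineDilatation

lemma ediam_image_pow_le_of_KfU_lt (hn : 2 ≤ n) {f : En n → En n} {U : Set (En n)} {x : En n}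
    {r : ℝ} {c : ℝ≥0∞} (h : KfU f U x r < c) :
    ediam (f '' (ball x r ∩ U)) ^ n ≤ c ^ (n - 1) * volume (f '' ball x r) := by
  rw [KfU] at h
  split_ifs at h with h0
  · exact absurd h not_top_lt
  have hn1 : ((n : ℝ) - 1) = ((n - 1 : ℕ) : ℝ) := by rw [Nat.cast_sub (by omega), Nat.cast_one]
  rw [hn1, ENNReal.rpow_inv_lt_iff (Nat.cast_pos.2 (by omega)), ENNReal.rpow_natCast] at h
  exact (ENNReal.div_le_iff_le_mul (.inl h0) (.inr (ne_bot_of_gt h))).1 h.le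

lemma pow_mul_le_add_of_pow_le (hn : n ≠ 0) {R d c v : ℝ≥0∞} (h : d ^ n ≤ c ^ (n - 1) * v)
    {l : ℝ≥0∞} (hl : l ≠ 0) (hl' : l ≠ ∞) :
    R ^ (n - 1) * d ≤ l * c * R ^ n + l⁻¹ ^ (n - 1) * v := by
  rw [← ENNReal.pow_le_pow_left_iff hn]
  calc (R ^ (n - 1) * d) ^ n = (R ^ n) ^ (n - 1) * d ^ n := by rw [mul_pow]; ring
    _ ≤ (R ^ n) ^ (n - 1) * (c ^ (n - 1) * v) := by gcongr
    _ = (l * l⁻¹) ^ (n - 1) * ((R ^ n) ^ (n - 1) * (c ^ (n - 1) * v)) := by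
        rw [ENNReal.mul_inv_cancel hl hl', one_pow, one_mul]
    _ = (l * c * R ^ n) ^ (n - 1) * (l⁻¹ ^ (n - 1) * v) := by simp only [mul_pow]; ring
    _ ≤ (l * c * R ^ n + l⁻¹ ^ (n - 1) * v) ^ (n - 1) * (l * c * R ^ n + l⁻¹ ^ (n - 1) * v) := by
        gcongr
        · exact le_self_add
        · exact le_add_self
    _ = _ := by rw [pow_sub_one_mul hn]

/-- The pull-back `A ↦ |f(A)|` of Lebesgue measure; this formula requires `f` to be a measurable
embedding, since `Measure.comap` is defined to be zero otherwise. -/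
def imageVolume (f : En n → En n) : Measure (En n) := volume.comap f

/-- The measure with density `K_f^fine + 1`; the added `1` keeps the density away from zero. -/
def dilatationVolume (f : En n → En n) : Measure (En n) :=
  volume.withDensity fun x => Kfine f x + 1

variable {f : En n → En n}

lemma imageVolume_apply (hf : Continuous f) (hinj : Function.Injective f) (A : Set (En n)) :
    imageVolume f A = volume (f '' A) :=
  (hf.measurableEmbedding hinj).comap_apply _ _

lemma isFiniteMeasureOnCompacts_imageVolume (hf : Continuous f) (hinj : Function.Injective f) :
    IsFiniteMeasureOnCompacts (imageVolume f) :=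
  ⟨fun K hK => by
    rw [imageVolume_apply hf hinj]
    exact (hK.image hf).measure_lt_top⟩

variable {g : En n → ℝ}

lemma eventually_fineOscillationLE_of_Kfine_lt (hn : 2 ≤ n) (hf : Continuous f)
    (hinj : Function.Injective f) (hg : LipschitzWith 1 g) {x : En n} {c : ℝ≥0∞}
    (h : Kfine f x < c) {l : ℝ≥0∞} (hl : l ≠ 0) (hl' : l ≠ ∞) :
    ∀ᶠ r in 𝓝[>] 0, FineOscillationLE volume
      ((l * c * (volume (ball (0 : En n) 1))⁻¹) • volume + l⁻¹ ^ (n - 1) • imageVolume f)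
      (g ∘ f) x r := by
  have hω0 : volume (ball (0 : En n) 1) ≠ 0 := (measure_ball_pos _ _ one_pos).ne'
  simp only [Kfine, iInf_lt_iff] at h
  obtain ⟨U, hU, hxU, hlim⟩ := h
  filter_upwards [eventually_lt_of_limsup_lt hlim, self_mem_nhdsWithin,
    hU.eventually_volume_ball_diff_le hxU (by omega)
      (densityDefect_pos (volume : Measure (En n)))] with r hr hr0 hrU
  have hosc : ediam ((g ∘ f) '' (ball x r ∩ U)) ≤ ediam (f '' (ball x r ∩ U)) := by
    simpa only [image_comp, ENNReal.coe_one, one_mul] using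
      hg.ediam_image_le (f '' (ball x r ∩ U))
  have hball : volume (ball x r) = ENNReal.ofReal r ^ n * volume (ball (0 : En n) 1) := by
    rw [Measure.addHaar_ball_of_pos volume x hr0, ENNReal.ofReal_pow (le_of_lt hr0),
      finrank_euclideanSpace_fin]
  refine ⟨U, hxU, by rwa [finrank_euclideanSpace_fin], ?_⟩
  calc ENNReal.ofReal r ^ (Module.finrank ℝ (En n) - 1) * ediam ((g ∘ f) '' (ball x r ∩ U))
      ≤ ENNReal.ofReal r ^ (n - 1) * ediam (f '' (ball x r ∩ U)) := by
        rw [finrank_euclideanSpace_fin]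
        gcongr
    _ ≤ l * c * ENNReal.ofReal r ^ n + l⁻¹ ^ (n - 1) * volume (f '' ball x r) :=
        pow_mul_le_add_of_pow_le (by omega) (ediam_image_pow_le_of_KfU_lt hn hr) hl hl'
    _ = _ := by
        simp only [Measure.add_apply, Measure.smul_apply, smul_eq_mul]
        rw [hball, imageVolume_apply hf hinj, mul_comm (ENNReal.ofReal r ^ n), ← mul_assoc,
          mul_assoc (l * c), ENNReal.inv_mul_cancel hω0 measure_ball_lt_top.ne, mul_one]

/-- The constant in the bound of `sweepMeasure` by a scaled sum of dilatation and image volume. -/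
def fineSweepConst (n : ℕ) : ℝ≥0∞ :=
  sweepConst (volume : Measure (En n)) * (1 + (volume (ball (0 : En n) 1))⁻¹)

lemma fineSweepConst_ne_top : fineSweepConst n ≠ ∞ :=
  ENNReal.mul_ne_top (sweepConst_ne_top volume) (ENNReal.add_ne_top.2
    ⟨one_ne_top, ENNReal.inv_ne_top.2 (measure_ball_pos _ _ one_pos).ne'⟩)

lemma sweepMeasure_le_of_Kfine_lt (hn : 2 ≤ n) (hf : Continuous f) (hinj : Function.Injective f)
    (hg : LipschitzWith 1 g) {e : En n} (he : ‖e‖ = 1) {s : ℝ} (hs : 0 < s) {c : ℝ≥0∞}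
    (hc : c ≠ ∞) {A : Set (En n)} (hA : ∀ x ∈ A, Kfine f x < c) {l : ℝ≥0∞} (hl : l ≠ 0)
    (hl' : l ≠ ∞) :
    sweepMeasure volume (g ∘ f) e s A ≤ fineSweepConst n * ENNReal.ofReal s *
      (l * (c * volume A) + l⁻¹ ^ (n - 1) * imageVolume f A) := by
  have := isFiniteMeasureOnCompacts_imageVolume hf hinj
  set ω := volume (ball (0 : En n) 1)
  have hω : ω⁻¹ ≠ ∞ := ENNReal.inv_ne_top.2 (measure_ball_pos _ _ one_pos).ne'
  set m := (l * c * ω⁻¹) • volume + l⁻¹ ^ (n - 1) • imageVolume f with hm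
  have : IsFiniteMeasureOnCompacts m := ⟨fun K hK => by
    simp only [hm, Measure.add_apply, Measure.smul_apply, smul_eq_mul]
    exact ENNReal.add_lt_top.2 ⟨ENNReal.mul_lt_top (by finiteness) hK.measure_lt_top,
      ENNReal.mul_lt_top (by finiteness) hK.measure_lt_top⟩⟩
  refine (sweepMeasure_le_of_eventually_fineOscillationLE he hs fun x hx =>
    eventually_fineOscillationLE_of_Kfine_lt hn hf hinj hg (hA x hx) hl hl').trans ?_
  simp only [Measure.add_apply, Measure.smul_apply, smul_eq_mul]
  calc _ = sweepConst volume * ENNReal.ofReal s * (ω⁻¹ * (l * (c * volume A)) +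
        1 * (l⁻¹ ^ (n - 1) * imageVolume f A)) := by ring
    _ ≤ sweepConst volume * ENNReal.ofReal s * ((1 + ω⁻¹) * (l * (c * volume A)) +
        (1 + ω⁻¹) * (l⁻¹ ^ (n - 1) * imageVolume f A)) := by
      gcongr
      · exact le_add_self
      · exact le_self_add
    _ = _ := by rw [fineSweepConst]; ring

lemma scaledSumBound_sweepMeasure (hn : 2 ≤ n) (hf : Continuous f)
    (hinj : Function.Injective f) (hmeas : Measurable (Kfine f)) (hg : LipschitzWith 1 g)
    {Z : Set (En n)} {S : ℕ → Set (En n)} (hZ : ∀ x ∉ Z, Kfine f x < ∞) (hZS : Z ⊆ ⋃ j, S j)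
    (hS : ∀ j, μH[(n : ℝ) - 1] (S j) < ∞) {e : En n} (he : ‖e‖ = 1) {s : ℝ} (hs : 0 < s) :
    ScaledSumBound (sweepMeasure volume (g ∘ f) e s) (dilatationVolume f) (imageVolume f) (n - 1)
      (fineSweepConst n * ENNReal.ofReal s) := by
  intro A hA l hl hl'
  set c := fineSweepConst n * ENNReal.ofReal s
  have hm {B : Set (En n)} :
      (c • (l • dilatationVolume f + l⁻¹ ^ (n - 1) • imageVolume f)) B =
        c * (l * dilatationVolume f B + l⁻¹ ^ (n - 1) * imageVolume f B) := by
    simp only [Measure.add_apply, Measure.smul_apply, smul_eq_mul]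
  rw [← hm]
  refine outerMeasure_le_of_cover _ _ (N := Z)
    (T := fun k : ℕ => Kfine f ⁻¹' Ico (k : ℝ≥0∞) (k + 1)) (fun k => hmeas measurableSet_Ico)
    ?_ hA (fun x _ => ?_) fun k B hB hBT => ?_
  · refine sweepMeasure_eq_zero_of_hausdorffMeasure volume (hg.continuous.comp hf) he hs hZS ?_
    simpa only [finrank_euclideanSpace_fin] using hS
  · by_cases hx : x ∈ Z
    · exact Or.inl hx
    · lift Kfine f x to ℝ≥0 using (hZ x hx).ne with K hK
      refine Or.inr (mem_iUnion.2 ⟨⌊K⌋₊, ?_⟩)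
      rw [mem_preimage, ← hK, mem_Ico]
      exact_mod_cast And.intro (Nat.floor_le (zero_le (a := K))) (Nat.lt_floor_add_one K)
  · rw [hm]
    refine (sweepMeasure_le_of_Kfine_lt hn hf hinj hg he hs (c := k + 1) (by simp)
      (fun x hx => (hBT hx).2) hl hl').trans ?_
    gcongr
    rw [dilatationVolume, withDensity_apply _ hB, ← setLIntegral_const]
    exact setLIntegral_mono (hmeas.add_const 1) fun x hx => add_le_add_left (hBT hx).1 1

/-- The density `(K + 1) ^ (1 - 1 / n) * J ^ (1 / n)` bounding the weak derivatives of `f`, where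
`K = K_f^fine` and `J` is the volume derivative of `f`: the Radon–Nikodym derivative below is
`J / (K + 1)`. -/
def qcDensity (f : En n → En n) (x : En n) : ℝ≥0∞ :=
  (Kfine f x + 1) * (imageVolume f).rnDeriv (dilatationVolume f) x ^ (n : ℝ)⁻¹

/-- The constant in the bound of `sweepMeasure` by the integral of `qcDensity`. -/
def qcConst (n : ℕ) : ℝ≥0∞ := fineSweepConst n * (1 + 2 ^ (n - 1))

lemma qcConst_ne_top : qcConst n ≠ ∞ :=
  ENNReal.mul_ne_top fineSweepConst_ne_top (ENNReal.add_ne_top.2 ⟨one_ne_top, by simp⟩)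

lemma measurable_qcDensity (hmeas : Measurable (Kfine f)) : Measurable (qcDensity f) :=
  (hmeas.add_const 1).mul ((Measure.measurable_rnDeriv _ _).pow_const _)

theorem sweepMeasure_le_setLIntegral_qcDensity (hn : 2 ≤ n) (hf : Continuous f)
    (hinj : Function.Injective f) (hmeas : Measurable (Kfine f)) (hK : ∀ᵐ x, Kfine f x ≠ ∞)
    (hg : LipschitzWith 1 g)
    {Z : Set (En n)} {S : ℕ → Set (En n)} (hZ : ∀ x ∉ Z, Kfine f x < ∞) (hZS : Z ⊆ ⋃ j, S j)
    (hS : ∀ j, μH[(n : ℝ) - 1] (S j) < ∞) {e : En n} (he : ‖e‖ = 1) {s : ℝ} (hs : 0 < s)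
    {A : Set (En n)} (hA : MeasurableSet A) :
    sweepMeasure volume (g ∘ f) e s A ≤
      qcConst n * ENNReal.ofReal s * ∫⁻ x in A, qcDensity f x := by
  have := isFiniteMeasureOnCompacts_imageVolume hf hinj
  have : SigmaFinite (dilatationVolume f) := SigmaFinite.withDensity_of_ne_top <| by
    filter_upwards [hK] with x hx using ENNReal.add_ne_top.2 ⟨hx, one_ne_top⟩
  have hn1 : ((n - 1 : ℕ) : ℝ) + 1 = n := by rw [Nat.cast_sub (by omega), Nat.cast_one]; ring
  have h := (scaledSumBound_sweepMeasure hn hf hinj hmeas hg hZ hZS hS he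
    hs).le_setLIntegral_rnDeriv_rpow (by omega)
    (ENNReal.mul_ne_top fineSweepConst_ne_top ENNReal.ofReal_ne_top) hA
  have hint : ∫⁻ x in A, (imageVolume f).rnDeriv (dilatationVolume f) x ^ (n : ℝ)⁻¹
      ∂dilatationVolume f = ∫⁻ x in A, qcDensity f x :=
    setLIntegral_withDensity_eq_setLIntegral_mul _ (hmeas.add_const 1)
      ((Measure.measurable_rnDeriv _ _).pow_const _) hA
  rw [hn1, hint] at h
  exact h.trans_eq (by rw [qcConst]; ring)

end FineDilatation

section QcDensity

lemma setLIntegral_mul_rnDeriv_rpow_le {X : Type*} [MeasurableSpace X] {μ ν : Measure X}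
    {W : X → ℝ≥0∞} (hW : Measurable W) {p d : ℝ} (hp : 1 ≤ p) (hpd : p < d) {C : Set X}
    (hC : MeasurableSet C) :
    ∫⁻ x in C, (W x * ν.rnDeriv (μ.withDensity W) x ^ d⁻¹) ^ p ∂μ ≤
      ν C ^ (p / d) * (∫⁻ x in C, W x ^ (p * (d - 1) / (d - p)) ∂μ) ^ ((d - p) / d) := by
  set τ := ν.rnDeriv (μ.withDensity W)
  have hτ : Measurable τ := Measure.measurable_rnDeriv _ _
  have hd : 0 < d := by linarith
  have hdp : 0 < d - p := by linarith
  have hpow (x : X) : (W x * τ x ^ d⁻¹) ^ p =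
      (W x * τ x) ^ (p / d) * (W x ^ (p * (d - 1) / (d - p))) ^ ((d - p) / d) := by
    rw [ENNReal.mul_rpow_of_nonneg _ _ (by positivity),
      ENNReal.mul_rpow_of_nonneg _ _ (by positivity),
      ← ENNReal.rpow_mul, ← ENNReal.rpow_mul, mul_right_comm, ← ENNReal.rpow_add_of_nonneg _ _
      (by positivity) (mul_nonneg (div_nonneg (mul_nonneg (by linarith) (by linarith)) hdp.le)
        (by positivity))]
    congr 2 <;> field_simp
    ring
  calc ∫⁻ x in C, (W x * τ x ^ d⁻¹) ^ p ∂μ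
      = ∫⁻ x in C, (W x * τ x) ^ (p / d) *
          (W x ^ (p * (d - 1) / (d - p))) ^ ((d - p) / d) ∂μ := by simp only [hpow]
    _ ≤ (∫⁻ x in C, W x * τ x ∂μ) ^ (p / d) *
          (∫⁻ x in C, W x ^ (p * (d - 1) / (d - p)) ∂μ) ^ ((d - p) / d) :=
        ENNReal.lintegral_mul_norm_pow_le (hW.mul hτ).aemeasurable (hW.pow_const _).aemeasurable
          (by positivity) (by positivity) (by field_simp; ring)
    _ ≤ _ := by
        gcongr
        exact (setLIntegral_withDensity_eq_setLIntegral_mul μ hW hτ hC).symm.trans_le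
          (Measure.setLIntegral_rnDeriv_le C)

variable {X : Type*} [MeasurableSpace X] {μ : Measure X} {F : X → ℝ≥0∞} {q : ℝ} {C : Set X}

lemma setLIntegral_add_one_rpow_lt_top (hq : 1 ≤ q) (hC : μ C < ∞)
    (h : ∫⁻ x in C, F x ^ q ∂μ < ∞) : ∫⁻ x in C, (F x + 1) ^ q ∂μ < ∞ := by
  refine (lintegral_mono fun x => ENNReal.rpow_add_le_mul_rpow_add_rpow _ _ hq).trans_lt ?_
  rw [lintegral_const_mul' _ _ (ENNReal.rpow_ne_top_of_nonneg (by linarith) ofNat_ne_top),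
    lintegral_add_right _ measurable_const, setLIntegral_const, ENNReal.one_rpow, one_mul]
  exact ENNReal.mul_lt_top (ENNReal.rpow_lt_top_of_nonneg (by linarith) ofNat_ne_top)
    (ENNReal.add_lt_top.2 ⟨h, hC⟩)

lemma setLIntegral_lt_top_of_rpow (hq : 1 ≤ q) (hC : μ C < ∞)
    (h : ∫⁻ x in C, F x ^ q ∂μ < ∞) : ∫⁻ x in C, F x ∂μ < ∞ := by
  have hle (a : ℝ≥0∞) : a ≤ a ^ q + 1 := by
    rcases le_total 1 a with h1 | h1
    · exact le_add_right (by simpa using ENNReal.rpow_le_rpow_of_exponent_le h1 hq)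
    · exact le_add_left h1
  refine (lintegral_mono fun x => hle (F x)).trans_lt ?_
  rw [lintegral_add_right _ measurable_const, setLIntegral_const, one_mul]
  exact ENNReal.add_lt_top.2 ⟨h, hC⟩

lemma one_le_mul_sub_one_div_sub {p d : ℝ} (hp : 1 ≤ p) (hpd : p < d) :
    1 ≤ p * (d - 1) / (d - p) := by
  rw [le_div_iff₀ (by linarith)]
  nlinarith

lemma setLIntegral_qcDensity_rpow_lt_top {f : En n → En n} (hf : Continuous f)
    (hinj : Function.Injective f) (hmeas : Measurable (Kfine f)) {p : ℝ} (hp : 1 ≤ p) (hpn : p < n)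
    {C : Set (En n)} (hC : IsCompact C)
    (hK : ∫⁻ x in C, Kfine f x ^ (p * ((n : ℝ) - 1) / ((n : ℝ) - p)) < ∞) :
    ∫⁻ x in C, qcDensity f x ^ p < ∞ := by
  have := isFiniteMeasureOnCompacts_imageVolume hf hinj
  refine (setLIntegral_mul_rnDeriv_rpow_le (hmeas.add_const 1) hp hpn hC.measurableSet).trans_lt ?_
  exact ENNReal.mul_lt_top (ENNReal.rpow_lt_top_of_nonneg (by positivity) hC.measure_lt_top.ne)
    (ENNReal.rpow_lt_top_of_nonneg (div_nonneg (sub_nonneg.2 hpn.le) n.cast_nonneg)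
      (setLIntegral_add_one_rpow_lt_top (one_le_mul_sub_one_div_sub hp hpn)
        hC.measure_lt_top hK).ne)

end QcDensity

section LayerCake

lemma lintegral_ofReal_mul_eq_lintegral_setLIntegral_lt {X : Type*} [MeasurableSpace X]
    {μ : Measure X} {w : X → ℝ≥0∞} (hw : Measurable w) {θ : X → ℝ} (hθ : Measurable θ)
    (hθ0 : ∀ x, 0 ≤ θ x) :
    ∫⁻ x, ENNReal.ofReal (θ x) * w x ∂μ =
      ∫⁻ τ in Ioi (0 : ℝ), ∫⁻ x in {x | τ < θ x}, w x ∂μ := by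
  calc ∫⁻ x, ENNReal.ofReal (θ x) * w x ∂μ = ∫⁻ x, ENNReal.ofReal (θ x) ∂μ.withDensity w := by
        rw [lintegral_withDensity_eq_lintegral_mul _ hw hθ.ennreal_ofReal]
        simp only [Pi.mul_apply, mul_comm]
    _ = ∫⁻ τ in Ioi (0 : ℝ), μ.withDensity w {x | τ < θ x} :=
        lintegral_eq_lintegral_meas_lt _ (Eventually.of_forall hθ0) hθ.aemeasurable
    _ = _ := by
        congr 1 with τ
        exact withDensity_apply _ (measurableSet_lt measurable_const hθ)

lemma lintegral_indicator_norm_add_mul_le {X : Type*} [MeasurableSpace X] {μ : Measure X}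
    {G : X → ℝ≥0∞} (hG : Measurable G) {φ : X → ℝ} (hφ : Measurable φ) {S : Set X}
    (hS : MeasurableSet S) {a : ℝ} (ha : 0 ≤ a) :
    ∫⁻ x, ENNReal.ofReal (S.indicator (fun y => ‖φ y‖ + a) x) * G x ∂μ ≤
      (∫⁻ x, ‖φ x‖ₑ * G x ∂μ) + ENNReal.ofReal a * ∫⁻ x in S, G x ∂μ := by
  rw [← lintegral_const_mul _ hG, ← lintegral_indicator hS,
    ← lintegral_add_left (f := fun x => ‖φ x‖ₑ * G x) (hφ.enorm.mul hG)]
  refine lintegral_mono fun x => ?_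
  by_cases hx : x ∈ S
  · simp only [indicator_of_mem hx]
    rw [ENNReal.ofReal_add (norm_nonneg _) ha, add_mul, ofReal_norm]
  · simp [indicator_of_notMem hx]

variable {E : Type*} [NormedAddCommGroup E] [NormedSpace ℝ E] [MeasurableSpace E] [BorelSpace E]
  {μ : Measure E} {u : E → ℝ} {G : E → ℝ≥0∞} {e : E} {C : ℝ≥0∞}

lemma setLIntegral_enorm_sub_le_sweepMeasure [SecondCountableTopology E] [SFinite μ]
    (hu : Continuous u) {s : ℝ} (hs : 0 ≤ s) {Q A : Set E} (hQ : MeasurableSet Q)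
    (hQA : ∀ x ∈ Q, ∀ σ ∈ Icc 0 s, x + σ • e ∈ A) :
    ∫⁻ x in Q, ‖u (x + s • e) - u x‖ₑ ∂μ ≤ sweepMeasure μ u e s A := by
  have hus : Continuous fun x => u (x + s • e) := by fun_prop
  calc ∫⁻ x in Q, ‖u (x + s • e) - u x‖ₑ ∂μ
      = ∫⁻ x in Q, ENNReal.ofReal (((fun x => max (u x) (u (x + s • e))) -
          fun x => min (u x) (u (x + s • e))) x) ∂μ := by
        congr 1 with x
        rw [Pi.sub_apply, max_sub_min_eq_abs, ← Real.norm_eq_abs, ofReal_norm]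
    _ = μ.prod volume (regionBetween (fun x => min (u x) (u (x + s • e)))
          (fun x => max (u x) (u (x + s • e))) Q) :=
        (volume_regionBetween_eq_lintegral (hu.min hus).measurable.aemeasurable
          (hu.max hus).measurable.aemeasurable hQ).symm
    _ ≤ μ.prod volume (sweep u e s A) := by
        refine measure_mono fun q ⟨hq, h1, h2⟩ => ?_
        have hc : ContinuousOn (fun σ : ℝ => u (q.1 + σ • e)) (uIcc 0 s) :=
          Continuous.continuousOn (by fun_prop)
        obtain ⟨σ, hσ, hσq⟩ := intermediate_value_uIcc hc
          (show q.2 ∈ uIcc _ _ by simpa [uIcc] using And.intro h1.le h2.le)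
        rw [uIcc_of_le hs] at hσ
        exact ⟨σ, hσ, hQA _ hq σ hσ, hσq⟩

lemma lintegral_mul_enorm_sub_le [SecondCountableTopology E] [SFinite μ]
    (hu : Continuous u) (hG : Measurable G) {s : ℝ} (hs : 0 ≤ s) (hC : C ≠ ∞)
    (h : ∀ A, MeasurableSet A → sweepMeasure μ u e s A ≤ C * ∫⁻ x in A, G x ∂μ) {φ ψ : E → ℝ}
    (hφ : Measurable φ) (hψ : Measurable ψ) (hφ0 : ∀ x, 0 ≤ φ x) (hψ0 : ∀ x, 0 ≤ ψ x)
    (hφψ : ∀ x, ∀ σ ∈ Icc 0 s, φ x ≤ ψ (x + σ • e)) :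
    ∫⁻ x, ENNReal.ofReal (φ x) * ‖u (x + s • e) - u x‖ₑ ∂μ ≤
      C * ∫⁻ x, ENNReal.ofReal (ψ x) * G x ∂μ := by
  have hD : Measurable fun x => ‖u (x + s • e) - u x‖ₑ :=
    (by fun_prop : Continuous fun x => u (x + s • e) - u x).measurable.enorm
  rw [lintegral_ofReal_mul_eq_lintegral_setLIntegral_lt hD hφ hφ0,
    lintegral_ofReal_mul_eq_lintegral_setLIntegral_lt hG hψ hψ0, ← lintegral_const_mul' _ _ hC]
  refine lintegral_mono fun τ => ?_
  exact (setLIntegral_enorm_sub_le_sweepMeasure hu hs (measurableSet_lt measurable_const hφ)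
    fun x (hx : τ < φ x) σ hσ => show τ < ψ (x + σ • e) from hx.trans_le (hφψ x σ hσ)).trans
    (h _ (measurableSet_lt measurable_const hψ))

lemma norm_le_indicator_cthickening {X : Type*} [PseudoMetricSpace X] {φ : X → ℝ} {Λ : ℝ≥0}
    (hφ : LipschitzWith Λ φ) {δ t : ℝ} (htδ : t ≤ δ) {x y : X} (hxy : dist x y ≤ t) :
    ‖φ x‖ ≤ (cthickening δ (tsupport φ)).indicator (fun y => ‖φ y‖ + Λ * t) y := by
  by_cases hy : y ∈ cthickening δ (tsupport φ)
  · rw [indicator_of_mem hy]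
    calc ‖φ x‖ ≤ ‖φ y‖ + dist (φ x) (φ y) := by
          rw [dist_eq_norm]
          exact norm_le_norm_add_norm_sub' _ _
      _ ≤ ‖φ y‖ + Λ * t := by
          gcongr
          exact (hφ.dist_le_mul x y).trans (by gcongr)
  · have hx : x ∉ tsupport φ := fun hx => hy <|
      mem_cthickening_of_dist_le _ x _ _ hx (by rw [dist_comm]; exact hxy.trans htδ)
    rw [image_eq_zero_of_notMem_tsupport hx, indicator_of_notMem hy, norm_zero]

end LayerCake

section IntegrationByParts

variable {E : Type*} [NormedAddCommGroup E] [NormedSpace ℝ E] [MeasurableSpace E] [BorelSpace E]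
  {μ : Measure E} {u φ : E → ℝ} {G : E → ℝ≥0∞} {e : E} {C : ℝ≥0∞}

lemma integral_slope_mul_eq [μ.IsAddRightInvariant] [IsFiniteMeasureOnCompacts μ]
    (hu : Continuous u) (hφ : Continuous φ) (hc : HasCompactSupport φ) (e : E) (t : ℝ) :
    ∫ x, (t⁻¹ • (φ (x + t • -e) - φ x)) * u x ∂μ =
      t⁻¹ * ∫ x, φ x * (u (x + t • e) - u x) ∂μ := by
  have hφu_translate : Integrable (fun x => φ x * u (x + t • e)) μ :=
    (by fun_prop : Continuous fun x => φ x * u (x + t • e)).integrable_of_hasCompactSupport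
      hc.mul_right
  have hφu : Integrable (fun x => φ x * u x) μ :=
    (by fun_prop : Continuous fun x => φ x * u x).integrable_of_hasCompactSupport hc.mul_right
  have hφ_translate_u : Integrable (fun x => φ (x - t • e) * u x) μ := by
    simpa only [sub_add_cancel] using hφu_translate.comp_sub_right (t • e)
  have htranslate : ∫ x, φ (x - t • e) * u x ∂μ = ∫ x, φ x * u (x + t • e) ∂μ := by
    simpa only [sub_add_cancel] using
      integral_sub_right_eq_self (μ := μ) (fun x => φ x * u (x + t • e)) (t • e)
  simp only [smul_eq_mul, mul_assoc, smul_neg, ← sub_eq_add_neg]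
  rw [integral_const_mul]
  simp only [sub_mul, mul_sub]
  rw [integral_sub hφ_translate_u hφu, integral_sub hφu_translate hφu, htranslate]

variable [FiniteDimensional ℝ E] [μ.IsAddHaarMeasure]

lemma enorm_integral_slope_mul_le (hu : Continuous u) (hG : Measurable G) (hC : C ≠ ∞)
    (he : ‖e‖ = 1) {t : ℝ} (ht : 0 < t) (ht1 : t ≤ 1)
    (h : ∀ A, MeasurableSet A →
      sweepMeasure μ u e t A ≤ C * ENNReal.ofReal t * ∫⁻ x in A, G x ∂μ)
    {Λ : ℝ≥0} (hφ : LipschitzWith Λ φ) (hc : HasCompactSupport φ) :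
    ‖∫ x, (t⁻¹ • (φ (x + t • -e) - φ x)) * u x ∂μ‖ₑ ≤ C * ((∫⁻ x, ‖φ x‖ₑ * G x ∂μ) +
      ENNReal.ofReal (Λ * t) * ∫⁻ x in cthickening 1 (tsupport φ), G x ∂μ) := by
  set S := cthickening 1 (tsupport φ)
  have hS : MeasurableSet S := isClosed_cthickening.measurableSet
  have hΛt : 0 ≤ (Λ : ℝ) * t := by positivity
  have hweight (x : E) (σ : ℝ) (hσ : σ ∈ Icc 0 t) :
      ‖φ x‖ ≤ S.indicator (fun y => ‖φ y‖ + Λ * t) (x + σ • e) := by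
    refine norm_le_indicator_cthickening hφ ht1 ?_
    rw [dist_self_add_right, norm_smul, he, mul_one, Real.norm_eq_abs, abs_of_nonneg hσ.1]
    exact hσ.2
  have hlayer := (lintegral_mul_enorm_sub_le hu hG ht.le (ENNReal.mul_ne_top hC
    ENNReal.ofReal_ne_top) h hφ.continuous.norm.measurable
    ((hφ.continuous.norm.measurable.add_const _).indicator hS) (fun x => norm_nonneg _)
    (indicator_nonneg fun x _ => add_nonneg (norm_nonneg _) hΛt) hweight).trans
    (mul_le_mul_right (lintegral_indicator_norm_add_mul_le hG hφ.continuous.measurable hS hΛt) _)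
  rw [integral_slope_mul_eq hu hφ.continuous hc]
  set I := (∫⁻ x, ‖φ x‖ₑ * G x ∂μ) + ENNReal.ofReal (Λ * t) * ∫⁻ x in S, G x ∂μ
  calc ‖t⁻¹ * ∫ x, φ x * (u (x + t • e) - u x) ∂μ‖ₑ
      ≤ ENNReal.ofReal t⁻¹ * ∫⁻ x, ENNReal.ofReal ‖φ x‖ * ‖u (x + t • e) - u x‖ₑ ∂μ := by
        rw [enorm_mul, Real.enorm_eq_ofReal (by positivity)]
        gcongr
        refine (enorm_integral_le_lintegral_enorm _).trans_eq ?_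
        simp only [enorm_mul, ofReal_norm]
    _ ≤ ENNReal.ofReal t⁻¹ * (C * ENNReal.ofReal t * I) := mul_le_mul_right hlayer _
    _ = (ENNReal.ofReal t⁻¹ * ENNReal.ofReal t) * (C * I) := by ring
    _ = C * I := by
        rw [← ENNReal.ofReal_mul (by positivity), inv_mul_cancel₀ ht.ne', ENNReal.ofReal_one,
          one_mul]

theorem enorm_integral_mul_fderiv_le (hu : Continuous u) (hG : Measurable G)
    (hGi : ∀ K, IsCompact K → ∫⁻ x in K, G x ∂μ < ∞) (hC : C ≠ ∞) (he : ‖e‖ = 1)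
    (h : ∀ s, 0 < s → ∀ A, MeasurableSet A →
      sweepMeasure μ u e s A ≤ C * ENNReal.ofReal s * ∫⁻ x in A, G x ∂μ)
    (hφ : ContDiff ℝ 1 φ) (hc : HasCompactSupport φ) :
    ‖∫ x, u x * fderiv ℝ φ x e ∂μ‖ₑ ≤ C * ∫⁻ x, ‖φ x‖ₑ * G x ∂μ := by
  obtain ⟨Λ, hΛ⟩ := hφ.lipschitzWith_of_hasCompactSupport hc one_ne_zero
  have heq : ‖∫ x, lineDeriv ℝ φ x (-e) * u x ∂μ‖ₑ = ‖∫ x, u x * fderiv ℝ φ x e ∂μ‖ₑ := by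
    rw [← enorm_neg, ← integral_neg]
    congr 2 with x
    rw [((hφ.differentiable one_ne_zero) x).lineDeriv_eq_fderiv, map_neg]
    ring
  rw [← heq]
  refine le_of_tendsto_of_tendsto
    (hΛ.integral_inv_smul_sub_mul_tendsto_integral_lineDeriv_mul' hc hu (-e)).enorm ?_
    (eventually_of_mem (Ioc_mem_nhdsGT zero_lt_one) fun t ht =>
      enorm_integral_slope_mul_le hu hG hC he ht.1 ht.2 (h t ht.1) hΛ hc)
  have h0 : Tendsto (fun t : ℝ => ENNReal.ofReal (Λ * t)) (𝓝[>] 0) (𝓝 0) := by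
    have : Continuous fun t : ℝ => ENNReal.ofReal (Λ * t) :=
      ENNReal.continuous_ofReal.comp (continuous_const_mul _)
    simpa using (this.tendsto 0).mono_left nhdsWithin_le_nhds
  have h1 := ENNReal.Tendsto.mul_const h0 (Or.inr
    (hGi (cthickening 1 (tsupport φ)) (IsCompact.cthickening hc)).ne)
  simpa only [zero_mul, add_zero] using
    ENNReal.Tendsto.const_mul (h1.const_add (∫⁻ x, ‖φ x‖ₑ * G x ∂μ)) (Or.inr hC)

end IntegrationByParts

section L1Duality

lemma exists_strongDual_comp_eq {V W : Type*} [AddCommGroup V] [Module ℝ V]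
    [NormedAddCommGroup W] [NormedSpace ℝ W] (ι : V →ₗ[ℝ] W) (T : V →ₗ[ℝ] ℝ) {c : ℝ} (hc : 0 ≤ c)
    (hT : ∀ v, |T v| ≤ c * ‖ι v‖) : ∃ Φ : StrongDual ℝ W, ‖Φ‖ ≤ c ∧ ∀ v, Φ (ι v) = T v := by
  obtain ⟨σ, hσ⟩ := ι.rangeRestrict.exists_rightInverse_of_surjective
    (LinearMap.range_rangeRestrict ι)
  have hισ (y : LinearMap.range ι) : ι (σ y) = y := congrArg Subtype.val (LinearMap.congr_fun hσ y)
  have hTσ (y : LinearMap.range ι) : ‖(T ∘ₗ σ) y‖ ≤ c * ‖y‖ := by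
    simpa [hισ] using hT (σ y)
  obtain ⟨Φ, hΦ, hΦnorm⟩ :=
    _root_.exists_extension_norm_eq (LinearMap.range ι) ((T ∘ₗ σ).mkContinuous c hTσ)
  refine ⟨Φ, hΦnorm.trans_le (LinearMap.mkContinuous_norm_le _ hc hTσ), fun v => ?_⟩
  have hv := hΦ ⟨ι v, LinearMap.mem_range_self ι v⟩
  have hzero : T (σ ⟨ι v, LinearMap.mem_range_self ι v⟩ - v) = 0 := by
    refine abs_nonpos_iff.1 ((hT _).trans_eq ?_)
    rw [map_sub ι, hισ, sub_self, norm_zero, mul_zero]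
  rw [map_sub, sub_eq_zero] at hzero
  exact hv.trans hzero

variable {X : Type*} [MeasurableSpace X] {ν : Measure X}

lemma exists_forall_apply_indicatorConstLp_eq [IsFiniteMeasure ν] (Φ : StrongDual ℝ (Lp ℝ 1 ν)) :
    ∃ k : X → ℝ, Measurable k ∧ Integrable k ν ∧ ∀ (s : Set X) (hs : MeasurableSet s),
      Φ (indicatorConstLp 1 hs (measure_ne_top ν s) 1) = ∫ x in s, k x ∂ν := by
  set J : Lp ℝ 2 ν →L[ℝ] Lp ℝ 1 ν :=
    (ContinuousLinearMap.mul ℝ ℝ).holderL ν 2 2 1 (Lp.const 2 ν 1)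
  set k := (InnerProductSpace.toDual ℝ (Lp ℝ 2 ν)).symm (Φ ∘L J)
  refine ⟨k, (Lp.stronglyMeasurable k).measurable, (Lp.memLp k).integrable one_le_two,
    fun s hs => ?_⟩
  have hJ : J (indicatorConstLp 2 hs (measure_ne_top ν s) 1) =
      indicatorConstLp 1 hs (measure_ne_top ν s) 1 := by
    refine Lp.ext ?_
    filter_upwards [(ContinuousLinearMap.mul ℝ ℝ).coeFn_holder (r := 1) (Lp.const 2 ν (1 : ℝ))
      (indicatorConstLp 2 hs (measure_ne_top ν s) 1), Lp.coeFn_const 2 ν (1 : ℝ),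
      indicatorConstLp_coeFn (p := 2) (hs := hs) (hμs := measure_ne_top ν s) (c := (1 : ℝ)),
      indicatorConstLp_coeFn (p := 1) (hs := hs) (hμs := measure_ne_top ν s) (c := (1 : ℝ))]
      with x h1 h2 h3 h4
    rw [h4, ← h3]
    exact h1.trans (by rw [h2]; simp)
  rw [← hJ, ← L2.inner_indicatorConstLp_one hs (measure_ne_top ν s) k, real_inner_comm,
    InnerProductSpace.toDual_symm_apply, ContinuousLinearMap.comp_apply]

lemma ae_abs_le_of_forall_abs_setIntegral_le [IsFiniteMeasure ν] {k : X → ℝ}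
    (hk : Integrable k ν) {c : ℝ}
    (h : ∀ s, MeasurableSet s → |∫ x in s, k x ∂ν| ≤ c * ν.real s) : ∀ᵐ x ∂ν, |k x| ≤ c := by
  have hconst (a : ℝ) (s : Set X) : ∫ _ in s, a ∂ν = a * ν.real s := by
    rw [setIntegral_const, smul_eq_mul, mul_comm]
  have hupper : k ≤ᵐ[ν] fun _ => c :=
    ae_le_of_forall_setIntegral_le hk (integrable_const c) fun s hs _ => by
      rw [hconst]
      exact (abs_le.1 (h s hs)).2
  have hlower : (fun _ => -c) ≤ᵐ[ν] k :=
    ae_le_of_forall_setIntegral_le (integrable_const (-c)) hk fun s hs _ => by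
      rw [hconst, neg_mul]
      exact (abs_le.1 (h s hs)).1
  filter_upwards [hupper, hlower] with x h1 h2 using abs_le.2 ⟨h2, h1⟩

theorem exists_ae_abs_le_norm_forall_eq_integral_mul [IsFiniteMeasure ν]
    (Φ : StrongDual ℝ (Lp ℝ 1 ν)) :
    ∃ h : X → ℝ, Measurable h ∧ (∀ᵐ x ∂ν, |h x| ≤ ‖Φ‖) ∧ ∀ φ, Φ φ = ∫ x, φ x * h x ∂ν := by
  obtain ⟨h, hm, hi, hΦ⟩ := exists_forall_apply_indicatorConstLp_eq Φ
  have hb : ∀ᵐ x ∂ν, |h x| ≤ ‖Φ‖ := ae_abs_le_of_forall_abs_setIntegral_le hi fun s hs => by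
    rw [← hΦ s hs]
    refine (Φ.le_opNorm _).trans_eq ?_
    rw [norm_indicatorConstLp one_ne_zero one_ne_top]
    simp
  set Ψ : StrongDual ℝ (Lp ℝ 1 ν) :=
    (ContinuousLinearMap.mul ℝ ℝ).flip.lpPairing ν ∞ 1 ((memLp_top_of_bound hm.aestronglyMeasurable
      ‖Φ‖ hb).toLp h)
  have hΨ (φ : Lp ℝ 1 ν) : Ψ φ = ∫ x, φ x * h x ∂ν := by
    refine (ContinuousLinearMap.lpPairing_eq_integral _ _ _).trans (integral_congr_ae ?_)
    filter_upwards [MemLp.coeFn_toLp (memLp_top_of_bound hm.aestronglyMeasurable ‖Φ‖ hb)] with x hx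
    simp [hx, mul_comm]
  refine ⟨h, hm, hb, fun φ => (?_ : Φ φ = Ψ φ).trans (hΨ φ)⟩
  induction φ using Lp.induction one_ne_top with
  | @indicatorConst c s hs hμs =>
    have hsmul : indicatorConstLp 1 hs hμs.ne c = c • indicatorConstLp 1 hs hμs.ne (1 : ℝ) := by
      refine (MemLp.toLp_congr _ _ (ae_of_all _ fun x => ?_)).trans (MemLp.toLp_const_smul _ _)
      by_cases hx : x ∈ s <;> simp [hx]
    rw [Lp.simpleFunc.coe_indicatorConst, hsmul, map_smul, map_smul, hΦ, hΨ,
      ← integral_indicator hs]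
    congr 1
    refine integral_congr_ae ?_
    filter_upwards [indicatorConstLp_coeFn (p := 1) (hs := hs) (hμs := hμs.ne) (c := (1 : ℝ))]
      with x hx
    by_cases hxs : x ∈ s <;> simp [hx, hxs]
  | add hf hg _ h1 h2 => rw [map_add, map_add, h1, h2]
  | isClosed => exact isClosed_eq Φ.continuous Ψ.continuous

lemma exists_linearMap_coeFn_ae_eq {V F : Type*} [AddCommGroup V] [Module ℝ V]
    [NormedAddCommGroup F] [NormedSpace ℝ F] {q : ℝ≥0∞} (ι : V →ₗ[ℝ] X → F)
    (hι : ∀ v, MemLp (ι v) q ν) : ∃ κ : V →ₗ[ℝ] Lp F q ν, ∀ v, κ v =ᵐ[ν] ι v := by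
  refine ⟨{ toFun := fun v => (hι v).toLp _, map_add' := fun v v' => ?_,
            map_smul' := fun c v => ?_ }, fun v => (hι v).coeFn_toLp⟩
  · simp only [map_add]
    exact MemLp.toLp_add _ _
  · simp only [map_smul, RingHom.id_apply]
    exact MemLp.toLp_const_smul _ _

theorem exists_ae_abs_le_one_forall_eq_integral_mul [SigmaFinite ν] {V : Type*} [AddCommGroup V]
    [Module ℝ V] (ι : V →ₗ[ℝ] X → ℝ) (hι : ∀ v, Integrable (ι v) ν) (T : V →ₗ[ℝ] ℝ)
    (hT : ∀ v, |T v| ≤ ∫ x, |ι v x| ∂ν) :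
    ∃ h : X → ℝ, Measurable h ∧ (∀ᵐ x ∂ν, |h x| ≤ 1) ∧ ∀ v, T v = ∫ x, ι v x * h x ∂ν := by
  obtain ⟨w, hw0, hw, hwi⟩ := exists_pos_lintegral_lt_of_sigmaFinite ν one_ne_zero
  have hfin : IsFiniteMeasure (ν.withDensity fun x => w x) :=
    isFiniteMeasure_withDensity (hwi.trans one_lt_top).ne
  have hcancel (v : V) (x : X) : w x • ((w x : ℝ)⁻¹ * ι v x) = ι v x := by
    rw [NNReal.smul_def, smul_eq_mul, mul_inv_cancel_left₀ (NNReal.coe_pos.2 (hw0 x)).ne']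
  have hint (v : V) : MemLp (fun x => (w x : ℝ)⁻¹ * ι v x) 1 (ν.withDensity fun x => w x) := by
    rw [memLp_one_iff_integrable, integrable_withDensity_iff_integrable_smul hw]
    simpa only [hcancel] using hι v
  obtain ⟨κ, hκ'⟩ := exists_linearMap_coeFn_ae_eq
    (LinearMap.mulLeft ℝ (fun x => (w x : ℝ)⁻¹) ∘ₗ ι) hint
  have hκ (v : V) : κ v =ᵐ[ν.withDensity fun x => w x] fun x => (w x : ℝ)⁻¹ * ι v x := hκ' v
  have hnorm (v : V) : ∫ x, |ι v x| ∂ν = 1 * ‖κ v‖ := by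
    have hκn : (fun x => ‖κ v x‖) =ᵐ[ν.withDensity fun x => w x] fun x => ‖(w x : ℝ)⁻¹ * ι v x‖ :=
      EventuallyEq.fun_comp (hκ v) norm
    rw [one_mul, L1.norm_eq_integral_norm, integral_congr_ae hκn,
      integral_withDensity_eq_integral_smul hw]
    refine integral_congr_ae (ae_of_all _ fun x => ?_)
    calc |ι v x| = |w x • ((w x : ℝ)⁻¹ * ι v x)| := by rw [hcancel]
      _ = w x • ‖(w x : ℝ)⁻¹ * ι v x‖ := by
        rw [NNReal.smul_def, NNReal.smul_def, smul_eq_mul, smul_eq_mul, abs_mul, NNReal.abs_eq,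
          Real.norm_eq_abs]
  obtain ⟨Φ, hΦ1, hΦ⟩ := exists_strongDual_comp_eq κ T zero_le_one
    fun v => (hT v).trans_eq (hnorm v)
  obtain ⟨h, hm, hb, hΦh⟩ := exists_ae_abs_le_norm_forall_eq_integral_mul Φ
  refine ⟨h, hm, ?_, fun v => ?_⟩
  · rw [ae_withDensity_iff hw.coe_nnreal_ennreal] at hb
    filter_upwards [hb] with x hx
    exact (hx (by simpa using (hw0 x).ne')).trans hΦ1
  · rw [← hΦ, hΦh, integral_congr_ae (EventuallyEq.fun_mul (hκ v) .rfl),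
      integral_withDensity_eq_integral_smul hw]
    simp only [← smul_mul_assoc, hcancel]

theorem exists_ae_enorm_le_forall_eq_integral_mul {μ : Measure X} [SigmaFinite μ] {V : Type*}
    [AddCommGroup V] [Module ℝ V] (ι : V →ₗ[ℝ] X → ℝ) (hι : ∀ v, Measurable (ι v)) (T : V →ₗ[ℝ] ℝ)
    {Γ : X → ℝ≥0∞} (hΓ : Measurable Γ) (hΓ_top : ∀ᵐ x ∂μ, Γ x < ∞)
    (hfin : ∀ v, ∫⁻ x, ‖ι v x‖ₑ * Γ x ∂μ < ∞) (hT : ∀ v, ‖T v‖ₑ ≤ ∫⁻ x, ‖ι v x‖ₑ * Γ x ∂μ) :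
    ∃ g : X → ℝ, Measurable g ∧ (∀ᵐ x ∂μ, ‖g x‖ₑ ≤ Γ x) ∧ ∀ v, T v = ∫ x, ι v x * g x ∂μ := by
  have hdens (v : V) : ∫⁻ x, ‖ι v x‖ₑ ∂μ.withDensity Γ = ∫⁻ x, ‖ι v x‖ₑ * Γ x ∂μ := by
    rw [lintegral_withDensity_eq_lintegral_mul _ hΓ (hι v).enorm]
    simp only [Pi.mul_apply, mul_comm]
  have hint (v : V) : Integrable (ι v) (μ.withDensity Γ) :=
    ⟨(hι v).aestronglyMeasurable, (hdens v).trans_lt (hfin v)⟩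
  have : SigmaFinite (μ.withDensity Γ) := SigmaFinite.withDensity_of_ne_top
    (hΓ_top.mono fun _ hx => hx.ne)
  obtain ⟨h, hm, hh, hTh⟩ := exists_ae_abs_le_one_forall_eq_integral_mul ι hint T fun v => by
    refine (ENNReal.ofReal_le_ofReal_iff (integral_nonneg fun x => abs_nonneg _)).1 ?_
    simp only [← Real.norm_eq_abs]
    rw [ofReal_integral_norm_eq_lintegral_enorm (hint v), hdens, ofReal_norm]
    exact hT v
  refine ⟨fun x => (Γ x).toReal * h x, hΓ.ennreal_toReal.mul hm, ?_, fun v => ?_⟩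
  · rw [ae_withDensity_iff hΓ] at hh
    filter_upwards [hh, hΓ_top] with x hx htop
    rcases eq_or_ne (Γ x) 0 with h0 | h0
    · simp [h0]
    · calc ‖(Γ x).toReal * h x‖ₑ
        _ = Γ x * ‖h x‖ₑ := by
          rw [enorm_mul, Real.enorm_of_nonneg toReal_nonneg, ofReal_toReal htop.ne]
        _ ≤ Γ x * 1 := by
          gcongr
          exact (ofReal_norm _).symm.trans_le (ofReal_le_one.2 (hx h0))
        _ = Γ x := mul_one _
  · rw [hTh, integral_withDensity_eq_integral_toReal_smul hΓ hΓ_top]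
    simp only [smul_eq_mul, mul_left_comm]

end L1Duality

section WeakDirectionalDerivative

lemma ae_lt_top_of_forall_isCompact {X : Type*} [TopologicalSpace X] [SigmaCompactSpace X]
    [MeasurableSpace X] {μ : Measure X} {Γ : X → ℝ≥0∞} (hΓ : Measurable Γ)
    (hΓi : ∀ K, IsCompact K → ∫⁻ x in K, Γ x ∂μ < ∞) : ∀ᵐ x ∂μ, Γ x < ∞ := by
  rw [← Measure.restrict_univ (μ := μ), ← iUnion_compactCovering, ae_restrict_iUnion_iff]
  exact fun k => ae_lt_top hΓ (hΓi _ (isCompact_compactCovering X k)).ne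

variable {E : Type*} [NormedAddCommGroup E] [NormedSpace ℝ E] [MeasurableSpace E]
  {μ : Measure E} {φ u : E → ℝ}

lemma lintegral_enorm_mul_lt_top {X : Type*} [TopologicalSpace X] [MeasurableSpace X]
    {μ : Measure X} {φ : X → ℝ} {Γ : X → ℝ≥0∞} (hΓ : Measurable Γ)
    (hΓi : ∀ K, IsCompact K → ∫⁻ x in K, Γ x ∂μ < ∞) (hφ : Continuous φ)
    (hc : HasCompactSupport φ) : ∫⁻ x, ‖φ x‖ₑ * Γ x ∂μ < ∞ := by
  obtain ⟨b, hb⟩ := hφ.bounded_above_of_compact_support hc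
  calc ∫⁻ x, ‖φ x‖ₑ * Γ x ∂μ = ∫⁻ x in tsupport φ, ‖φ x‖ₑ * Γ x ∂μ := by
        refine (setLIntegral_eq_of_support_subset
          fun x hx => subset_tsupport φ fun h0 => hx ?_).symm
        simp [h0]
    _ ≤ ∫⁻ x in tsupport φ, ENNReal.ofReal b * Γ x ∂μ := by
        gcongr with x
        exact (ofReal_norm _).symm.trans_le (ENNReal.ofReal_le_ofReal (hb x))
    _ = ENNReal.ofReal b * ∫⁻ x in tsupport φ, Γ x ∂μ := lintegral_const_mul _ hΓ
    _ < ∞ := ENNReal.mul_lt_top ofReal_lt_top (hΓi _ hc)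

lemma integrable_mul_fderiv [OpensMeasurableSpace E] (hu : LocallyIntegrable u μ)
    (hφ : ContDiff ℝ 1 φ) (hc : HasCompactSupport φ) (v : E) :
    Integrable (fun x => u x * fderiv ℝ φ x v) μ := by
  simpa only [smul_eq_mul, mul_comm] using hu.integrable_smul_left_of_hasCompactSupport
    ((hφ.continuous_fderiv one_ne_zero).clm_apply continuous_const) (hc.fderiv_apply (𝕜 := ℝ) v)

open scoped Distributions in
lemma exists_linearMap_integral_mul_fderiv [OpensMeasurableSpace E] (hu : LocallyIntegrable u μ)
    (e : E) : ∃ T : 𝓓^{1}((⊤ : TopologicalSpace.Opens E), ℝ) →ₗ[ℝ] ℝ,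
      ∀ φ, T φ = ∫ x, u x * fderiv ℝ φ x e ∂μ := by
  have hφ1 (φ : 𝓓^{1}((⊤ : TopologicalSpace.Opens E), ℝ)) : ContDiff ℝ 1 φ := mod_cast φ.contDiff
  refine ⟨(TestFunction.integralAgainstBilinCLM (n := 0) (ContinuousLinearMap.mul ℝ ℝ) μ u ∘L
    TestFunction.lineDerivCLM ℝ e).toLinearMap, fun φ => ?_⟩
  refine (TestFunction.integralAgainstBilinCLM_eq_integral (hu.locallyIntegrableOn _)).trans ?_
  refine integral_congr_ae (ae_of_all _ fun x => ?_)
  have hderiv : TestFunction.lineDerivCLM (k := 0) ℝ e φ x = fderiv ℝ φ x e :=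
    (TestFunction.lineDerivCLM_apply_of_le (zero_add (1 : ℕ∞)).le).trans
      ((hφ1 φ).differentiable one_ne_zero x).lineDeriv_eq_fderiv
  exact (congrArg (· * u x) hderiv).trans (mul_comm _ _)

open scoped Distributions in
theorem exists_weak_directional_derivative [OpensMeasurableSpace E]
    [FiniteDimensional ℝ E] [SigmaFinite μ] (hu : LocallyIntegrable u μ) (e : E) {Γ : E → ℝ≥0∞}
    (hΓ : Measurable Γ) (hΓi : ∀ K, IsCompact K → ∫⁻ x in K, Γ x ∂μ < ∞)
    (h : ∀ φ : E → ℝ, ContDiff ℝ 1 φ → HasCompactSupport φ →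
      ‖∫ x, u x * fderiv ℝ φ x e ∂μ‖ₑ ≤ ∫⁻ x, ‖φ x‖ₑ * Γ x ∂μ) :
    ∃ g : E → ℝ, Measurable g ∧ (∀ᵐ x ∂μ, ‖g x‖ₑ ≤ Γ x) ∧
      ∀ φ : E → ℝ, ContDiff ℝ 1 φ → HasCompactSupport φ →
        ∫ x, u x * fderiv ℝ φ x e ∂μ = -∫ x, φ x * g x ∂μ := by
  have : ProperSpace E := FiniteDimensional.proper ℝ E
  have hφ1 (φ : 𝓓^{1}((⊤ : TopologicalSpace.Opens E), ℝ)) : ContDiff ℝ 1 φ := mod_cast φ.contDiff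
  have hfin (φ : 𝓓^{1}((⊤ : TopologicalSpace.Opens E), ℝ)) : ∫⁻ x, ‖φ x‖ₑ * Γ x ∂μ < ∞ :=
    lintegral_enorm_mul_lt_top hΓ hΓi φ.continuous φ.hasCompactSupport
  obtain ⟨T, hT⟩ := exists_linearMap_integral_mul_fderiv hu e
  obtain ⟨g, hgm, hgΓ, hg⟩ := exists_ae_enorm_le_forall_eq_integral_mul
    ({ FunLike.coeAddMonoidHom _ _ _ with
      map_smul' := FunLike.coe_smul } : 𝓓^{1}((⊤ : TopologicalSpace.Opens E), ℝ) →ₗ[ℝ] E → ℝ)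
    (fun φ => φ.continuous.measurable) (-T) hΓ (ae_lt_top_of_forall_isCompact hΓ hΓi) hfin
    fun φ => by
      rw [LinearMap.neg_apply, enorm_neg, hT]
      exact h φ (hφ1 φ) φ.hasCompactSupport
  refine ⟨g, hgm, hgΓ, fun φ hφ hc => neg_eq_iff_eq_neg.1 ?_⟩
  simpa [hT] using! hg ⟨φ, mod_cast hφ, hc, subset_univ _⟩

end WeakDirectionalDerivative

section WeakGradient

lemma memLp_toEuclideanCLM {ι 𝕜 X : Type*} [Fintype ι] [DecidableEq ι] [RCLike 𝕜]
    [MeasurableSpace X] {μ : Measure X} {q : ℝ≥0∞} {A : X → Matrix ι ι 𝕜}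
    (hA : ∀ i j, MemLp (fun x => A x i j) q μ) :
    MemLp (fun x => Matrix.toEuclideanCLM (𝕜 := 𝕜) (A x)) q μ := by
  have hentries : MemLp (fun x i j => A x i j) q μ :=
    MemLp.of_eval fun i => MemLp.of_eval fun j => hA i j
  exact ((Matrix.toEuclideanCLM (n := ι) (𝕜 := 𝕜)).toAlgEquiv.toLinearMap ∘ₗ
    (Matrix.ofLinearEquiv 𝕜).toLinearMap).toContinuousLinearMap.comp_memLp' hentries

lemma integral_mul_fderiv_eq_of_single {u φ : En n → ℝ} (hu : LocallyIntegrable u)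
    {G : Fin n → En n → ℝ} (hG : ∀ j, LocallyIntegrable (G j)) (hφ : ContDiff ℝ 1 φ)
    (hc : HasCompactSupport φ)
    (h : ∀ j, ∫ x, u x * fderiv ℝ φ x (EuclideanSpace.single j 1) = -∫ x, φ x * G j x)
    (v : En n) : ∫ x, u x * fderiv ℝ φ x v = -∫ x, φ x * ∑ j, G j x * v j := by
  have hlin (x : En n) : fderiv ℝ φ x v = ∑ j, fderiv ℝ φ x (EuclideanSpace.single j 1) * v j := by
    conv_lhs => rw [← (EuclideanSpace.basisFun (Fin n) ℝ).sum_repr v]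
    simp [map_sum, mul_comm]
  have hφG (j : Fin n) : Integrable fun x => φ x * G j x :=
    (hG j).integrable_smul_left_of_hasCompactSupport hφ.continuous hc
  calc ∫ x, u x * fderiv ℝ φ x v
      = ∑ j, (∫ x, u x * fderiv ℝ φ x (EuclideanSpace.single j 1)) * v j := by
        simp only [hlin, Finset.mul_sum, ← mul_assoc]
        rw [integral_finsetSum _ fun j _ => (integrable_mul_fderiv hu hφ hc _).mul_const _]
        simp only [integral_mul_const]
    _ = -∑ j, (∫ x, φ x * G j x) * v j := by simp only [h, neg_mul, Finset.sum_neg_distrib]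
    _ = -∫ x, φ x * ∑ j, G j x * v j := by
        simp only [Finset.mul_sum, ← mul_assoc]
        rw [integral_finsetSum _ fun j _ => (hφG j).mul_const _]
        simp only [integral_mul_const]

theorem hasWeakGradOn_univ_of_partial {f : En n → En n} (hf : LocallyIntegrable f)
    {A : En n → Matrix (Fin n) (Fin n) ℝ} (hA : ∀ i j, LocallyIntegrable fun x => A x i j)
    (h : ∀ i j (φ : En n → ℝ), ContDiff ℝ 1 φ → HasCompactSupport φ →
      ∫ x, f x i * fderiv ℝ φ x (EuclideanSpace.single j 1) = -∫ x, φ x * A x i j) :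
    HasWeakGradOn f (fun x => Matrix.toEuclideanCLM (𝕜 := ℝ) (A x)) univ := by
  intro φ hφ hc _ v
  have hfi (i : Fin n) : LocallyIntegrable fun x => f x i := fun x =>
    (EuclideanSpace.proj (𝕜 := ℝ) i : En n →L[ℝ] ℝ).integrableAtFilter_comp (hf x)
  have hfφ : Integrable fun x => fderiv ℝ φ x v • f x :=
    hf.integrable_smul_left_of_hasCompactSupport
      ((hφ.continuous_fderiv one_ne_zero).clm_apply continuous_const) (hc.fderiv_apply (𝕜 := ℝ) v)
  have hAφ : Integrable fun x => φ x • Matrix.toEuclideanCLM (𝕜 := ℝ) (A x) v := by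
    have hentries : MemLp (fun x => Matrix.toEuclideanCLM (𝕜 := ℝ) (φ x • A x)) 1 :=
      memLp_toEuclideanCLM fun i j => memLp_one_iff_integrable.2 <|
        (hA i j).integrable_smul_left_of_hasCompactSupport hφ.continuous hc
    simpa only [map_smul, smul_apply] using
      (memLp_one_iff_integrable.1 hentries).apply_continuousLinearMap v
  have hcoord (i : Fin n) (x : En n) :
      Matrix.toEuclideanCLM (𝕜 := ℝ) (A x) v i = ∑ j, A x i j * v j := rfl
  simp only [Measure.restrict_univ]
  ext i
  have hleft := (EuclideanSpace.proj (𝕜 := ℝ) i : En n →L[ℝ] ℝ).integral_comp_comm hfφ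
  have hright := (EuclideanSpace.proj (𝕜 := ℝ) i : En n →L[ℝ] ℝ).integral_comp_comm hAφ
  simp only [PiLp.proj_apply, PiLp.smul_apply, smul_eq_mul, hcoord] at hleft hright
  rw [PiLp.neg_apply, ← hleft, ← hright,
    ← integral_mul_fderiv_eq_of_single (hfi i) (hA i) hφ hc (fun j => h i j φ hφ hc) v]
  simp only [mul_comm]

end WeakGradient

section SobolevRegularity

lemma memLp_ofReal_of_enorm_le {X F : Type*} [MeasurableSpace X] [NormedAddCommGroup F]
    {μ : Measure X} {g : X → F} {Γ : X → ℝ≥0∞} {C : ℝ≥0∞} {p : ℝ} (hp : 0 < p)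
    (hg : AEStronglyMeasurable g μ) (hC : C ≠ ∞) (hgΓ : ∀ᵐ x ∂μ, ‖g x‖ₑ ≤ C * Γ x)
    (hΓ : ∫⁻ x, Γ x ^ p ∂μ < ∞) : MemLp g (ENNReal.ofReal p) μ := by
  refine ⟨hg, ?_⟩
  rw [eLpNorm_lt_top_iff_lintegral_rpow_enorm_lt_top (by simpa using hp) ofReal_ne_top,
    toReal_ofReal hp.le]
  calc ∫⁻ x, ‖g x‖ₑ ^ p ∂μ ≤ ∫⁻ x, C ^ p * Γ x ^ p ∂μ := by
        refine lintegral_mono_ae (hgΓ.mono fun x hx => ?_)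
        rw [← ENNReal.mul_rpow_of_nonneg _ _ hp.le]
        exact ENNReal.rpow_le_rpow hx hp.le
    _ = C ^ p * ∫⁻ x, Γ x ^ p ∂μ :=
        lintegral_const_mul' _ _ (ENNReal.rpow_ne_top_of_nonneg hp.le hC)
    _ < ∞ := ENNReal.mul_lt_top (ENNReal.rpow_lt_top_of_nonneg hp.le hC) hΓ

variable {f : En n → En n} {p : ℝ}

lemma ae_Kfine_ne_top (hmeas : Measurable (Kfine f)) (hp : 1 ≤ p) (hpn : p < n)
    (hloc : ∀ C : Set (En n), IsCompact C →
      ∫⁻ x in C, Kfine f x ^ (p * ((n : ℝ) - 1) / ((n : ℝ) - p)) < ∞) :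
    ∀ᵐ x, Kfine f x ≠ ∞ := by
  refine (ae_lt_top_of_forall_isCompact hmeas fun C hC => ?_).mono fun x hx => hx.ne
  exact setLIntegral_lt_top_of_rpow (one_le_mul_sub_one_div_sub hp hpn) hC.measure_lt_top
    (hloc C hC)

lemma exists_partial_derivative_le_qcDensity (hn : 2 ≤ n) (hf : Continuous f)
    (hinj : Function.Injective f) (hmeas : Measurable (Kfine f)) (hK : ∀ᵐ x, Kfine f x ≠ ∞)
    (hD : ∀ C, IsCompact C → ∫⁻ x in C, qcDensity f x < ∞) {Z : Set (En n)} {S : ℕ → Set (En n)}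
    (hZ : ∀ x ∉ Z, Kfine f x < ∞) (hZS : Z ⊆ ⋃ j, S j) (hS : ∀ j, μH[(n : ℝ) - 1] (S j) < ∞)
    (i j : Fin n) :
    ∃ g : En n → ℝ, Measurable g ∧ (∀ᵐ x, ‖g x‖ₑ ≤ qcConst n * qcDensity f x) ∧
      ∀ φ : En n → ℝ, ContDiff ℝ 1 φ → HasCompactSupport φ →
        ∫ x, f x i * fderiv ℝ φ x (EuclideanSpace.single j 1) = -∫ x, φ x * g x := by
  have hDm := measurable_qcDensity hmeas
  have he : ‖EuclideanSpace.single j (1 : ℝ)‖ = 1 := by simp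
  have hcoord : LipschitzWith 1 fun y : En n => y i :=
    LipschitzWith.of_dist_le_mul fun y z => by
      simpa [dist_eq_norm] using PiLp.norm_apply_le (y - z) i
  have hu : Continuous fun x => f x i := hcoord.continuous.comp hf
  refine exists_weak_directional_derivative hu.locallyIntegrable _ (hDm.const_mul _)
    (fun C hC => ?_) fun φ hφ hc => ?_
  · rw [lintegral_const_mul _ hDm]
    exact ENNReal.mul_lt_top qcConst_ne_top.lt_top (hD C hC)
  · refine (enorm_integral_mul_fderiv_le hu hDm hD qcConst_ne_top he (fun s hs A hA =>
      sweepMeasure_le_setLIntegral_qcDensity hn hf hinj hmeas hK hcoord hZ hZS hS he hs hA)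
      hφ hc).trans_eq ?_
    rw [← lintegral_const_mul' _ _ qcConst_ne_top]
    simp only [mul_left_comm]

theorem finely_qc_sobolev_regularity_general (hf : Continuous f) (hinj : Function.Injective f)
    (hp : 1 ≤ p) (hpn : p < n) (hmeas : Measurable (Kfine f))
    (hloc : ∀ C : Set (En n), IsCompact C →
      ∫⁻ x in C, Kfine f x ^ (p * ((n : ℝ) - 1) / ((n : ℝ) - p)) < ∞)
    {E : Set (En n)} (hE : ∀ x ∉ E, Kfine f x < ∞)
    (hsig : ∃ Es : ℕ → Set (En n), E ⊆ ⋃ j, Es j ∧ ∀ j, μH[(n : ℝ) - 1] (Es j) < ∞) :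
    ∃ g : En n → (En n →L[ℝ] En n),
      HasWeakGradOn f g univ ∧
      LocallyIntegrable f ∧
      LocallyIntegrable (fun x => ‖g x‖ ^ p) := by
  have hp0 : 0 < p := by linarith
  have hn : 2 ≤ n := by exact_mod_cast (hp.trans_lt hpn : (1 : ℝ) < n)
  obtain ⟨Es, hEs, hfin⟩ := hsig
  have hDp (C : Set (En n)) (hC : IsCompact C) : ∫⁻ x in C, qcDensity f x ^ p < ∞ :=
    setLIntegral_qcDensity_rpow_lt_top hf hinj hmeas hp hpn hC (hloc C hC)
  choose G hGm hGle hGpart using exists_partial_derivative_le_qcDensity hn hf hinj hmeas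
    (ae_Kfine_ne_top hmeas hp hpn hloc)
    (fun C hC => setLIntegral_lt_top_of_rpow hp hC.measure_lt_top (hDp C hC)) hE hEs hfin
  have hGp (C : Set (En n)) (hC : IsCompact C) (i j : Fin n) :
      MemLp (G i j) (ENNReal.ofReal p) (volume.restrict C) :=
    memLp_ofReal_of_enorm_le hp0 (hGm i j).aestronglyMeasurable qcConst_ne_top
      (ae_restrict_of_ae (hGle i j)) (hDp C hC)
  have hGloc (i j : Fin n) : LocallyIntegrable (G i j) := locallyIntegrable_iff.2 fun C hC =>
    have : IsFiniteMeasure (volume.restrict C) := isFiniteMeasure_restrict.2 hC.measure_ne_top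
    (hGp C hC i j).integrable (one_le_ofReal.2 hp)
  refine ⟨fun x => Matrix.toEuclideanCLM (𝕜 := ℝ) (Matrix.of fun i j => G i j x),
    hasWeakGradOn_univ_of_partial hf.locallyIntegrable hGloc hGpart, hf.locallyIntegrable,
    locallyIntegrable_iff.2 fun C hC => ?_⟩
  simpa only [toReal_ofReal hp0.le, IntegrableOn] using
    (memLp_toEuclideanCLM (A := fun x => Matrix.of fun i j => G i j x) (hGp C hC)
      ).integrable_norm_rpow (by simpa using hp0) ofReal_ne_top

end SobolevRegularity

/-- A homeomorphism `f : ℝⁿ → ℝⁿ`, `1 ≤ p < n`, with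
`K^fine_f ∈ L^{p*(n-1)/n}_loc = L^{p(n-1)/(n-p)}_loc` and `K^fine_f < ∞` outside a set of
σ-finite `ℋ^{n-1}`-measure, belongs to `W^{1,p}_loc(ℝⁿ;ℝⁿ)`. -/
theorem finely_qc_sobolev_regularity (hn : 2 ≤ n) (f : En n → En n) (hf : IsHomeomorph f)
    (p : ℝ) (hp : 1 ≤ p) (hpn : p < n)
    (hmeas : Measurable fun x => Kfine f x)
    (hloc : ∀ C : Set (En n), IsCompact C →
      ∫⁻ x in C, Kfine f x ^ (p * ((n : ℝ) - 1) / ((n : ℝ) - p)) < ∞)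
    (E : Set (En n)) (hE : ∀ x ∉ E, Kfine f x < ∞)
    (hsig : ∃ Es : ℕ → Set (En n), E ⊆ ⋃ j, Es j ∧ ∀ j, μH[(n : ℝ) - 1] (Es j) < ∞) :
    ∃ g : En n → (En n →L[ℝ] En n),
      HasWeakGradOn f g univ ∧
      LocallyIntegrable f ∧
      LocallyIntegrable (fun x => ‖g x‖ ^ p) :=
  finely_qc_sobolev_regularity_general hf.continuous hf.injective hp hpn hmeas hloc hE hsig

end
end

section
/- Suppose N ⊂ ℝ^n is a Borel set such that liminf_{r→0} cap₁(N ∩ B(x,r))/r^{n-1} < ω_{n-1}/(2√2)^{n-1} for every x ∈ N. Then N is purely ℋ^{n-1}-unrectifiable, i.e., ℋ^{n-1}(N ∩ S) = 0 for every countably ℋ^{n-1}-rectifiable set S ⊂ ℝ^n. -/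
open MeasureTheory Metric Set Filter ENNReal NNReal Topology

noncomputable section

variable {n : ℕ}

/-!
The capacity of a set dominates the measure of its orthogonal projection to any hyperplane: testing
the weak gradient of an admissible `u` against a function whose vertical derivative is a spread-out
density minus unit masses placed where `1 ≤ u`, over every point of the projection, bounds the
number of these masses by the Sobolev norm of `u`.

A Lipschitz image of `ℝᵐ` in `ℝᵐ⁺¹` splits into an `ℋᵐ`-null part, where the derivative does not
exist or is not injective, and, for every `c > 1`, countably many pieces on which the projection to
some hyperplane contracts distances by at most the factor `c`. If the part of `N` in such a piece is
not `ℋᵐ`-null, then at a point over a Lebesgue density point of its projection the lower capacity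
density of `N` is at least `ω / cᵐ`, where `ω` is the volume of the unit ball of `ℝᵐ`. As `c → 1`,
a set whose lower capacity density is everywhere below `ω` meets the image in an `ℋᵐ`-null set.
-/

section OrthogonalCoordinates

variable {E W : Type*} [NormedAddCommGroup E] [InnerProductSpace ℝ E]
  [NormedAddCommGroup W] [InnerProductSpace ℝ W] (Φ : E ≃ₗᵢ[ℝ] WithLp 2 (W × ℝ))

/-- The hyperplane component of orthogonal coordinates `E ≃ W × ℝ`. -/
def hyperplaneProj : E →L[ℝ] W :=
  (WithLp.fstL 2 ℝ W ℝ).comp (Φ.toContinuousLinearEquiv : E →L[ℝ] WithLp 2 (W × ℝ))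

/-- The vertical component of orthogonal coordinates `E ≃ W × ℝ`. -/
def height : E →L[ℝ] ℝ :=
  (WithLp.sndL 2 ℝ W ℝ).comp (Φ.toContinuousLinearEquiv : E →L[ℝ] WithLp 2 (W × ℝ))

/-- The vertical unit vector of orthogonal coordinates `E ≃ W × ℝ`. -/
def upward : E := Φ.symm (WithLp.toLp 2 (0, 1))

/-- The product `χ ⊗ ψ` of a function of the hyperplane component and a function of the height. -/
def tensor (χ : W → ℝ) (ψ : ℝ → ℝ) (x : E) : ℝ := χ (hyperplaneProj Φ x) * ψ (height Φ x)

@[simp]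
lemma norm_upward : ‖upward Φ‖ = 1 := by simp [upward]

@[simp]
lemma hyperplaneProj_upward : hyperplaneProj Φ (upward Φ) = 0 := by simp [hyperplaneProj, upward]

@[simp]
lemma height_upward : height Φ (upward Φ) = 1 := by simp [height, upward]

lemma norm_sq_eq_hyperplaneProj_add_height (x : E) :
    ‖x‖ ^ 2 = ‖hyperplaneProj Φ x‖ ^ 2 + ‖height Φ x‖ ^ 2 := by
  rw [← Φ.norm_map x, WithLp.prod_norm_sq_eq_of_L2]
  rfl

lemma norm_hyperplaneProj_le (x : E) : ‖hyperplaneProj Φ x‖ ≤ ‖x‖ :=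
  le_of_sq_le_sq (by linarith [norm_sq_eq_hyperplaneProj_add_height Φ x, sq_nonneg ‖height Φ x‖])
    (norm_nonneg x)

lemma norm_hyperplaneProj_of_height_eq_zero {x : E} (hx : height Φ x = 0) :
    ‖hyperplaneProj Φ x‖ = ‖x‖ := by
  simpa [hx, eq_comm] using norm_sq_eq_hyperplaneProj_add_height Φ x

/-- Orthogonal coordinates as a homeomorphism onto the plain product. -/
def coordHomeomorph : E ≃ₜ W × ℝ := Φ.toHomeomorph.trans (WithLp.homeomorphProd 2 W ℝ)

lemma isOpenMap_hyperplaneProj : IsOpenMap (hyperplaneProj Φ) :=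
  isOpenMap_fst.comp (coordHomeomorph Φ).isOpenMap

lemma exists_box_subset {V : Set E} (hV : IsOpen V) {p : E} (hp : p ∈ V) :
    ∃ δ > 0, ∀ x, hyperplaneProj Φ x ∈ ball (hyperplaneProj Φ p) δ →
      height Φ x ∈ ball (height Φ p) δ → x ∈ V := by
  obtain ⟨δ, hδ, hbox⟩ := Metric.isOpen_iff.1 ((coordHomeomorph Φ).isOpenMap V hV) _
    (mem_image_of_mem _ hp)
  refine ⟨δ, hδ, fun x hxp hxh => ?_⟩
  obtain ⟨y, hy, hyx⟩ := hbox (show coordHomeomorph Φ x ∈ _ by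
    rw [mem_ball, Prod.dist_eq]; exact max_lt hxp hxh)
  rwa [← (coordHomeomorph Φ).injective hyx]

lemma exists_finset_boxes_cover {V : Set E} (hV : IsOpen V) {K : Set W} (hK : IsCompact K)
    (hKV : K ⊆ hyperplaneProj Φ '' V) :
    ∃ (F : Finset E) (δ : E → ℝ), (∀ p ∈ F, 0 < δ p) ∧
      K ⊆ (⋃ p : F, ball (hyperplaneProj Φ p) (δ p)) ∧
      ∀ p ∈ F, ∀ x, hyperplaneProj Φ x ∈ ball (hyperplaneProj Φ p) (δ p) →
        height Φ x ∈ ball (height Φ p) (δ p) → x ∈ V := by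
  choose! δ hδ hbox using fun p => exists_box_subset Φ hV (p := p)
  obtain ⟨F, hFV, hF, hKF⟩ := hK.elim_finite_subcover_image (b := V)
    (c := fun p => ball (hyperplaneProj Φ p) (δ p)) (fun _ _ => isOpen_ball) fun y hy => by
      obtain ⟨p, hp, rfl⟩ := hKV hy
      exact mem_biUnion hp (mem_ball_self (hδ p hp))
  lift F to Finset E using hF
  exact ⟨F, δ, fun p hp => hδ p (hFV hp), by simpa [iUnion_subtype] using hKF,
    fun p hp => hbox p (hFV hp)⟩

section Tensor

variable {χ : W → ℝ} {ψ ψ' : ℝ → ℝ}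

lemma contDiff_tensor (hχ : ContDiff ℝ 1 χ) (hψ : ContDiff ℝ 1 ψ) : ContDiff ℝ 1 (tensor Φ χ ψ) :=
  (hχ.comp (hyperplaneProj Φ).contDiff).mul (hψ.comp (height Φ).contDiff)

lemma hasCompactSupport_tensor (hχ : HasCompactSupport χ) (hψ : HasCompactSupport ψ) :
    HasCompactSupport (tensor Φ χ ψ) := by
  refine HasCompactSupport.intro ((hχ.isCompact.prod hψ.isCompact).image
    (coordHomeomorph Φ).symm.continuous) fun x hx => ?_
  contrapose! hx
  exact ⟨coordHomeomorph Φ x, ⟨subset_tsupport _ (left_ne_zero_of_mul hx),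
    subset_tsupport _ (right_ne_zero_of_mul hx)⟩, (coordHomeomorph Φ).symm_apply_apply x⟩

lemma fderiv_tensor_upward {x : E} (hx : DifferentiableAt ℝ (tensor Φ χ ψ) x)
    (hψ : ∀ t, HasDerivAt ψ (ψ' t) t) :
    fderiv ℝ (tensor Φ χ ψ) x (upward Φ) = tensor Φ χ ψ' x := by
  rw [← hx.lineDeriv_eq_fderiv, lineDeriv]
  have hline : HasDerivAt (fun s : ℝ => height Φ x + s) 1 0 := (hasDerivAt_id 0).const_add _
  simpa [tensor, Function.comp_def] using
    (((hψ _).comp 0 hline).const_mul (χ (hyperplaneProj Φ x))).deriv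

variable [FiniteDimensional ℝ E] [MeasurableSpace E] [BorelSpace E]
  [FiniteDimensional ℝ W] [MeasurableSpace W] [BorelSpace W]

lemma measurePreserving_coordHomeomorph :
    MeasurePreserving (coordHomeomorph Φ) volume (volume.prod volume) :=
  (WithLp.volume_preserving_ofLp W ℝ).comp Φ.measurePreserving

lemma integrable_tensor (hχ : Integrable χ) (hψ : Integrable ψ) : Integrable (tensor Φ χ ψ) :=
  ((measurePreserving_coordHomeomorph Φ).integrable_comp_emb
    (coordHomeomorph Φ).measurableEmbedding).2 (hχ.mul_prod hψ)

lemma integral_tensor (χ : W → ℝ) (ψ : ℝ → ℝ) :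
    ∫ x, tensor Φ χ ψ x = (∫ y, χ y) * ∫ t, ψ t := by
  rw [← integral_prod_mul]
  exact (measurePreserving_coordHomeomorph Φ).integral_comp
    (coordHomeomorph Φ).measurableEmbedding fun p : W × ℝ => χ p.1 * ψ p.2

end Tensor

end OrthogonalCoordinates

section Primitive

variable {G : Type*} [NormedAddCommGroup G] [NormedSpace ℝ G]

lemma hasDerivAt_integral_Iic [CompleteSpace G] {f : ℝ → G} (hf : Continuous f)
    (hfi : Integrable f) (t : ℝ) : HasDerivAt (fun t => ∫ s in Iic t, f s) (f t) t := by
  have hsplit : (fun t => ∫ s in Iic t, f s) =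
      fun t => (∫ s in Iic 0, f s) + ∫ s in (0 : ℝ)..t, f s := by
    funext t
    rw [← intervalIntegral.integral_Iic_sub_Iic hfi.integrableOn hfi.integrableOn,
      add_sub_cancel]
  rw [hsplit]
  exact (hf.integral_hasStrictDerivAt 0 t).hasDerivAt.const_add _

lemma contDiff_one_integral_Iic [CompleteSpace G] {f : ℝ → G} (hf : Continuous f)
    (hfi : Integrable f) : ContDiff ℝ 1 fun t => ∫ s in Iic t, f s := by
  have hderiv := hasDerivAt_integral_Iic hf hfi
  refine contDiff_one_iff_deriv.2 ⟨fun t => (hderiv t).differentiableAt, ?_⟩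
  rwa [funext fun t => (hderiv t).deriv]

lemma hasCompactSupport_integral_Iic {f : ℝ → G} (hf : HasCompactSupport f)
    (hf0 : ∫ s, f s = 0) : HasCompactSupport fun t => ∫ s in Iic t, f s := by
  obtain ⟨M, hM⟩ := hf.isCompact.isBounded.subset_closedBall 0
  have hzero : ∀ s, M < |s| → f s = 0 := fun s hs =>
    image_eq_zero_of_notMem_tsupport fun hmem => hs.not_ge (by simpa using hM hmem)
  refine HasCompactSupport.intro (isCompact_closedBall (0 : ℝ) M) fun t ht => ?_
  rw [mem_closedBall_zero_iff, Real.norm_eq_abs, not_le, lt_abs] at ht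
  rcases ht with ht | ht
  · rw [setIntegral_eq_integral_of_forall_compl_eq_zero fun s hs => ?_, hf0]
    exact hzero s (lt_abs.2 (Or.inl (ht.trans (not_le.1 hs))))
  · refine setIntegral_eq_zero_of_forall_eq_zero fun s hs => hzero s (lt_abs.2 (Or.inr ?_))
    linarith [mem_Iic.1 hs]

lemma abs_setIntegral_sub_le_one {X : Type*} [MeasurableSpace X] {μ : Measure X} {α β : X → ℝ}
    (hα : Integrable α μ) (hβ : Integrable β μ) (hα0 : 0 ≤ α) (hβ0 : 0 ≤ β)
    (hα1 : ∫ x, α x ∂μ = 1) (hβ1 : ∫ x, β x ∂μ = 1) (s : Set X) :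
    |∫ x in s, (α x - β x) ∂μ| ≤ 1 := by
  have hmem : ∀ f : X → ℝ, Integrable f μ → 0 ≤ f → ∫ x, f x ∂μ = 1 →
      ∫ x in s, f x ∂μ ∈ Icc (0 : ℝ) 1 := fun f hf hf0 hf1 =>
    ⟨integral_nonneg hf0, hf1 ▸ setIntegral_le_integral hf (ae_of_all _ hf0)⟩
  rw [integral_sub hα.integrableOn hβ.integrableOn, ← Real.dist_eq]
  simpa using Real.dist_le_of_mem_Icc (hmem α hα hα0 hα1) (hmem β hβ hβ0 hβ1)

end Primitive

lemma exists_contDiff_partition_of_isCompact {W : Type*} [NormedAddCommGroup W] [NormedSpace ℝ W]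
    [FiniteDimensional ℝ W] {ι : Type*} [Fintype ι] {K : Set W} (hK : IsCompact K)
    {U : ι → Set W} (hUo : ∀ i, IsOpen (U i)) (hUb : ∀ i, Bornology.IsBounded (U i))
    (hKU : K ⊆ ⋃ i, U i) :
    ∃ χ : ι → W → ℝ, (∀ i, ContDiff ℝ 1 (χ i)) ∧ (∀ i, HasCompactSupport (χ i)) ∧
      (∀ i y, 0 ≤ χ i y) ∧ (∀ i, ∀ y ∉ U i, χ i y = 0) ∧ (∀ y, ∑ i, χ i y ≤ 1) ∧
      ∀ y ∈ K, ∑ i, χ i y = 1 := by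
  obtain ⟨f, hf⟩ := SmoothPartitionOfUnity.exists_isSubordinate (modelWithCornersSelf ℝ W)
    hK.isClosed U hUo hKU
  refine ⟨fun i => f i, fun i => ?smooth, fun i => ?compact, fun i y => f.nonneg i y,
    fun i y hy => ?support, fun y => ?le_one, fun y hy => ?eq_one⟩
  case smooth => exact (contMDiff_iff_contDiff.1 (f i).contMDiff).of_le (mod_cast le_top)
  case compact =>
    exact isCompact_of_isClosed_isBounded (isClosed_tsupport _) ((hUb i).subset (hf i))
  case support => exact image_eq_zero_of_notMem_tsupport fun hmem => hy (hf i hmem)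
  case le_one => simpa [finsum_eq_sum_of_fintype] using f.sum_le_one y
  case eq_one => simpa [finsum_eq_sum_of_fintype] using f.sum_eq_one hy

namespace IsWeakGrad

variable {u : En n → ℝ} {g : En n → (En n →L[ℝ] ℝ)} {φ : En n → ℝ} {v : En n}

lemma neg_integral_mul_fderiv_le (hug : IsWeakGrad u g) (hg : Integrable fun x => ‖g x‖)
    (hφ : ContDiff ℝ 1 φ) (hφc : HasCompactSupport φ) (hφ1 : ∀ x, |φ x| ≤ 1) (hv : ‖v‖ ≤ 1) :
    -∫ x, u x * fderiv ℝ φ x v ≤ ∫ x, ‖g x‖ := by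
  rw [hug φ hφ hφc v, neg_neg]
  refine (Real.le_norm_self _).trans (norm_integral_le_of_norm_le hg (ae_of_all _ fun x => ?_))
  calc ‖φ x * g x v‖ = |φ x| * ‖g x v‖ := norm_mul _ _
    _ ≤ 1 * ‖g x‖ := mul_le_mul (hφ1 x) ((g x).unit_le_opNorm v hv) (norm_nonneg _) zero_le_one
    _ = ‖g x‖ := one_mul _

/-- Integrating by parts against `φ` compares the mass of `θ`, on whose support `1 ≤ u`, with the
Sobolev norm; the term `a` only costs the `L¹` norm of `u`. -/
lemma integral_le_of_fderiv_eq_sub (hug : IsWeakGrad u g) (hu : Integrable u)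
    (hg : Integrable fun x => ‖g x‖) (hφ : ContDiff ℝ 1 φ) (hφc : HasCompactSupport φ)
    (hφ1 : ∀ x, |φ x| ≤ 1) (hv : ‖v‖ ≤ 1) {a θ : En n → ℝ}
    (hder : ∀ x, fderiv ℝ φ x v = a x - θ x) (ha : ∀ x, |a x| ≤ 1) (hθ : Integrable θ)
    (hθ0 : ∀ x, 0 ≤ θ x) (hθu : ∀ x, θ x ≠ 0 → 1 ≤ u x) :
    ∫ x, θ x ≤ (∫ x, |u x|) + ∫ x, ‖g x‖ := by
  have hpointwise : ∀ x, θ x - |u x| ≤ -(u x * fderiv ℝ φ x v) := fun x => by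
    have hθle : θ x ≤ u x * θ x := by
      by_cases hx : θ x = 0
      · simp [hx]
      · exact le_mul_of_one_le_left (hθ0 x) (hθu x hx)
    have hale : u x * a x ≤ |u x| := calc
      u x * a x ≤ |u x| * |a x| := (le_abs_self _).trans_eq (abs_mul _ _)
      _ ≤ |u x| := mul_le_of_le_one_right (abs_nonneg _) (ha x)
    rw [hder]
    linarith
  have hint : Integrable fun x => u x * fderiv ℝ φ x v := by
    have hcont : Continuous fun x => fderiv ℝ φ x v :=
      (hφ.continuous_fderiv one_ne_zero).clm_apply continuous_const
    obtain ⟨C, hC⟩ := hcont.bounded_above_of_compact_support (hφc.fderiv_apply (𝕜 := ℝ) v)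
    exact hu.mul_bdd hcont.aestronglyMeasurable (ae_of_all _ hC)
  have hmono := integral_mono (hθ.sub hu.abs) hint.neg hpointwise
  simp only [Pi.sub_apply, Pi.neg_apply] at hmono
  rw [integral_sub hθ hu.abs, integral_neg] at hmono
  linarith [hug.neg_integral_mul_fderiv_le hg hφ hφc hφ1 hv]

end IsWeakGrad

lemma exists_unit_mass_le_one : ∃ α : ℝ → ℝ, Continuous α ∧ HasCompactSupport α ∧
    (∀ t, 0 ≤ α t) ∧ (∀ t, α t ≤ 1) ∧ ∫ t, α t = 1 := by
  let A : ContDiffBump (0 : ℝ) := ⟨1, 2, one_pos, one_lt_two⟩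
  refine ⟨A.normed volume, A.continuous_normed, A.hasCompactSupport_normed, A.nonneg_normed,
    fun t => (A.normed_le_div_measure_closedBall_rIn volume t).trans ?_, A.integral_normed⟩
  norm_num [A, measureReal_def]

lemma exists_unit_mass_ball (c : ℝ) {δ : ℝ} (hδ : 0 < δ) : ∃ β : ℝ → ℝ, Continuous β ∧
    HasCompactSupport β ∧ (∀ t, 0 ≤ β t) ∧ (∀ t ∉ ball c δ, β t = 0) ∧ ∫ t, β t = 1 := by
  let B : ContDiffBump c := ⟨δ / 2, δ, half_pos hδ, half_lt_self hδ⟩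
  refine ⟨B.normed volume, B.continuous_normed, B.hasCompactSupport_normed, B.nonneg_normed,
    fun t ht => ?_, B.integral_normed⟩
  rwa [← B.support_normed_eq (μ := volume), Function.notMem_support] at ht

lemma exists_transport_profile {α β : ℝ → ℝ} (hα : Continuous α) (hαc : HasCompactSupport α)
    (hα0 : 0 ≤ α) (hα1 : ∫ t, α t = 1) (hβ : Continuous β) (hβc : HasCompactSupport β)
    (hβ0 : 0 ≤ β) (hβ1 : ∫ t, β t = 1) :
    ∃ ψ : ℝ → ℝ, ContDiff ℝ 1 ψ ∧ HasCompactSupport ψ ∧ (∀ t, |ψ t| ≤ 1) ∧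
      ∀ t, HasDerivAt ψ (α t - β t) t := by
  have hαi : Integrable α := hα.integrable_of_hasCompactSupport hαc
  have hβi : Integrable β := hβ.integrable_of_hasCompactSupport hβc
  have hmass : ∫ t, (α t - β t) = 0 := by rw [integral_sub hαi hβi, hα1, hβ1, sub_self]
  exact ⟨fun t => ∫ s in Iic t, (α s - β s),
    contDiff_one_integral_Iic (hα.sub hβ) (hαi.sub hβi),
    hasCompactSupport_integral_Iic (hαc.sub hβc) hmass,
    fun t => abs_setIntegral_sub_le_one hαi hβi hα0 hβ0 hα1 hβ1 _,
    hasDerivAt_integral_Iic (hα.sub hβ) (hαi.sub hβi)⟩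

section TestFunction

variable {E W : Type*} [NormedAddCommGroup E] [InnerProductSpace ℝ E]
  [NormedAddCommGroup W] [InnerProductSpace ℝ W] (Φ : E ≃ₗᵢ[ℝ] WithLp 2 (W × ℝ))
  {ι : Type*} [Fintype ι] {χ : ι → W → ℝ}

lemma abs_sum_tensor_le_one (hχ0 : ∀ i y, 0 ≤ χ i y) (hχ1 : ∀ y, ∑ i, χ i y ≤ 1)
    {ψ : ι → ℝ → ℝ} (hψ : ∀ i t, |ψ i t| ≤ 1) (x : E) : |∑ i, tensor Φ (χ i) (ψ i) x| ≤ 1 :=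
  calc |∑ i, tensor Φ (χ i) (ψ i) x| ≤ ∑ i, |tensor Φ (χ i) (ψ i) x| :=
        Finset.abs_sum_le_sum_abs _ _
    _ ≤ ∑ i, χ i (hyperplaneProj Φ x) := Finset.sum_le_sum fun i _ => by
        rw [tensor, abs_mul, abs_of_nonneg (hχ0 i _)]
        exact mul_le_of_le_one_right (hχ0 i _) (hψ i _)
    _ ≤ 1 := hχ1 _

lemma hasCompactSupport_sum_tensor {ψ : ι → ℝ → ℝ} (hχ : ∀ i, HasCompactSupport (χ i))
    (hψ : ∀ i, HasCompactSupport (ψ i)) :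
    HasCompactSupport fun x => ∑ i, tensor Φ (χ i) (ψ i) x := by
  refine HasCompactSupport.intro
    (isCompact_iUnion fun i => hasCompactSupport_tensor Φ (hχ i) (hψ i)) fun x hx => ?_
  simp only [mem_iUnion, not_exists] at hx
  exact Finset.sum_eq_zero fun i _ => image_eq_zero_of_notMem_tsupport (hx i)

lemma fderiv_sum_tensor_upward {ψ ψ' : ι → ℝ → ℝ} (hχ : ∀ i, ContDiff ℝ 1 (χ i))
    (hψ : ∀ i, ContDiff ℝ 1 (ψ i)) (hψ' : ∀ i t, HasDerivAt (ψ i) (ψ' i t) t) (x : E) :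
    fderiv ℝ (fun x => ∑ i, tensor Φ (χ i) (ψ i) x) x (upward Φ) =
      ∑ i, tensor Φ (χ i) (ψ' i) x := by
  have hdiff : ∀ i, DifferentiableAt ℝ (tensor Φ (χ i) (ψ i)) x := fun i =>
    (contDiff_tensor Φ (hχ i) (hψ i)).differentiable one_ne_zero x
  rw [fderiv_fun_sum fun i _ => hdiff i, _root_.sum_apply]
  exact Finset.sum_congr rfl fun i _ => fderiv_tensor_upward Φ (hdiff i) (hψ' i)

variable [FiniteDimensional ℝ E] [MeasurableSpace E] [BorelSpace E]
  [FiniteDimensional ℝ W] [MeasurableSpace W] [BorelSpace W]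

lemma measureReal_le_integral_sum_tensor {K : Set W} (hK : IsCompact K)
    (hχi : ∀ i, Integrable (χ i)) (hχ0 : ∀ i y, 0 ≤ χ i y) (hχK : ∀ y ∈ K, ∑ i, χ i y = 1)
    {β : ι → ℝ → ℝ} (hβi : ∀ i, Integrable (β i)) (hβ1 : ∀ i, ∫ t, β i t = 1) :
    volume.real K ≤ ∫ x, ∑ i, tensor Φ (χ i) (β i) x := by
  have hsum : Integrable fun y => ∑ i, χ i y := integrable_finsetSum _ fun i _ => hχi i
  calc volume.real K = ∫ y in K, ∑ i, χ i y := by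
        rw [setIntegral_congr_fun hK.measurableSet hχK, setIntegral_const, smul_eq_mul, mul_one]
    _ ≤ ∫ y, ∑ i, χ i y :=
        setIntegral_le_integral hsum (ae_of_all _ fun y => Finset.sum_nonneg fun i _ => hχ0 i y)
    _ = ∫ x, ∑ i, tensor Φ (χ i) (β i) x := by
        rw [integral_finsetSum _ fun i _ => hχi i,
          integral_finsetSum _ fun i _ => integrable_tensor Φ (hχi i) (hβi i)]
        simp only [integral_tensor, hβ1, mul_one]

/-- The density `θ` puts unit mass, inside `V`, on the vertical line over each point of `K`, and the
primitive `φ` transports it along these lines to the spread-out density `a`. -/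
lemma exists_transport_testFunction {V : Set E} (hV : IsOpen V) {K : Set W} (hK : IsCompact K)
    (hKV : K ⊆ hyperplaneProj Φ '' V) :
    ∃ φ a θ : E → ℝ, ContDiff ℝ 1 φ ∧ HasCompactSupport φ ∧ (∀ x, |φ x| ≤ 1) ∧
      (∀ x, fderiv ℝ φ x (upward Φ) = a x - θ x) ∧ (∀ x, |a x| ≤ 1) ∧ Integrable θ ∧
      (∀ x, 0 ≤ θ x) ∧ (∀ x, θ x ≠ 0 → x ∈ V) ∧ volume.real K ≤ ∫ x, θ x := by
  obtain ⟨F, δ, hδ, hKF, hbox⟩ := exists_finset_boxes_cover Φ hV hK hKV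
  obtain ⟨χ, hχ, hχc, hχ0, hχs, hχ1, hχK⟩ := exists_contDiff_partition_of_isCompact hK
    (fun _ => isOpen_ball) (fun _ => isBounded_ball) hKF
  obtain ⟨α, hα, hαc, hα0, hα1, hαint⟩ := exists_unit_mass_le_one
  choose β hβ hβc hβ0 hβs hβint using
    fun p : F => exists_unit_mass_ball (height Φ p) (hδ p p.2)
  choose ψ hψ hψc hψ1 hψ' using fun p =>
    exists_transport_profile hα hαc hα0 hαint (hβ p) (hβc p) (hβ0 p) (hβint p)
  have hβi : ∀ p, Integrable (β p) := fun p => (hβ p).integrable_of_hasCompactSupport (hβc p)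
  have hχi : ∀ p, Integrable (χ p) := fun p =>
    (hχ p).continuous.integrable_of_hasCompactSupport (hχc p)
  refine ⟨fun x => ∑ p, tensor Φ (χ p) (ψ p) x, fun x => ∑ p, tensor Φ (χ p) α x,
    fun x => ∑ p, tensor Φ (χ p) (β p) x,
    ContDiff.sum fun p _ => contDiff_tensor Φ (hχ p) (hψ p),
    hasCompactSupport_sum_tensor Φ hχc hψc, abs_sum_tensor_le_one Φ hχ0 hχ1 hψ1, fun x => ?deriv,
    abs_sum_tensor_le_one Φ hχ0 hχ1 fun _ t => abs_le.2 ⟨by linarith [hα0 t], hα1 t⟩,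
    integrable_finsetSum _ fun p _ => integrable_tensor Φ (hχi p) (hβi p),
    fun x => Finset.sum_nonneg fun p _ => mul_nonneg (hχ0 p _) (hβ0 p _), fun x hx => ?support,
    measureReal_le_integral_sum_tensor Φ hK hχi hχ0 hχK hβi hβint⟩
  case deriv =>
    rw [fderiv_sum_tensor_upward Φ hχ hψ hψ', ← Finset.sum_sub_distrib]
    exact Finset.sum_congr rfl fun p _ => mul_sub _ _ _
  case support =>
    obtain ⟨p, -, hp⟩ := Finset.exists_ne_zero_of_sum_ne_zero hx
    exact hbox p p.2 x (not_imp_comm.1 (hχs p _) (left_ne_zero_of_mul hp))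
      (not_imp_comm.1 (hβs p _) (right_ne_zero_of_mul hp))

end TestFunction

section Cap1

variable {W : Type*} [NormedAddCommGroup W] [InnerProductSpace ℝ W] [FiniteDimensional ℝ W]
  [MeasurableSpace W] [BorelSpace W] (Φ : En n ≃ₗᵢ[ℝ] WithLp 2 (W × ℝ))

theorem measure_hyperplaneProj_image_le_cap1 (A : Set (En n)) :
    volume (hyperplaneProj Φ '' A) ≤ cap1 A := by
  refine le_sInf ?_
  rintro _ ⟨u, g, hu, hg, hug, ⟨V, hV, hAV, huV⟩, rfl⟩
  refine (measure_mono (image_mono hAV)).trans ?_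
  rw [(isOpenMap_hyperplaneProj Φ V hV).measure_eq_iSup_isCompact]
  refine iSup₂_le fun K hKV => iSup_le fun hK => ?_
  obtain ⟨φ, a, θ, hφ, hφc, hφ1, hder, ha, hθ, hθ0, hθV, hKθ⟩ :=
    exists_transport_testFunction Φ hV hK hKV
  rw [← ofReal_measureReal hK.measure_lt_top.ne]
  exact ENNReal.ofReal_le_ofReal (hKθ.trans (hug.integral_le_of_fderiv_eq_sub hu hg hφ hφc hφ1
    (norm_upward Φ).le hder ha hθ hθ0 fun x hx => huV x (hθV x hx)))

end Cap1

lemma hausdorffMeasure_image_le_of_dist_le {X Y Z : Type*} [MetricSpace Y] [MeasurableSpace Y]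
    [BorelSpace Y] [MetricSpace Z] [MeasurableSpace Z] [BorelSpace Z] {f : X → Y} {g : X → Z}
    {s : Set X} {K : ℝ≥0} (hK : ∀ x ∈ s, ∀ y ∈ s, dist (f x) (f y) ≤ K * dist (g x) (g y))
    {d : ℝ} (hd : 0 ≤ d) : μH[d] (f '' s) ≤ (K : ℝ≥0∞) ^ d * μH[d] (g '' s) := by
  have hsec : ∀ z ∈ g '' s, ∃ x ∈ s, g x = z := fun _ hz => hz
  rcases isEmpty_or_nonempty X with _ | _
  · simp [eq_empty_of_isEmpty]
  choose! σ hσs hσ using hsec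
  have hfac : f '' s = (f ∘ σ) '' (g '' s) := by
    rw [image_image]
    refine image_congr fun x hx => dist_le_zero.1 ?_
    have hgx := mem_image_of_mem g hx
    simpa [hσ _ hgx] using hK x hx _ (hσs _ hgx)
  rw [hfac]
  refine LipschitzOnWith.hausdorffMeasure_image_le (LipschitzOnWith.of_dist_le_mul ?_) hd
  intro y hy z hz
  simpa [hσ y hy, hσ z hz] using hK _ (hσs y hy) _ (hσs z hz)

section ApproximatesLinearOn

variable {E G H : Type*} [NormedAddCommGroup E] [NormedSpace ℝ E] [NormedAddCommGroup G]
  [NormedSpace ℝ G] [NormedAddCommGroup H] [NormedSpace ℝ H] {f : E → G} {s : Set E}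

lemma dist_le_two_mul_dist_of_approximatesLinearOn {A : E →L[ℝ] G} {B : E →L[ℝ] H} {δ : ℝ≥0}
    (hf : ApproximatesLinearOn f A s δ) (hAB : ∀ z, ‖A z‖ ≤ ‖B z‖) (hδB : ∀ z, δ * ‖z‖ ≤ ‖B z‖)
    {x y : E} (hx : x ∈ s) (hy : y ∈ s) : dist (f x) (f y) ≤ 2 * dist (B x) (B y) := by
  rw [dist_eq_norm, dist_eq_norm, ← map_sub]
  linarith [hf x hx y hy, norm_le_norm_add_norm_sub' (f x - f y) (A (x - y)), hAB (x - y),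
    hδB (x - y)]

lemma exists_mul_norm_le_of_injective [FiniteDimensional ℝ E] {A : E →L[ℝ] G}
    (hA : Function.Injective A) {κ : ℝ} (hκ : 0 < κ) :
    ∃ δ : ℝ≥0, δ ≠ 0 ∧ ∀ z, δ * ‖z‖ ≤ κ * ‖A z‖ := by
  obtain ⟨K, hK, hAK⟩ := (A : E →ₗ[ℝ] G).exists_antilipschitzWith (LinearMap.ker_eq_bot.2 hA)
  lift κ to ℝ≥0 using hκ.le
  refine ⟨κ / K, (div_pos (mod_cast hκ) hK).ne', fun z => ?_⟩
  calc ((κ / K : ℝ≥0) : ℝ) * ‖z‖ ≤ (κ / K : ℝ≥0) * (K * ‖A z‖) := by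
        gcongr
        simpa using hAK.le_mul_dist z 0
    _ = κ * ‖A z‖ := by
        push_cast
        field_simp

lemma mul_dist_le_mul_dist_of_approximatesLinearOn {A : E →L[ℝ] G} {δ : ℝ≥0}
    (hf : ApproximatesLinearOn f A s δ) {P : G →L[ℝ] H} (hP : ∀ z, ‖P z‖ ≤ ‖z‖)
    (hPA : ∀ z, ‖P (A z)‖ = ‖A z‖) {κ : ℝ} (hκ0 : 0 ≤ κ) (hκ1 : κ ≤ 1)
    (hδ : ∀ z, δ * ‖z‖ ≤ κ * ‖A z‖) {x y : E} (hx : x ∈ s) (hy : y ∈ s) :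
    (1 - κ) * dist (f x) (f y) ≤ (1 + κ) * dist (P (f x)) (P (f y)) := by
  rw [dist_eq_norm, dist_eq_norm, ← map_sub]
  set w := f x - f y
  set a := A (x - y)
  have hwa : ‖w - a‖ ≤ κ * ‖a‖ := (hf x hx y hy).trans (hδ _)
  have hw : ‖w‖ ≤ (1 + κ) * ‖a‖ := by
    linarith [norm_le_norm_add_norm_sub' w a]
  have hPw : (1 - κ) * ‖a‖ ≤ ‖P w‖ := by
    have hP' := hP (w - a)
    rw [map_sub] at hP'
    linarith [norm_le_norm_add_norm_sub (P w) (P a), hPA (x - y)]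
  calc (1 - κ) * ‖w‖ ≤ (1 - κ) * ((1 + κ) * ‖a‖) := by gcongr
    _ = (1 + κ) * ((1 - κ) * ‖a‖) := by ring
    _ ≤ (1 + κ) * ‖P w‖ := by gcongr

lemma exists_partition_approximatesLinearOn [FiniteDimensional ℝ E] [MeasurableSpace E]
    [BorelSpace E] [SecondCountableTopology G] {f' : E → E →L[ℝ] G} (hs : s.Nonempty)
    (hf : ∀ x ∈ s, HasFDerivWithinAt f (f' x) s x) {p : (E →L[ℝ] G) → ℝ≥0 → Prop}
    (hp : ∀ x ∈ s, ∃ δ, δ ≠ 0 ∧ p (f' x) δ) :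
    ∃ (t : ℕ → Set E) (A : ℕ → E →L[ℝ] G) (δ : ℕ → ℝ≥0), Pairwise (Function.onFun Disjoint t) ∧
      (∀ i, MeasurableSet (t i)) ∧ s ⊆ ⋃ i, t i ∧
      ∀ i, ApproximatesLinearOn f (A i) (s ∩ t i) (δ i) ∧ p (A i) (δ i) := by
  have htotal : ∀ A, ∃ δ, δ ≠ 0 ∧ ((∃ x ∈ s, A = f' x) → p A δ) := fun A => by
    by_cases hA : ∃ x ∈ s, A = f' x
    · obtain ⟨x, hx, rfl⟩ := hA
      obtain ⟨δ, hδ, hpδ⟩ := hp x hx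
      exact ⟨δ, hδ, fun _ => hpδ⟩
    · exact ⟨1, one_ne_zero, fun h => absurd h hA⟩
  choose δ hδ hpδ using htotal
  obtain ⟨t, A, htd, htm, hst, happ, hA⟩ :=
    exists_partition_approximatesLinearOn_of_hasFDerivWithinAt f s f' hf δ hδ
  exact ⟨t, A, fun i => δ (A i), htd, htm, hst, fun i => ⟨happ i, hpδ _ (hA hs i)⟩⟩

end ApproximatesLinearOn

section Sard

open Module (finrank)

variable {E G : Type*} [NormedAddCommGroup E] [InnerProductSpace ℝ E]
  [NormedAddCommGroup G] [NormedSpace ℝ G]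

lemma norm_le_norm_add_of_inner_nonneg {x y : E} (h : 0 ≤ inner ℝ x y) : ‖x‖ ≤ ‖x + y‖ :=
  le_of_sq_le_sq (by nlinarith [norm_add_sq_real x y, sq_nonneg ‖y‖]) (norm_nonneg _)

variable [FiniteDimensional ℝ E]

lemma exists_dominating_endomorphism_of_not_injective {A : E →L[ℝ] G}
    (hA : ¬ Function.Injective A) {η : ℝ} (hη : 0 < η) :
    ∃ δ > 0, ∃ B : E →L[ℝ] E, (∀ z, ‖A z‖ ≤ ‖B z‖) ∧ (∀ z, δ * ‖z‖ ≤ ‖B z‖) ∧ |B.det| < η := by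
  let P : E →L[ℝ] E := A.kerᗮ.starProjection
  let B : ℝ → E →L[ℝ] E := fun δ => ‖A‖ • P + δ • ContinuousLinearMap.id ℝ E
  have hB : ∀ δ z, B δ z = ‖A‖ • P z + δ • z := fun _ _ => rfl
  have hB0 : (B 0).det = 0 := by
    refine LinearMap.det_eq_zero_iff_ker_ne_bot.2 fun hker => hA ?_
    refine (injective_iff_map_eq_zero A).2 fun z hz => ?_
    have hPz : P z = 0 := (Submodule.starProjection_apply_eq_zero_iff _).2
      (Submodule.le_orthogonal_orthogonal _ hz)
    exact (Submodule.mem_bot ℝ).1 (hker ▸ show z ∈ LinearMap.ker _ by simp [hB, hPz])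
  have hBcont : Continuous fun δ => |(B δ).det| :=
    (ContinuousLinearMap.continuous_det.comp (by fun_prop)).abs
  obtain ⟨δ, hδη, hδ⟩ := (((hBcont.tendsto 0).eventually_lt_const (by simpa [hB0])).filter_mono
    nhdsWithin_le_nhds |>.and (self_mem_nhdsWithin (s := Ioi 0))).exists
  have hinner : ∀ z, 0 ≤ inner ℝ (‖A‖ • P z) (δ • z) := fun z => by
    rw [real_inner_smul_left, real_inner_smul_right]
    exact mul_nonneg (norm_nonneg A) (mul_nonneg (mem_Ioi.1 hδ).le
      (Submodule.re_inner_starProjection_nonneg (𝕜 := ℝ) A.kerᗮ z))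
  refine ⟨δ, hδ, B δ, fun z => ?_, fun z => ?_, hδη⟩
  · have hAP : A z = A (P z) := by
      rw [← sub_eq_zero, ← map_sub]
      have := Submodule.sub_starProjection_mem_orthogonal (K := A.kerᗮ) z
      rwa [Submodule.orthogonal_orthogonal] at this
    calc ‖A z‖ ≤ ‖A‖ * ‖P z‖ := hAP ▸ A.le_opNorm _
      _ = ‖‖A‖ • P z‖ := by rw [norm_smul, norm_norm]
      _ ≤ ‖B δ z‖ := norm_le_norm_add_of_inner_nonneg (hinner z)
  · calc δ * ‖z‖ = ‖δ • z‖ := by rw [norm_smul, Real.norm_of_nonneg (mem_Ioi.1 hδ).le]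
      _ ≤ ‖B δ z‖ := by
        rw [hB, add_comm]
        exact norm_le_norm_add_of_inner_nonneg (by rw [real_inner_comm]; exact hinner z)

variable [MeasurableSpace E] [BorelSpace E] [MeasurableSpace G] [BorelSpace G]

lemma exists_hausdorffMeasure_image_le_mul_of_not_injective {A : E →L[ℝ] G}
    (hA : ¬ Function.Injective A) {ε : ℝ≥0} (hε : 0 < ε) :
    ∃ δ : ℝ≥0, δ ≠ 0 ∧ ∀ (s : Set E) (f : E → G), ApproximatesLinearOn f A s δ →
      μH[finrank ℝ E] (f '' s) ≤ ε * μH[finrank ℝ E] s := by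
  obtain ⟨δ, hδ, B, hAB, hδB, hdet⟩ := exists_dominating_endomorphism_of_not_injective hA
    (show (0 : ℝ) < ε / 2 ^ finrank ℝ E by positivity)
  refine ⟨⟨δ, hδ.le⟩, fun h => hδ.ne' (congrArg NNReal.toReal h), fun s f hf => ?_⟩
  calc μH[finrank ℝ E] (f '' s)
      ≤ ((2 : ℝ≥0) : ℝ≥0∞) ^ (finrank ℝ E : ℝ) * μH[finrank ℝ E] (B '' s) :=
        hausdorffMeasure_image_le_of_dist_le
          (fun x hx y hy => by
            simpa using dist_le_two_mul_dist_of_approximatesLinearOn hf hAB hδB hx hy)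
          (Nat.cast_nonneg _)
    _ = ENNReal.ofReal (2 ^ finrank ℝ E * |B.det|) * μH[finrank ℝ E] s := by
        rw [Measure.addHaar_image_continuousLinearMap, ← mul_assoc,
          ENNReal.ofReal_mul (by positivity)]
        simp [ENNReal.ofReal_pow]
    _ ≤ ε * μH[finrank ℝ E] s := by
        gcongr
        rw [← ENNReal.ofReal_coe_nnreal, mul_comm]
        exact ENNReal.ofReal_le_ofReal ((lt_div_iff₀ (by positivity)).1 hdet).le

variable [SecondCountableTopology G] {f : E → G} {f' : E → E →L[ℝ] G} {s : Set E}

lemma hausdorffMeasure_image_le_mul_of_not_injective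
    (hf : ∀ x ∈ s, HasFDerivWithinAt f (f' x) s x)
    (hf' : ∀ x ∈ s, ¬ Function.Injective (f' x)) {U : Set E} (hU : MeasurableSet U) (hsU : s ⊆ U)
    {ε : ℝ≥0} (hε : 0 < ε) : μH[finrank ℝ E] (f '' s) ≤ ε * μH[finrank ℝ E] U := by
  rcases s.eq_empty_or_nonempty with rfl | hs
  · simp
  obtain ⟨t, A, δ, htd, htm, hst, hA⟩ := exists_partition_approximatesLinearOn
    (p := fun A δ => ∀ (s : Set E) (f : E → G), ApproximatesLinearOn f A s δ →
      μH[finrank ℝ E] (f '' s) ≤ ε * μH[finrank ℝ E] s) hs hf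
    fun x hx => exists_hausdorffMeasure_image_le_mul_of_not_injective (hf' x hx) hε
  calc μH[finrank ℝ E] (f '' s) ≤ μH[finrank ℝ E] (⋃ i, f '' (s ∩ t i)) := by
        rw [← image_iUnion, ← inter_iUnion, inter_eq_self_of_subset_left hst]
    _ ≤ ∑' i, μH[finrank ℝ E] (f '' (s ∩ t i)) := measure_iUnion_le _
    _ ≤ ∑' i, ε * μH[finrank ℝ E] (U ∩ t i) := ENNReal.tsum_le_tsum fun i =>
        ((hA i).2 _ f (hA i).1).trans (by gcongr)
    _ = ε * μH[finrank ℝ E] (⋃ i, U ∩ t i) := by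
        rw [ENNReal.tsum_mul_left, measure_iUnion
          (fun i j hij => (htd hij).mono inter_subset_right inter_subset_right)
          (fun i => hU.inter (htm i))]
    _ ≤ ε * μH[finrank ℝ E] U := by
        gcongr
        exact iUnion_subset fun i => inter_subset_left

theorem hausdorffMeasure_image_eq_zero_of_not_injective
    (hf : ∀ x ∈ s, HasFDerivWithinAt f (f' x) s x)
    (hf' : ∀ x ∈ s, ¬ Function.Injective (f' x)) : μH[finrank ℝ E] (f '' s) = 0 := by
  have hbdd : ∀ R : ℕ, μH[finrank ℝ E] (f '' (s ∩ ball 0 R)) = 0 := fun R => by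
    by_contra hne
    obtain ⟨ε, hε, hlt⟩ := ENNReal.exists_nnreal_pos_mul_lt
      (measure_ball_lt_top (μ := μH[finrank ℝ E]) (x := (0 : E)) (r := R)).ne hne
    exact hlt.not_ge (hausdorffMeasure_image_le_mul_of_not_injective
      (fun x hx => (hf x hx.1).mono inter_subset_left) (fun x hx => hf' x hx.1) measurableSet_ball
      inter_subset_right hε)
  rw [← inter_univ s, ← iUnion_ball_nat (0 : E), inter_iUnion, image_iUnion]
  exact measure_iUnion_null hbdd

end Sard

section AdaptedCoordinates

lemma range_ne_top_of_finrank_lt {K V W : Type*} [DivisionRing K] [AddCommGroup V] [Module K V]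
    [Module.Finite K V] [AddCommGroup W] [Module K W]
    (hVW : Module.finrank K V < Module.finrank K W) (A : V →ₗ[K] W) : A.range ≠ ⊤ := fun htop => by
  have hrank := LinearMap.finrank_range_le A
  rw [htop, finrank_top] at hrank
  exact hrank.not_gt hVW

lemma exists_unit_vector_orthogonal {E : Type*} [NormedAddCommGroup E] [InnerProductSpace ℝ E]
    [FiniteDimensional ℝ E] {p : Submodule ℝ E} (hp : p ≠ ⊤) : ∃ v ∈ pᗮ, ‖v‖ = 1 := by
  obtain ⟨w, hw, hw0⟩ := Submodule.exists_mem_ne_zero_of_ne_bot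
    (mt Submodule.orthogonal_eq_bot_iff.1 hp)
  exact ⟨‖w‖⁻¹ • w, Submodule.smul_mem _ _ hw, norm_smul_inv_norm hw0⟩

lemma exists_height_eq_zero_of_ne_top {E : Type*} [NormedAddCommGroup E] [InnerProductSpace ℝ E]
    {m : ℕ} (hE : Module.finrank ℝ E = m + 1) {p : Submodule ℝ E} (hp : p ≠ ⊤) :
    ∃ Φ : E ≃ₗᵢ[ℝ] WithLp 2 (En m × ℝ), ∀ x ∈ p, height Φ x = 0 := by
  have : Fact (Module.finrank ℝ E = m + 1) := ⟨hE⟩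
  have : FiniteDimensional ℝ E := .of_fact_finrank_eq_succ m
  obtain ⟨v, hvp, hv⟩ := exists_unit_vector_orthogonal hp
  have hv0 : v ≠ 0 := norm_ne_zero_iff.1 (hv ▸ one_ne_zero)
  let Φ := ((ℝ ∙ v).orthogonalDecomposition.trans (.withLpProdComm 2 ℝ _ _)).trans
    (.withLpProdCongr 2 (OrthonormalBasis.fromOrthogonalSpanSingleton m hv0).repr
      (LinearIsometryEquiv.toSpanUnitSingleton v hv).symm)
  refine ⟨Φ, fun x hx => ?_⟩
  have hproj : (ℝ ∙ v).orthogonalProjectionOnto x = 0 := by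
    rw [Submodule.orthogonalProjectionOnto_eq_zero_iff]
    rw [Submodule.mem_orthogonal_singleton_iff_inner_right]
    exact Submodule.inner_left_of_mem_orthogonal hx hvp
  have hheight : height Φ x = (LinearIsometryEquiv.toSpanUnitSingleton v hv).symm
      ((ℝ ∙ v).orthogonalProjectionOnto x) := rfl
  rw [hheight, hproj, map_zero]

end AdaptedCoordinates

/-- The lower `d`-dimensional density of `cap₁` on `A` at `x`, not normalized by the volume of the
unit `d`-ball. -/
def lowerCapDensity (d : ℕ) (A : Set (En n)) (x : En n) : ℝ≥0∞ :=
  liminf (fun r : ℝ => cap1 (A ∩ ball x r) / ENNReal.ofReal (r ^ d)) (𝓝[>] 0)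

section FlatPieces

open Module (finrank)

variable {W : Type*} [NormedAddCommGroup W] [InnerProductSpace ℝ W] [FiniteDimensional ℝ W]
  [MeasurableSpace W] [BorelSpace W] {Φ : En n ≃ₗᵢ[ℝ] WithLp 2 (W × ℝ)} {N T : Set (En n)}
  {x : En n} {c r : ℝ}

lemma measure_inter_closedBall_le_cap1 (hTN : T ⊆ N) (hc : 0 < c)
    (hT : ∀ p ∈ T, ∀ q ∈ T, dist p q ≤ c * dist (hyperplaneProj Φ p) (hyperplaneProj Φ q))
    (hx : x ∈ T) (hr : 0 < r) :
    volume (hyperplaneProj Φ '' T ∩ closedBall (hyperplaneProj Φ x) (r / c)) ≤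
      cap1 (N ∩ ball x r) := by
  have hsub : hyperplaneProj Φ '' T ∩ closedBall (hyperplaneProj Φ x) (r / c) ⊆
      hyperplaneProj Φ '' (N ∩ ball x r) ∪ sphere (hyperplaneProj Φ x) (r / c) := by
    rw [← ball_union_sphere, inter_union_distrib_left]
    refine union_subset_union ?_ inter_subset_right
    rintro _ ⟨⟨p, hp, rfl⟩, hpx⟩
    exact mem_image_of_mem _ ⟨hTN hp, (hT p hp x hx).trans_lt ((lt_div_iff₀' hc).1 hpx)⟩
  calc volume (hyperplaneProj Φ '' T ∩ closedBall (hyperplaneProj Φ x) (r / c))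
      ≤ volume (hyperplaneProj Φ '' (N ∩ ball x r)) +
          volume (sphere (hyperplaneProj Φ x) (r / c)) :=
        (measure_mono hsub).trans (measure_union_le _ _)
    _ = volume (hyperplaneProj Φ '' (N ∩ ball x r)) := by
        rw [Measure.addHaar_sphere_of_ne_zero _ _ (div_pos hr hc).ne', add_zero]
    _ ≤ cap1 (N ∩ ball x r) := measure_hyperplaneProj_image_le_cap1 Φ _

lemma measure_closedBall_div_ofReal_pow (y : W) (hc : 0 < c) (hr : 0 < r) :
    volume (closedBall y (r / c)) / ENNReal.ofReal (r ^ finrank ℝ W) =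
      volume (ball (0 : W) 1) / ENNReal.ofReal (c ^ finrank ℝ W) := by
  have hr0 : ENNReal.ofReal (r ^ finrank ℝ W) ≠ 0 := (ENNReal.ofReal_pos.2 (by positivity)).ne'
  rw [Measure.addHaar_closedBall _ _ (div_pos hr hc).le, div_pow,
    ENNReal.ofReal_div_of_pos (by positivity), mul_comm, ← mul_div_assoc, ENNReal.div_right_comm,
    ENNReal.mul_div_cancel_right hr0 ENNReal.ofReal_ne_top]

lemma measure_ball_div_le_lowerCapDensity (hTN : T ⊆ N) (hc : 0 < c)
    (hT : ∀ p ∈ T, ∀ q ∈ T, dist p q ≤ c * dist (hyperplaneProj Φ p) (hyperplaneProj Φ q))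
    (hx : x ∈ T)
    (hdens : Tendsto (fun r => volume (hyperplaneProj Φ '' T ∩ closedBall (hyperplaneProj Φ x) r) /
      volume (closedBall (hyperplaneProj Φ x) r)) (𝓝[>] 0) (𝓝 1)) :
    volume (ball (0 : W) 1) / ENNReal.ofReal (c ^ finrank ℝ W) ≤
      lowerCapDensity (finrank ℝ W) N x := by
  have hscale : Tendsto (fun r => r / c) (𝓝[>] 0) (𝓝[>] 0) := by
    refine tendsto_nhdsWithin_iff.2 ⟨tendsto_nhdsWithin_of_tendsto_nhds
      ((continuous_id.div_const c).tendsto' 0 0 (zero_div c)), ?_⟩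
    filter_upwards [self_mem_nhdsWithin] with r hr using div_pos hr hc
  have hlim := ENNReal.Tendsto.mul_const (b := volume (ball (0 : W) 1) /
    ENNReal.ofReal (c ^ finrank ℝ W)) (hdens.comp hscale) (Or.inl one_ne_zero)
  rw [one_mul] at hlim
  refine hlim.liminf_eq.symm.trans_le (liminf_le_liminf ?_)
  filter_upwards [self_mem_nhdsWithin] with r hr
  have hball : volume (closedBall (hyperplaneProj Φ x) (r / c)) ≠ 0 :=
    (measure_closedBall_pos _ _ (div_pos hr hc)).ne'
  rw [Function.comp_apply, ← measure_closedBall_div_ofReal_pow (hyperplaneProj Φ x) hc hr,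
    ← mul_div_assoc, ENNReal.div_mul_cancel hball measure_closedBall_lt_top.ne]
  gcongr
  exact measure_inter_closedBall_le_cap1 hTN hc hT hx hr

lemma hausdorffMeasure_eq_zero_of_flat (hTN : T ⊆ N) (hc : 0 < c)
    (hT : ∀ p ∈ T, ∀ q ∈ T, dist p q ≤ c * dist (hyperplaneProj Φ p) (hyperplaneProj Φ q))
    (h : ∀ x ∈ T, lowerCapDensity (finrank ℝ W) N x <
      volume (ball (0 : W) 1) / ENNReal.ofReal (c ^ finrank ℝ W)) :
    μH[finrank ℝ W] T = 0 := by
  have hvol : volume (hyperplaneProj Φ '' T) = 0 := by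
    have hdens := ae_iff.1
      (Besicovitch.ae_tendsto_measure_inter_div volume (hyperplaneProj Φ '' T))
    refine le_antisymm ((measure_mono ?_).trans
      ((Measure.le_restrict_apply _ _).trans_eq hdens)) zero_le
    rintro _ ⟨x, hx, rfl⟩
    exact ⟨fun hd => (measure_ball_div_le_lowerCapDensity hTN hc hT hx hd).not_gt (h x hx),
      mem_image_of_mem _ hx⟩
  have hproj : μH[finrank ℝ W] (hyperplaneProj Φ '' T) = 0 :=
    Measure.absolutelyContinuous_isAddHaarMeasure _ volume hvol
  have himage := hausdorffMeasure_image_le_of_dist_le (f := id) (g := hyperplaneProj Φ) (s := T)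
    (K := ⟨c, hc.le⟩) hT (Nat.cast_nonneg (finrank ℝ W))
  simpa [hproj] using himage

end FlatPieces

section InjectiveDerivative

variable {m : ℕ} {f : En m → En (m + 1)} {f' : En m → En m →L[ℝ] En (m + 1)} {s : Set (En m)}
  {N : Set (En (m + 1))}

lemma hausdorffMeasure_image_eq_zero_of_injective_of_lt_div
    (hf : ∀ x ∈ s, HasFDerivWithinAt f (f' x) s x) (hf' : ∀ x ∈ s, Function.Injective (f' x))
    (hfN : MapsTo f s N) {c : ℝ} (hc : 1 < c) (h : ∀ x ∈ s, lowerCapDensity m N (f x) <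
      volume (ball (0 : En m) 1) / ENNReal.ofReal (c ^ m)) :
    μH[m] (f '' s) = 0 := by
  rcases s.eq_empty_or_nonempty with rfl | hs
  · simp
  have hκ0 : 0 < (c - 1) / (c + 1) := div_pos (by linarith) (by linarith)
  have hκ1 : (c - 1) / (c + 1) ≤ 1 := (div_le_one (by linarith)).2 (by linarith)
  obtain ⟨t, A, δ, -, -, hst, hA⟩ := exists_partition_approximatesLinearOn
    (p := fun A δ => ∀ z, δ * ‖z‖ ≤ (c - 1) / (c + 1) * ‖A z‖) hs hf fun x hx =>
      exists_mul_norm_le_of_injective (hf' x hx) hκ0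
  rw [← inter_eq_self_of_subset_left hst, inter_iUnion, image_iUnion]
  refine measure_iUnion_null fun i => ?_
  obtain ⟨happ, hδ⟩ := hA i
  obtain ⟨Φ, hΦ⟩ := exists_height_eq_zero_of_ne_top finrank_euclideanSpace_fin
    (range_ne_top_of_finrank_lt (by simp) (A i : En m →ₗ[ℝ] En (m + 1)))
  have hflat : ∀ p ∈ f '' (s ∩ t i), ∀ q ∈ f '' (s ∩ t i),
      dist p q ≤ c * dist (hyperplaneProj Φ p) (hyperplaneProj Φ q) := by
    rintro _ ⟨x, hx, rfl⟩ _ ⟨y, hy, rfl⟩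
    have hdist := mul_dist_le_mul_dist_of_approximatesLinearOn happ (norm_hyperplaneProj_le Φ)
      (fun z => norm_hyperplaneProj_of_height_eq_zero Φ (hΦ _ ⟨z, rfl⟩)) hκ0.le hκ1 hδ hx hy
    have hc1 : 0 < c + 1 := by linarith
    field_simp at hdist
    linarith
  have hnull := hausdorffMeasure_eq_zero_of_flat (N := N)
    (image_subset_iff.2 fun x hx => hfN hx.1) (zero_lt_one.trans hc) hflat (by
      rintro _ ⟨x, hx, rfl⟩
      simpa using h x hx.1)
  simpa using hnull

lemma hausdorffMeasure_image_eq_zero_of_injective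
    (hf : ∀ x ∈ s, HasFDerivWithinAt f (f' x) s x) (hf' : ∀ x ∈ s, Function.Injective (f' x))
    (hfN : MapsTo f s N)
    (h : ∀ x ∈ s, lowerCapDensity m N (f x) < volume (ball (0 : En m) 1)) :
    μH[m] (f '' s) = 0 := by
  let c : ℕ → ℝ := fun k => 1 + 1 / ((k : ℝ) + 1)
  let ω : ℝ≥0∞ := volume (ball (0 : En m) 1)
  have hlim : Tendsto (fun k => ω / ENNReal.ofReal (c k ^ m)) atTop (𝓝 ω) := by
    have hc : Tendsto (fun k => c k ^ m) atTop (𝓝 1) := by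
      simpa [c] using (tendsto_one_div_add_atTop_nhds_zero_nat.const_add (1 : ℝ)).pow m
    simpa using ENNReal.Tendsto.const_div (a := ω) (ENNReal.tendsto_ofReal hc) (by simp)
  have hcover : s ⊆ ⋃ k, {x ∈ s | lowerCapDensity m N (f x) < ω / ENNReal.ofReal (c k ^ m)} :=
    fun x hx => by
      obtain ⟨k, hk⟩ := (hlim.eventually_const_lt (h x hx)).exists
      exact mem_iUnion.2 ⟨k, hx, hk⟩
  refine measure_mono_null (image_mono hcover) ?_
  rw [image_iUnion]
  have hc : ∀ k, 1 < c k := fun k => lt_add_of_pos_right 1 Nat.one_div_pos_of_nat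
  exact measure_iUnion_null fun k => hausdorffMeasure_image_eq_zero_of_injective_of_lt_div
    (fun x hx => (hf x hx.1).mono (sep_subset _ _)) (fun x hx => hf' x hx.1)
    (hfN.mono_left (sep_subset _ _)) (hc k) fun x hx => hx.2

end InjectiveDerivative

/-- A set is countably `ℋᵈ`-rectifiable if countably many Lipschitz images of `ℝᵈ` cover it up to
an `ℋᵈ`-null set. -/
def IsCountablyRectifiable (d : ℕ) (S : Set (En n)) : Prop :=
  ∃ F : ℕ → En d → En n, (∀ j, ∃ L : ℝ≥0, LipschitzWith L (F j)) ∧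
    μH[d] (S \ ⋃ j, range (F j)) = 0

/-- A set is purely `ℋᵈ`-unrectifiable if it meets every countably `ℋᵈ`-rectifiable set in an
`ℋᵈ`-null set. -/
def IsPurelyUnrectifiable (d : ℕ) (N : Set (En n)) : Prop :=
  ∀ S, IsCountablyRectifiable d S → μH[d] (N ∩ S) = 0

lemma isPurelyUnrectifiable_of_forall_lipschitzWith {d : ℕ} {N : Set (En n)}
    (h : ∀ (F : En d → En n) (L : ℝ≥0), LipschitzWith L F → μH[d] (F '' (F ⁻¹' N)) = 0) :
    IsPurelyUnrectifiable d N := by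
  rintro S ⟨F, hF, hS⟩
  have himage : μH[d] (⋃ j, N ∩ range (F j)) = 0 := measure_iUnion_null fun j => by
    obtain ⟨L, hL⟩ := hF j
    simpa [image_preimage_eq_inter_range] using h (F j) L hL
  refine measure_mono_null (fun x hx => ?_) (measure_union_null hS himage)
  by_cases hxF : x ∈ ⋃ j, range (F j)
  · obtain ⟨j, hj⟩ := mem_iUnion.1 hxF
    exact Or.inr (mem_iUnion.2 ⟨j, hx.1, hj⟩)
  · exact Or.inl ⟨hx.2, hxF⟩

lemma hausdorffMeasure_image_preimage_eq_zero {m : ℕ} {N : Set (En (m + 1))}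
    (h : ∀ x ∈ N, lowerCapDensity m N x < volume (ball (0 : En m) 1)) {F : En m → En (m + 1)}
    {L : ℝ≥0} (hF : LipschitzWith L F) : μH[m] (F '' (F ⁻¹' N)) = 0 := by
  let D : Set (En m) := {x | DifferentiableAt ℝ F x}
  let I : Set (En m) := {x | Function.Injective (fderiv ℝ F x)}
  have hderiv : ∀ {s}, s ⊆ D → ∀ x ∈ s, HasFDerivWithinAt F (fderiv ℝ F x) s x :=
    fun hs x hx => (hs hx).hasFDerivAt.hasFDerivWithinAt
  have hnondiff : μH[m] (F '' Dᶜ) = 0 := by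
    have hD : μH[m] Dᶜ = 0 := ae_iff.1 (hF.ae_differentiableAt (μ := μH[m]))
    simpa [hD] using hF.hausdorffMeasure_image_le (Nat.cast_nonneg m) Dᶜ
  have hcritical : μH[m] (F '' (D \ I)) = 0 := by
    have hsard := hausdorffMeasure_image_eq_zero_of_not_injective
      (hderiv (s := D \ I) sdiff_subset) fun x hx => hx.2
    rwa [finrank_euclideanSpace_fin] at hsard
  have hregular : μH[m] (F '' (F ⁻¹' N ∩ (D ∩ I))) = 0 :=
    hausdorffMeasure_image_eq_zero_of_injective
      (hderiv (inter_subset_right.trans inter_subset_left)) (fun x hx => hx.2.2)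
      (fun x hx => hx.1) fun x hx => h _ hx.1
  refine measure_mono_null ?_ (measure_union_null hnondiff (measure_union_null hcritical hregular))
  rw [← image_union, ← image_union]
  refine image_mono fun x hx => ?_
  by_cases hxD : x ∈ D <;> by_cases hxI : x ∈ I <;> simp_all

theorem purely_unrectifiable_of_small_capacity_density_general {m : ℕ} {N : Set (En (m + 1))}
    (h : ∀ x ∈ N, lowerCapDensity m N x < volume (ball (0 : En m) 1)) :
    IsPurelyUnrectifiable m N :=
  isPurelyUnrectifiable_of_forall_lipschitzWith fun _ _ hF =>
    hausdorffMeasure_image_preimage_eq_zero h hF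

/-- A Borel set `N` with `liminf_{r→0} cap₁(N ∩ B(x,r))/r^{n-1} < ω_{n-1}/(2√2)^{n-1}`
at every `x ∈ N` is purely `ℋ^{n-1}`-unrectifiable. -/
theorem purely_unrectifiable_of_small_capacity_density (hn : 2 ≤ n)
    (N : Set (En n)) (hN : MeasurableSet N)
    (h : ∀ x ∈ N,
      Filter.liminf (fun r : ℝ => cap1 (N ∩ ball x r) / ENNReal.ofReal (r ^ (n - 1)))
          (𝓝[>] 0)
        < volume (ball (0 : EuclideanSpace ℝ (Fin (n - 1))) 1)
            / ENNReal.ofReal ((2 * Real.sqrt 2) ^ (n - 1))) :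
    ∀ S : Set (En n),
      (∃ F : ℕ → (EuclideanSpace ℝ (Fin (n - 1)) → En n),
        (∀ j, ∃ L : ℝ≥0, LipschitzWith L (F j)) ∧
        μH[(n : ℝ) - 1] (S \ ⋃ j, range (F j)) = 0) →
      μH[(n : ℝ) - 1] (N ∩ S) = 0 := by
  obtain ⟨m, rfl⟩ : ∃ m, n = m + 1 := ⟨n - 1, by omega⟩
  have hdim : ((m + 1 : ℕ) : ℝ) - 1 = m := by simp
  rw [hdim]
  refine purely_unrectifiable_of_small_capacity_density_general fun x hx =>
    (h x hx).trans_le (ENNReal.div_le_of_le_mul (le_mul_of_one_le_right' ?_))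
  have hsqrt : 1 ≤ 2 * Real.sqrt 2 := by linarith [Real.one_le_sqrt.2 one_le_two]
  exact ENNReal.one_le_ofReal.2 (one_le_pow₀ hsqrt)

end
end
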